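/- arXiv:1209.1237 — 2 statements merged into one kernel-verified Lean document; each statement's English description precedes it below -/
import Mathlib

section
/- There exist polynomials I_8, I_16, I_24, I_32, I_40 with integer coefficients in the variables J_2,...,J_7, which are homogeneous of degrees 8, 16, 24, 32, 40 respectively when J_i is assigned weight i, such that for every field k with char k ∉ {2,3,5,7} and every binary octavic f over k the following identity holds: 2^2·3^{20}·5^{12}·J_8(f)^5 + 2^2·3^{16}·5^9·I_8(f)·J_8(f)^4 + 2^3·3^{12}·5^6·I_16(f)·J_8(f)^3 + 2·3^8·5^6·I_24(f)·J_8(f)^2 + 2^2·3^4·5^2·I_32(f)·J_8(f) + I_40(f) = 0, where I_{8j}(f) denotes the evaluation of I_{8j} at (J_2(f),...,J_7(f)). Moreover one may take I_8 = −2^7·7^5·J_2^4 + 2^2·3·5^3·7^3·J_2^2·J_4 + 2^6·3^3·7^2·J_2·J_3^2 + 2^3·5^4·7^2·J_2·J_6 − 2^2·3^5·5^2·7·J_3·J_5 − 3^3·5^4·17·J_4^2. -/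
noncomputable section

open MvPolynomial


variable {k : Type*} [Field k]

/-- char k not in {2,3,5,7} -/
def CharOK (k : Type*) [Field k] : Prop :=
  ringChar k ≠ 2 ∧ ringChar k ≠ 3 ∧ ringChar k ≠ 5 ∧ ringChar k ≠ 7

/-- the r-th transvectant of binary forms f, g of degrees n and m -/
def transvectant (n m r : ℕ) (f g : MvPolynomial (Fin 2) k) : MvPolynomial (Fin 2) k :=
  C ((((m - r).factorial * (n - r).factorial : ℕ) : k) /
      ((n.factorial * m.factorial : ℕ) : k)) *
    ∑ j ∈ Finset.range (r + 1),
      C ((-1 : k) ^ j * (r.choose j : k)) *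
        ((fun p => pderiv (0 : Fin 2) p)^[r - j] ((fun p => pderiv (1 : Fin 2) p)^[j] f)) *
        ((fun p => pderiv (0 : Fin 2) p)^[j] ((fun p => pderiv (1 : Fin 2) p)^[r - j] g))

/-- the binary octavic with coefficient vector a -/
def octForm (a : Fin 9 → k) : MvPolynomial (Fin 2) k :=
  ∑ i : Fin 9, C (a i) * X 0 ^ (i : ℕ) * X 1 ^ (8 - (i : ℕ))

def covg (a : Fin 9 → k) := transvectant 8 8 4 (octForm a) (octForm a)
def covk (a : Fin 9 → k) := transvectant 8 8 6 (octForm a) (octForm a)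
def covh (a : Fin 9 → k) := transvectant 4 4 2 (covk a) (covk a)
def covm (a : Fin 9 → k) := transvectant 8 4 4 (octForm a) (covk a)
def covn (a : Fin 9 → k) := transvectant 8 4 4 (octForm a) (covh a)
def covp (a : Fin 9 → k) := transvectant 8 4 4 (covg a) (covk a)
def covq (a : Fin 9 → k) := transvectant 8 4 4 (covg a) (covh a)

def J2 (a : Fin 9 → k) : k :=
  (2 ^ 2 * 5 * 7 : k) * constantCoeff (transvectant 8 8 8 (octForm a) (octForm a))
def J3 (a : Fin 9 → k) : k :=
  ((2 ^ 4 * 5 ^ 2 * 7 ^ 3 : k) / 3) * constantCoeff (transvectant 8 8 8 (octForm a) (covg a))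
def J4 (a : Fin 9 → k) : k :=
  (2 ^ 9 * 3 * 7 ^ 4 : k) * constantCoeff (transvectant 4 4 4 (covk a) (covk a))
def J5 (a : Fin 9 → k) : k :=
  (2 ^ 9 * 5 * 7 ^ 5 : k) * constantCoeff (transvectant 4 4 4 (covm a) (covk a))
def J6 (a : Fin 9 → k) : k :=
  (2 ^ 14 * 3 ^ 2 * 7 ^ 6 : k) * constantCoeff (transvectant 4 4 4 (covk a) (covh a))
def J7 (a : Fin 9 → k) : k :=
  (2 ^ 14 * 3 * 5 * 7 ^ 7 : k) * constantCoeff (transvectant 4 4 4 (covm a) (covh a))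
def J8 (a : Fin 9 → k) : k :=
  (2 ^ 17 * 3 * 5 ^ 2 * 7 ^ 9 : k) * constantCoeff (transvectant 4 4 4 (covp a) (covh a))
def J9 (a : Fin 9 → k) : k :=
  (2 ^ 19 * 3 ^ 2 * 5 * 7 ^ 9 : k) * constantCoeff (transvectant 4 4 4 (covn a) (covh a))
def J10 (a : Fin 9 → k) : k :=
  (2 ^ 22 * 3 ^ 2 * 5 ^ 2 * 7 ^ 11 : k) * constantCoeff (transvectant 4 4 4 (covq a) (covh a))

def Jinv : ℕ → (Fin 9 → k) → k
  | 2 => J2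
  | 3 => J3
  | 4 => J4
  | 5 => J5
  | 6 => J6
  | 7 => J7
  | 8 => J8
  | 9 => J9
  | 10 => J10
  | _ => fun _ => 0

/-- action of a 2x2 matrix on binary forms by substitution (X,Y) ↦ (aX+bY, cX+dY) -/
def substForm (g : Matrix (Fin 2) (Fin 2) k) (p : MvPolynomial (Fin 2) k) :
    MvPolynomial (Fin 2) k :=
  aeval (fun i : Fin 2 => C (g i 0) * X 0 + C (g i 1) * X 1) p

/-- coefficients of the transformed octavic -/
def octAct (g : Matrix (Fin 2) (Fin 2) k) (a : Fin 9 → k) : Fin 9 → k := fun i =>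
  coeff (Finsupp.single (0 : Fin 2) (i : ℕ) + Finsupp.single (1 : Fin 2) (8 - (i : ℕ)))
    (substForm g (octForm a))

/-!
Built from Ω-processes instead of normalized transvectants, the `Jᵢ` become polynomials with integer
coefficients in the (rescaled) coefficients of the octavic. An invariant of degree `n` is a
semi-invariant of weight `4n`, so by the representation theory of `𝔰𝔩₂` the space of such invariants
has at most the dimension `p(8, n; 4n) - p(8, n; 4n - 1)`, where `p(8, n; w)` counts the partitions
of `w` in an `8 × n` box. In the degrees 16, …, 19 as many monomials in the `Jᵢ` have a nonsingular
matrix of values at explicit octavics; hence a relation of such a degree holds identically as soon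
as it holds at these octavics.

This yields four relations over `ℤ`. Those of degree 16 and 17 are affine in `J₉, J₁₀`, while those
of degree 18 and 19 have the leading terms `J₉²` and `J₉J₁₀`. Cancelling the latter against
multiples of the relation of degree 17 leaves a third relation affine in `J₉, J₁₀`. The determinant
of the three affine relations vanishes, and it is the quintic relation for `J₈` times a constant.
-/

open Finset.HasAntidiagonal (antidiagonal)

section Transvectants

variable {R S : Type*} [CommRing R] [CommRing S]

/-- The mixed partial derivative `∂₀ⁱ ∂₁ʲ` of polynomials in two variables. -/
def mixedPDeriv (i j : ℕ) : MvPolynomial (Fin 2) R →ₗ[R] MvPolynomial (Fin 2) R :=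
  (pderiv 0).toLinearMap ^ i * (pderiv 1).toLinearMap ^ j

/-- Cayley's Ω-process: the `r`-th transvectant without its normalising constant, so that it makes
sense over every commutative ring. -/
def omegaProcess (r : ℕ) (f g : MvPolynomial (Fin 2) R) : MvPolynomial (Fin 2) R :=
  ∑ x ∈ antidiagonal r, C ((-1) ^ x.1 * (r.choose x.1 : R)) *
    mixedPDeriv x.2 x.1 f * mixedPDeriv x.1 x.2 g

theorem pderiv_zero_one_comm (f : MvPolynomial (Fin 2) R) :
    pderiv 0 (pderiv 1 f) = pderiv 1 (pderiv 0 f) := by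
  ext m
  simp only [coeff_pderiv, Finsupp.add_apply, Finsupp.single_apply, add_right_comm m]
  simp [mul_right_comm]

theorem mixedPDeriv_succ_left (i j : ℕ) (f : MvPolynomial (Fin 2) R) :
    mixedPDeriv (i + 1) j f = pderiv 0 (mixedPDeriv i j f) := by
  simp [mixedPDeriv, pow_succ', mul_assoc]

theorem mixedPDeriv_succ_right (i j : ℕ) (f : MvPolynomial (Fin 2) R) :
    mixedPDeriv i (j + 1) f = pderiv 1 (mixedPDeriv i j f) := by
  have hcomm : Commute ((pderiv 0).toLinearMap : Module.End R (MvPolynomial (Fin 2) R))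
      (pderiv 1).toLinearMap := LinearMap.ext fun f => pderiv_zero_one_comm f
  simp only [mixedPDeriv, pow_succ' _ j, ← mul_assoc, ((hcomm.pow_left i).eq)]
  rfl

@[simp]
theorem mixedPDeriv_zero_zero (f : MvPolynomial (Fin 2) R) : mixedPDeriv 0 0 f = f := by
  simp [mixedPDeriv]

theorem map_mixedPDeriv (φ : R →+* S) (i j : ℕ) (f : MvPolynomial (Fin 2) R) :
    map φ (mixedPDeriv i j f) = mixedPDeriv i j (map φ f) := by
  induction i with
  | succ i ih => rw [mixedPDeriv_succ_left, mixedPDeriv_succ_left, ← ih, pderiv_map]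
  | zero =>
    induction j with
    | zero => simp
    | succ j ih => rw [mixedPDeriv_succ_right, mixedPDeriv_succ_right, ← ih, pderiv_map]

theorem map_omegaProcess (φ : R →+* S) (r : ℕ) (f g : MvPolynomial (Fin 2) R) :
    map φ (omegaProcess r f g) = omegaProcess r (map φ f) (map φ g) := by
  simp [omegaProcess, map_mixedPDeriv]

theorem omegaProcess_C_mul (r : ℕ) (a b : R) (f g : MvPolynomial (Fin 2) R) :
    omegaProcess r (C a * f) (C b * g) = C (a * b) * omegaProcess r f g := by
  simp only [omegaProcess, C_mul', map_smul, Finset.smul_sum]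
  exact Finset.sum_congr rfl fun x _ => by
    simp only [smul_mul_assoc, mul_smul_comm, smul_smul]
    congr 1
    ring

theorem transvectant_eq_C_mul_omegaProcess {k : Type*} [Field k] (n m r : ℕ)
    (f g : MvPolynomial (Fin 2) k) :
    transvectant n m r f g = C ((((m - r).factorial * (n - r).factorial : ℕ) : k) /
      ((n.factorial * m.factorial : ℕ) : k)) * omegaProcess r f g := by
  rw [omegaProcess, Finset.Nat.sum_antidiagonal_eq_sum_range_succ_mk]
  simp only [mixedPDeriv, Module.End.mul_apply, Module.End.pow_apply]
  rfl

theorem choose_succ_mul_succ (m n : ℕ) :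
    (m + n + 1).choose (m + 1) * (m + 1) = (m + n + 1).choose m * (n + 1) := by
  rw [Nat.choose_succ_right_eq, add_assoc, Nat.add_sub_cancel_left]

theorem sum_smul_mixedPDeriv_eq_zero (r : ℕ) (f g : MvPolynomial (Fin 2) R) :
    ∑ x ∈ antidiagonal r, C ((-1) ^ x.1 * (r.choose x.1 : R)) *
      ((x.2 : R) • mixedPDeriv (x.2 - 1) (x.1 + 1) f * mixedPDeriv x.1 x.2 g +
        mixedPDeriv x.2 x.1 f * (x.1 : R) • mixedPDeriv (x.1 - 1) (x.2 + 1) g) = 0 := by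
  simp only [mul_add]
  rw [Finset.sum_add_distrib]
  cases r with
  | zero => simp
  | succ r =>
    rw [Finset.Nat.sum_antidiagonal_succ', Finset.Nat.sum_antidiagonal_succ, Nat.cast_zero,
      zero_smul, zero_smul, zero_mul, mul_zero, mul_zero, mul_zero, zero_add, zero_add,
      ← Finset.sum_add_distrib]
    refine Finset.sum_eq_zero fun x hx => ?_
    obtain rfl := Finset.HasAntidiagonal.mem_antidiagonal.mp hx
    have hchoose : ((x.1 + x.2 + 1).choose (x.1 + 1) : MvPolynomial (Fin 2) R) * (x.1 + 1) =
        (x.1 + x.2 + 1).choose x.1 * (x.2 + 1) := by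
      exact_mod_cast congrArg (Nat.cast : ℕ → MvPolynomial (Fin 2) R)
        (choose_succ_mul_succ x.1 x.2)
    simp only [map_mul, map_pow, map_neg, map_one, smul_eq_C_mul, map_natCast,
      Nat.add_sub_cancel, Nat.cast_succ, map_add]
    linear_combination
      (-(-1) ^ x.1 * mixedPDeriv x.2 (x.1 + 1) f * mixedPDeriv x.1 (x.2 + 1) g) * hchoose

section Derivation

variable {K : Type*} [CommRing K] [Algebra K R]
  {D : Derivation K (MvPolynomial (Fin 2) R) (MvPolynomial (Fin 2) R)}

theorem derivation_mixedPDeriv (h₀ : ∀ f, D (pderiv 0 f) = pderiv 0 (D f) + pderiv 1 f)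
    (h₁ : ∀ f, D (pderiv 1 f) = pderiv 1 (D f)) (i j : ℕ) (f : MvPolynomial (Fin 2) R) :
    D (mixedPDeriv i j f) = mixedPDeriv i j (D f) + (i : R) • mixedPDeriv (i - 1) (j + 1) f := by
  induction i with
  | zero =>
    induction j with
    | zero => simp
    | succ j ih => simpa [mixedPDeriv_succ_right, h₁] using congr(pderiv 1 $ih)
  | succ i ih =>
    rw [mixedPDeriv_succ_left, h₀, ih, mixedPDeriv_succ_left, mixedPDeriv_succ_right, map_add,
      Derivation.map_smul, mixedPDeriv_succ_right, pderiv_zero_one_comm, ← mixedPDeriv_succ_left]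
    cases i with
    | zero => simp
    | succ i =>
      simp only [Nat.add_sub_cancel, mixedPDeriv_succ_left]
      push_cast
      module

/-- The infinitesimal form of the equivariance of transvectants under `Y ↦ Y + εX`: the brackets of
`D` with `∂₀` and `∂₁` are those of a coefficientwise derivation minus `X ∂₁`. -/
theorem derivation_omegaProcess (h₀ : ∀ f, D (pderiv 0 f) = pderiv 0 (D f) + pderiv 1 f)
    (h₁ : ∀ f, D (pderiv 1 f) = pderiv 1 (D f)) (r : ℕ) (f g : MvPolynomial (Fin 2) R) :
    D (omegaProcess r f g) = omegaProcess r (D f) g + omegaProcess r f (D g) := by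
  have hconst (x : ℕ × ℕ) : D (C ((-1) ^ x.1 * (r.choose x.1 : R))) = 0 := by simp
  rw [omegaProcess, map_sum, omegaProcess, omegaProcess, ← Finset.sum_add_distrib, ← sub_eq_zero,
    ← Finset.sum_sub_distrib, ← sum_smul_mixedPDeriv_eq_zero r f g]
  refine Finset.sum_congr rfl fun x _ => ?_
  simp only [Derivation.leibniz, hconst, derivation_mixedPDeriv h₀ h₁, smul_eq_mul, smul_eq_C_mul]
  ring

end Derivation

end Transvectants

section Forms

variable {R S : Type*} [CommRing R] [CommRing S]

/-- The binary form `∑ aᵢ Xⁱ Yᵈ⁻ⁱ`. -/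
def binaryForm {d : ℕ} (a : Fin (d + 1) → R) : MvPolynomial (Fin 2) R :=
  ∑ i, C (a i) * X 0 ^ (i : ℕ) * X 1 ^ (d - i)

theorem map_binaryForm (φ : R →+* S) {d : ℕ} (a : Fin (d + 1) → R) :
    map φ (binaryForm a) = binaryForm (φ ∘ a) := by
  simp [binaryForm]

theorem binaryForm_mul {d : ℕ} (c : R) (a : Fin (d + 1) → R) :
    binaryForm (fun i => c * a i) = C c * binaryForm a := by
  simp [binaryForm, Finset.mul_sum, mul_assoc]

theorem mixedPDeriv_X_pow_mul_X_pow (i j a b : ℕ) :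
    mixedPDeriv i j (X 0 ^ a * X 1 ^ b : MvPolynomial (Fin 2) R) =
      C ((a.descFactorial i * b.descFactorial j : ℕ) : R) * (X 0 ^ (a - i) * X 1 ^ (b - j)) := by
  induction i with
  | zero =>
    induction j with
    | zero => simp
    | succ j ih =>
      rw [mixedPDeriv_succ_right, ih, Nat.descFactorial_succ b j, ← Nat.sub_sub b j 1]
      simp only [Nat.descFactorial_zero, one_mul, map_natCast, tsub_zero, Derivation.leibniz,
        Derivation.leibniz_pow, pderiv_X, Pi.single_eq_same, smul_eq_mul, mul_one, nsmul_eq_mul,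
        ne_eq, zero_ne_one, not_false_eq_true, Pi.single_eq_of_ne, mul_zero, add_zero,
        Derivation.map_natCast, Nat.cast_mul, C_mul]
      ring
  | succ i ih =>
    rw [mixedPDeriv_succ_left, ih, Nat.descFactorial_succ a i, ← Nat.sub_sub a i 1]
    simp only [Nat.cast_mul, map_natCast, Derivation.leibniz, Derivation.leibniz_pow, pderiv_X,
      ne_eq, one_ne_zero, not_false_eq_true, Pi.single_eq_of_ne, smul_eq_mul, mul_zero,
      Pi.single_eq_same, mul_one, nsmul_eq_mul, zero_add, Derivation.map_natCast, add_zero, C_mul]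
    ring

/-- The structure constant of the Ω-process on monomials: the coefficient in
`Ω_r (X^i Y^i', X^j Y^j')`. -/
def omegaCoeff (r i i' j j' : ℕ) : ℤ :=
  ∑ x ∈ antidiagonal r, (-1) ^ x.1 * ((r.choose x.1 * (i.descFactorial x.2 * i'.descFactorial x.1) *
    (j.descFactorial x.1 * j'.descFactorial x.2) : ℕ) : ℤ)

theorem le_add_of_omegaCoeff_ne_zero {r i i' j j' : ℕ} (h : omegaCoeff r i i' j j' ≠ 0) :
    r ≤ i + j ∧ r ≤ i' + j' := by
  obtain ⟨x, hx, hne⟩ := Finset.exists_ne_zero_of_sum_ne_zero h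
  rw [Finset.HasAntidiagonal.mem_antidiagonal] at hx
  simp only [Nat.cast_mul, ne_eq, mul_eq_zero, Nat.cast_eq_zero, Nat.descFactorial_eq_zero_iff_lt,
    not_or, not_lt] at hne
  omega

theorem omegaProcess_X_pow_mul_X_pow (r i i' j j' : ℕ) :
    omegaProcess r (X 0 ^ i * X 1 ^ i' : MvPolynomial (Fin 2) R) (X 0 ^ j * X 1 ^ j') =
      C (omegaCoeff r i i' j j' : R) * X 0 ^ (i + j - r) * X 1 ^ (i' + j' - r) := by
  simp only [omegaProcess, omegaCoeff, mixedPDeriv_X_pow_mul_X_pow, Int.cast_sum, map_sum,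
    Finset.sum_mul]
  refine Finset.sum_congr rfl fun x hx => ?_
  obtain rfl := Finset.HasAntidiagonal.mem_antidiagonal.mp hx
  by_cases hle : (x.2 ≤ i ∧ x.1 ≤ i') ∧ x.1 ≤ j ∧ x.2 ≤ j'
  · rw [show i + j - (x.1 + x.2) = (i - x.2) + (j - x.1) by omega,
      show i' + j' - (x.1 + x.2) = (i' - x.1) + (j' - x.2) by omega]
    simp only [pow_add, Int.cast_mul, Int.cast_pow, Int.cast_neg, Int.cast_one, Int.cast_natCast,
      Nat.cast_mul, map_mul]
    ring
  · simp only [not_and_or, not_le, ← Nat.descFactorial_eq_zero_iff_lt] at hle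
    rcases hle with (h | h) | h | h <;> simp [h]

theorem omegaProcess_sum {ι κ : Type*} (r : ℕ) (s : Finset ι) (t : Finset κ)
    (f : ι → MvPolynomial (Fin 2) R) (g : κ → MvPolynomial (Fin 2) R) :
    omegaProcess r (∑ i ∈ s, f i) (∑ j ∈ t, g j) =
      ∑ x ∈ s ×ˢ t, omegaProcess r (f x.1) (g x.2) := by
  simp only [omegaProcess, map_sum, Finset.mul_sum, Finset.sum_mul, Finset.sum_product]
  rw [Finset.sum_comm, Finset.sum_comm (s := s)]
  exact Finset.sum_congr rfl fun j _ => Finset.sum_comm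

/-- The coefficients of `Ω_r (f, g)` as bilinear expressions in those of the forms `f`, `g` of
degrees `n`, `m`: the entry `(w, i, j)` of row `o` says that `w aᵢ bⱼ` contributes to the
coefficient of `X^o`. -/
def omegaTable (r n m : ℕ) : List (List (ℤ × ℕ × ℕ)) :=
  (List.range (n + m - 2 * r + 1)).map fun o => (List.Nat.antidiagonal (o + r)).map fun x =>
    (if x.1 ≤ n ∧ x.2 ≤ m then omegaCoeff r x.1 (n - x.1) x.2 (m - x.2) else 0, x)

/-- The coefficients of `Ω_r (f, g)` read off from `omegaTable`. -/
def omegaCoeffs (r n m : ℕ) (a b : List R) : List R :=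
  (omegaTable r n m).map fun row =>
    (row.map fun t => (t.1 : R) * (a.getD t.2.1 0 * b.getD t.2.2 0)).sum

theorem getD_omegaCoeffs {r n m o : ℕ} (a b : List R) (ho : o < n + m - 2 * r + 1) :
    (omegaCoeffs r n m a b).getD o 0 = ∑ x ∈ antidiagonal (o + r) with x.1 ≤ n ∧ x.2 ≤ m,
      (omegaCoeff r x.1 (n - x.1) x.2 (m - x.2) : R) * (a.getD x.1 0 * b.getD x.2 0) := by
  rw [Finset.sum_filter]
  simp only [omegaCoeffs, omegaTable, List.map_map, List.getD_eq_getElem?_getD, List.getElem?_map,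
    List.getElem?_range ho, Option.map_some, Option.getD_some, Function.comp_apply]
  refine congrArg List.sum (List.map_congr_left fun x _ => ?_)
  by_cases h : x.1 ≤ n ∧ x.2 ≤ m <;> simp [h]

theorem binaryForm_eq_sum_range {d : ℕ} (a : ℕ → R) :
    binaryForm (fun i : Fin (d + 1) => a i) =
      ∑ i ∈ Finset.range (d + 1), C (a i) * (X 0 ^ i * X 1 ^ (d - i)) := by
  simp only [binaryForm, mul_assoc]
  exact Fin.sum_univ_eq_sum_range (fun i => C (a i) * (X 0 ^ i * X 1 ^ (d - i))) (d + 1)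

theorem omegaProcess_binaryForm {r n m : ℕ} (a b : List R) :
    omegaProcess r (binaryForm fun i : Fin (n + 1) => a.getD i 0)
        (binaryForm fun j : Fin (m + 1) => b.getD j 0) =
      binaryForm fun o : Fin (n + m - 2 * r + 1) => (omegaCoeffs r n m a b).getD o 0 := by
  let s := Finset.range (n + 1) ×ˢ Finset.range (m + 1)
  let term (x : ℕ × ℕ) : MvPolynomial (Fin 2) R :=
    C ((omegaCoeff r x.1 (n - x.1) x.2 (m - x.2) : R) * (a.getD x.1 0 * b.getD x.2 0)) *
      (X 0 ^ (x.1 + x.2 - r) * X 1 ^ (n - x.1 + (m - x.2) - r))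
  have hleft : omegaProcess r (binaryForm fun i : Fin (n + 1) => a.getD i 0)
      (binaryForm fun j : Fin (m + 1) => b.getD j 0) = ∑ x ∈ s, term x := by
    simp only [binaryForm_eq_sum_range fun i => a.getD i 0,
      binaryForm_eq_sum_range fun i => b.getD i 0, omegaProcess_sum, omegaProcess_C_mul,
      omegaProcess_X_pow_mul_X_pow]
    exact Finset.sum_congr rfl fun x _ => by simp only [term, map_mul]; ring
  have hfilter : ∑ x ∈ s with r ≤ x.1 + x.2 ∧ r ≤ n - x.1 + (m - x.2), term x = ∑ x ∈ s, term x :=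
    Finset.sum_filter_of_ne fun x _ hx =>
      le_add_of_omegaCoeff_ne_zero fun h => hx (by simp [term, h])
  rw [hleft, ← hfilter, binaryForm_eq_sum_range fun o => (omegaCoeffs r n m a b).getD o 0,
    ← Finset.sum_fiberwise_of_maps_to (t := Finset.range (n + m - 2 * r + 1))
      (g := fun x => x.1 + x.2 - r)]
  · refine Finset.sum_congr rfl fun o ho => ?_
    rw [getD_omegaCoeffs a b (Finset.mem_range.mp ho), map_sum, Finset.sum_mul]
    refine Finset.sum_subset_zero_on_sdiff (fun x hx => ?_) (fun x hx => ?_) fun x hx => ?_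
    all_goals simp only [s, Finset.mem_sdiff, Finset.mem_filter, Finset.mem_product,
      Finset.mem_range, Finset.HasAntidiagonal.mem_antidiagonal] at hx ho ⊢
    · omega
    · rw [not_imp_comm.mp le_add_of_omegaCoeff_ne_zero (by omega)]
      simp
    · simp only [term, show x.1 + x.2 - r = o by omega,
        show n - x.1 + (m - x.2) - r = n + m - 2 * r - o by omega]
  · intro x hx
    simp only [s, Finset.mem_filter, Finset.mem_product, Finset.mem_range] at hx ⊢
    omega

end Forms

/-- Iterated transvectants of a single binary form: `trans r S T` stands for `(S, T)^r`. -/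
inductive BinaryCovariant
  | form
  | trans (r : ℕ) (S T : BinaryCovariant)

namespace BinaryCovariant

variable {R S : Type*} [CommRing R] [CommRing S]

/-- The degree of a covariant of a form of degree `d` as a form in `X`, `Y`. -/
def order (d : ℕ) : BinaryCovariant → ℕ
  | form => d
  | trans r S T => S.order d + T.order d - 2 * r

/-- The degree of a covariant in the coefficients of the underlying form. -/
def degree : BinaryCovariant → ℕ
  | form => 1
  | trans _ S T => S.degree + T.degree

/-- The number of times the Ω-process differentiates with respect to each variable. -/
def weight : BinaryCovariant → ℕ
  | form => 0
  | trans r S T => r + (S.weight + T.weight)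

/-- The value of a covariant at a form, with all transvectants replaced by Ω-processes. -/
def eval (f : MvPolynomial (Fin 2) R) : BinaryCovariant → MvPolynomial (Fin 2) R
  | form => f
  | trans r S T => omegaProcess r (S.eval f) (T.eval f)

/-- The coefficients of the value of a covariant at the form of degree `d` with coefficients `a`. -/
def coeffs (d : ℕ) (a : List R) : BinaryCovariant → List R
  | form => a
  | trans r S T => omegaCoeffs r (S.order d) (T.order d) (S.coeffs d a) (T.coeffs d a)

theorem map_eval (φ : R →+* S) (f : MvPolynomial (Fin 2) R) (T : BinaryCovariant) :
    map φ (T.eval f) = T.eval (map φ f) := by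
  induction T with
  | form => rfl
  | trans r S T ihS ihT => simp only [eval, map_omegaProcess, ihS, ihT]

theorem eval_C_mul (c : R) (f : MvPolynomial (Fin 2) R) (T : BinaryCovariant) :
    T.eval (C c * f) = C (c ^ T.degree) * T.eval f := by
  induction T with
  | form => simp [eval, degree]
  | trans r S T ihS ihT => rw [eval, ihS, ihT, omegaProcess_C_mul, degree, pow_add, eval]

theorem eval_binaryForm (d : ℕ) (a : List R) (T : BinaryCovariant) :
    T.eval (binaryForm fun i : Fin (d + 1) => a.getD i 0) =
      binaryForm fun i : Fin (T.order d + 1) => (T.coeffs d a).getD i 0 := by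
  induction T with
  | form => rfl
  | trans r S T ihS ihT => rw [eval, ihS, ihT, omegaProcess_binaryForm, order, coeffs]

theorem constantCoeff_eval_binaryForm {d : ℕ} {T : BinaryCovariant} (hT : T.order d = 0)
    (a : List R) :
    constantCoeff (T.eval (binaryForm fun i : Fin (d + 1) => a.getD i 0)) =
      (T.coeffs d a).getD 0 0 := by
  rw [eval_binaryForm, binaryForm_eq_sum_range fun i => (T.coeffs d a).getD i 0, hT]
  simp

theorem derivation_eval_eq_zero {K : Type*} [CommRing K] [Algebra K R]
    {D : Derivation K (MvPolynomial (Fin 2) R) (MvPolynomial (Fin 2) R)}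
    (h₀ : ∀ f, D (pderiv 0 f) = pderiv 0 (D f) + pderiv 1 f)
    (h₁ : ∀ f, D (pderiv 1 f) = pderiv 1 (D f)) {f : MvPolynomial (Fin 2) R} (hf : D f = 0)
    (T : BinaryCovariant) : D (T.eval f) = 0 := by
  induction T with
  | form => exact hf
  | trans r S T ihS ihT =>
    rw [eval, derivation_omegaProcess h₀ h₁, ihS, ihT]
    simp [omegaProcess]

end BinaryCovariant

section Isobaric

variable {R : Type*} [CommRing R] {d : ℕ}

/-- The bigrading of the ring of coefficients of a form `∑ aᵢ Xⁱ Yᵈ⁻ⁱ` by degree and weight. -/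
def degreeWeight (d : ℕ) (i : Fin (d + 1)) : ℤ × ℤ := (1, i)

/-- A form `f` over the ring of coefficients is isobaric of degree `n` and weight `w` if the
coefficient of `X^i Y^j` in `f` has degree `n` and weight `i + w`. -/
def IsIsobaric (f : MvPolynomial (Fin 2) (MvPolynomial (Fin (d + 1)) R)) (n w : ℕ) : Prop :=
  ∀ p, IsWeightedHomogeneous (degreeWeight d) (coeff p f) (n, (p 0 + w : ℕ))

namespace IsIsobaric

variable {f g : MvPolynomial (Fin 2) (MvPolynomial (Fin (d + 1)) R)} {m n v w : ℕ}

theorem intCast_mul (hf : IsIsobaric f n w) (z : ℤ) :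
    IsIsobaric (C (z : MvPolynomial _ R) * f) n w := fun p => by
  rw [coeff_C_mul, ← map_intCast (C : R →+* MvPolynomial (Fin (d + 1)) R) z]
  simpa only [zero_add] using (isWeightedHomogeneous_C _ _).mul (hf p)

theorem mul (hf : IsIsobaric f m v) (hg : IsIsobaric g n w) :
    IsIsobaric (f * g) (m + n) (v + w) := fun p => by
  rw [coeff_mul]
  refine IsWeightedHomogeneous.sum _ _ _ fun x hx => ?_
  obtain rfl := Finset.HasAntidiagonal.mem_antidiagonal.mp hx
  have h := (hf x.1).mul (hg x.2)
  rwa [Prod.mk_add_mk, ← Nat.cast_add, ← Nat.cast_add, add_add_add_comm] at h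

theorem sum {ι : Type*} {s : Finset ι}
    {f : ι → MvPolynomial (Fin 2) (MvPolynomial (Fin (d + 1)) R)}
    (hf : ∀ i ∈ s, IsIsobaric (f i) n w) : IsIsobaric (∑ i ∈ s, f i) n w := fun p => by
  rw [coeff_sum]
  exact IsWeightedHomogeneous.sum _ _ _ fun i hi => hf i hi p

theorem coeff_pderiv (hf : IsIsobaric f n w) (i : Fin 2) (p : Fin 2 →₀ ℕ) :
    IsWeightedHomogeneous (degreeWeight d) (coeff p (pderiv i f))
      (n, ((p + Finsupp.single i 1 : Fin 2 →₀ ℕ) 0 + w : ℕ)) := by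
  rw [MvPolynomial.coeff_pderiv, ← Nat.cast_succ,
    ← map_natCast (C : R →+* MvPolynomial (Fin (d + 1)) R), mul_comm]
  simpa only [zero_add] using (isWeightedHomogeneous_C _ _).mul (hf (p + Finsupp.single i 1))

theorem mixedPDeriv (hf : IsIsobaric f n w) (i j : ℕ) :
    IsIsobaric (mixedPDeriv i j f) n (w + i) := by
  induction i with
  | succ i ih =>
    intro p
    rw [mixedPDeriv_succ_left]
    simpa [add_assoc, add_comm, add_left_comm] using ih.coeff_pderiv 0 p
  | zero =>
    induction j with
    | zero => simpa
    | succ j ih =>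
      intro p
      rw [mixedPDeriv_succ_right]
      simpa using ih.coeff_pderiv 1 p

theorem omegaProcess (hf : IsIsobaric f m v) (hg : IsIsobaric g n w) (r : ℕ) :
    IsIsobaric (omegaProcess r f g) (m + n) (r + (v + w)) := by
  refine sum fun x hx => ?_
  obtain rfl := Finset.HasAntidiagonal.mem_antidiagonal.mp hx
  have h := ((hf.mixedPDeriv x.2 x.1).intCast_mul
    ((-1) ^ x.1 * ((x.1 + x.2).choose x.1 : ℤ))).mul (hg.mixedPDeriv x.1 x.2)
  push_cast at h
  convert h using 1
  ring

end IsIsobaric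

theorem isIsobaric_binaryForm_X :
    IsIsobaric (binaryForm (X : Fin (d + 1) → MvPolynomial (Fin (d + 1)) R)) 1 0 := by
  refine IsIsobaric.sum fun i _ p => ?_
  rw [mul_assoc, X_pow_eq_monomial, X_pow_eq_monomial, monomial_mul, coeff_C_mul, coeff_monomial]
  split_ifs with h
  · simpa [← h, degreeWeight] using isWeightedHomogeneous_X R (degreeWeight d) i
  · simpa using isWeightedHomogeneous_zero R (degreeWeight d) (1, (p 0 : ℤ))

theorem BinaryCovariant.isIsobaric_eval (T : BinaryCovariant) :
    IsIsobaric (T.eval (binaryForm (X : Fin (d + 1) → MvPolynomial (Fin (d + 1)) R)))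
      T.degree T.weight := by
  induction T with
  | form => exact isIsobaric_binaryForm_X
  | trans r S T ihS ihT => exact ihS.omegaProcess ihT r

end Isobaric

section CoefficientwiseDerivation

variable {K A σ : Type*} [CommRing K] [CommRing A] [Algebra K A]

/-- The extension of a derivation of the coefficient ring `A` to `A[σ]` that kills the variables. -/
def coeffwiseDerivation (σ : Type*) (D : Derivation K A A) :
    Derivation K (MvPolynomial σ A) (MvPolynomial σ A) :=
  Derivation.mk' ((AddMonoidAlgebra.coeffLinearEquiv K).symm.toLinearMap ∘ₗ
      Finsupp.mapRange.linearMap D.toLinearMap ∘ₗ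
        (AddMonoidAlgebra.coeffLinearEquiv K).toLinearMap) fun p q => by
    have hcoeff (p : MvPolynomial σ A) (m : σ →₀ ℕ) :
        coeff m (((AddMonoidAlgebra.coeffLinearEquiv K).symm.toLinearMap ∘ₗ
          Finsupp.mapRange.linearMap D.toLinearMap ∘ₗ
            (AddMonoidAlgebra.coeffLinearEquiv K).toLinearMap) p) = D (coeff m p) := rfl
    classical
    ext m
    rw [smul_eq_mul, smul_eq_mul, mul_comm q]
    simp only [coeff_add, coeff_mul, hcoeff, map_sum, D.leibniz,
      Finset.sum_add_distrib]
    exact congrArg _ (Finset.sum_congr rfl fun x _ => mul_comm _ _)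

@[simp]
theorem coeff_coeffwiseDerivation (D : Derivation K A A) (m : σ →₀ ℕ) (p : MvPolynomial σ A) :
    coeff m (coeffwiseDerivation σ D p) = D (coeff m p) := rfl

theorem coeffwiseDerivation_pderiv (D : Derivation K A A) (i : σ) (p : MvPolynomial σ A) :
    coeffwiseDerivation σ D (pderiv i p) = pderiv i (coeffwiseDerivation σ D p) := by
  ext m
  simp [coeff_pderiv, mul_comm]

@[simp]
theorem coeffwiseDerivation_C (D : Derivation K A A) (a : A) :
    coeffwiseDerivation σ D (C a) = C (D a) := by
  classical
  ext m
  simp only [coeff_coeffwiseDerivation, coeff_C]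
  split_ifs <;> simp

@[simp]
theorem coeffwiseDerivation_X (D : Derivation K A A) (i : σ) :
    coeffwiseDerivation σ D (X i) = 0 := by
  classical
  ext m
  simp only [coeff_coeffwiseDerivation, coeff_X, coeff_zero]
  split_ifs <;> simp

end CoefficientwiseDerivation

section SemiInvariants

variable (K : Type*) [CommRing K] (d : ℕ)

/-- The derivation `∑ (d - i + 1) aᵢ₋₁ ∂/∂aᵢ`, the infinitesimal action of `Y ↦ Y + εX` on the
coefficients of binary forms of degree `d`. -/
def raisingDerivation :
    Derivation K (MvPolynomial (Fin (d + 1)) K) (MvPolynomial (Fin (d + 1)) K) :=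
  mkDerivation K (Fin.cases 0 fun i => (d - i : ℕ) • X i.castSucc)

/-- The derivation `∑ (i + 1) aᵢ₊₁ ∂/∂aᵢ`, the infinitesimal action of `X ↦ X + εY` on the
coefficients of binary forms of degree `d`. -/
def loweringDerivation :
    Derivation K (MvPolynomial (Fin (d + 1)) K) (MvPolynomial (Fin (d + 1)) K) :=
  mkDerivation K (Fin.lastCases 0 fun i => (i + 1 : ℕ) • X i.succ)

variable {K d}

theorem coeffwiseDerivation_binaryForm {A : Type*} [CommRing A] [Algebra K A]
    (D : Derivation K A A) (a : Fin (d + 1) → A) :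
    coeffwiseDerivation (Fin 2) D (binaryForm a) = binaryForm (D ∘ a) := by
  simp only [binaryForm, map_sum, Derivation.leibniz, Derivation.leibniz_pow,
    coeffwiseDerivation_X, coeffwiseDerivation_C, smul_eq_mul]
  exact Finset.sum_congr rfl fun i _ => by simp only [Function.comp_apply]; ring

theorem X_zero_mul_pderiv_one_binaryForm (a : Fin (d + 1) → K) :
    X 0 * pderiv 1 (binaryForm a) =
      binaryForm (Fin.cases 0 fun i : Fin d => (d - i : ℕ) • a i.castSucc) := by
  have hterm (c : K) (i j : ℕ) :
      (X 0 * pderiv 1 (C c * X 0 ^ i * X 1 ^ j) : MvPolynomial (Fin 2) K) =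
        C (j • c) * X 0 ^ (i + 1) * X 1 ^ (j - 1) := by
    simp only [Derivation.leibniz, Derivation.leibniz_pow, pderiv_X, Pi.single_eq_same,
      smul_eq_mul, mul_one, nsmul_eq_mul, ne_eq, zero_ne_one, not_false_eq_true,
      Pi.single_eq_of_ne, mul_zero, derivation_C, add_zero, C_mul, map_natCast]
    ring
  simp only [binaryForm, map_sum, Finset.mul_sum, hterm]
  rw [Fin.sum_univ_castSucc, Fin.sum_univ_succ]
  simp [Nat.sub_sub]

theorem raisingDerivation_binaryForm :
    coeffwiseDerivation (Fin 2) (raisingDerivation K d) (binaryForm X) =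
      X 0 * pderiv 1 (binaryForm X) := by
  rw [coeffwiseDerivation_binaryForm, X_zero_mul_pderiv_one_binaryForm]
  congr 1
  funext i
  exact mkDerivation_X _ _ _

theorem derivation_constantCoeff_eval_eq_zero {A : Type*} [CommRing A] [Algebra K A]
    (D : Derivation K A A) {f : MvPolynomial (Fin 2) A}
    (hf : coeffwiseDerivation (Fin 2) D f = X 0 * pderiv 1 f) (T : BinaryCovariant) :
    D (constantCoeff (T.eval f)) = 0 := by
  let D' : Derivation K (MvPolynomial (Fin 2) A) (MvPolynomial (Fin 2) A) :=
    coeffwiseDerivation (Fin 2) D -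
      (X 0 : MvPolynomial (Fin 2) A) • (pderiv 1 : Derivation A _ _).restrictScalars K
  have hD' (g : MvPolynomial (Fin 2) A) :
      D' g = coeffwiseDerivation (Fin 2) D g - X 0 * pderiv 1 g := rfl
  have h : D' (T.eval f) = 0 := by
    refine T.derivation_eval_eq_zero (fun g => ?_) (fun g => ?_) (by rw [hD', hf, sub_self])
    all_goals simp only [hD', coeffwiseDerivation_pderiv, map_sub, Derivation.leibniz,
      pderiv_zero_one_comm, pderiv_X_self, pderiv_X_of_ne zero_ne_one, smul_eq_mul]
    all_goals ring
  have hcoeff := congrArg constantCoeff h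
  rwa [hD', map_sub, map_mul, constantCoeff_X, zero_mul, sub_zero] at hcoeff

theorem raisingDerivation_constantCoeff_eval (T : BinaryCovariant) :
    raisingDerivation K d (constantCoeff (T.eval (binaryForm X))) = 0 :=
  derivation_constantCoeff_eval_eq_zero _ raisingDerivation_binaryForm T

end SemiInvariants

section SpecialLinear

variable {K V : Type*} [Field K] [AddCommGroup V] [Module K V] {e f h : Module.End K V}

theorem pow_succ_apply_of_weight_vector (hef : ∀ v, e (f v) = f (e v) + h v)
    (hhe : ∀ v, h (e v) = e (h v) + (2 : K) • e v) {m : K} {v : V} (hv : h v = m • v) (N : ℕ) :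
    (e ^ (N + 1)) (f v) = f ((e ^ (N + 1)) v) + ((N + 1) * (m + N)) • (e ^ N) v := by
  have hpow (N : ℕ) : h ((e ^ N) v) = (m + 2 * N) • (e ^ N) v := by
    induction N with
    | zero => simpa using hv
    | succ N ih =>
      rw [pow_succ', Module.End.mul_apply, hhe, ih, map_smul, Nat.cast_succ]
      module
  induction N with
  | zero => simp [hef, hv]
  | succ N ih =>
    rw [pow_succ' e (N + 1), Module.End.mul_apply, ih, map_add, hef, hpow, map_smul,
      ← Module.End.mul_apply e (e ^ N), ← pow_succ', Module.End.mul_apply, Nat.cast_succ]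
    module

/-- The representation theory of `𝔰𝔩₂` behind the Cayley–Sylvester formula. -/
theorem le_map_of_weight_pos [CharZero K] (hef : ∀ v, e (f v) = f (e v) + h v)
    (hhe : ∀ v, h (e v) = e (h v) + (2 : K) • e v) {U W : Submodule K V} (he : U ≤ W.comap e)
    (hf : W ≤ U.comap f) {m : ℕ} (hm : 0 < m) (hh : ∀ v ∈ W, h v = (m : K) • v)
    (hnil : ∀ v ∈ W, ∃ N, (e ^ N) v = 0) : W ≤ U.map e := by
  suffices ∀ N, ∀ v ∈ W, (e ^ N) v = 0 → v ∈ U.map e from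
    fun v hv => (hnil v hv).elim fun N => this N v hv
  intro N
  induction N with
  | zero => intro v _ hv; rw [show v = 0 from hv]; exact zero_mem _
  | succ N ih =>
    intro v hv hN
    let c : K := (N + 1) * (m + N)
    have hc : c ≠ 0 := mul_ne_zero N.cast_add_one_ne_zero (by exact_mod_cast (by omega))
    have hpow : (e ^ N) (e (f v)) = c • (e ^ N) v := by
      have h := pow_succ_apply_of_weight_vector hef hhe (hh v hv) N
      rwa [hN, map_zero, zero_add] at h
    have hmem : e (f v) - c • v ∈ U.map e :=
      ih _ (sub_mem (he (hf hv)) (W.smul_mem c hv)) (by rw [map_sub, map_smul, hpow, sub_self])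
    rw [← Submodule.smul_mem_iff _ hc]
    have hfv : e (f v) ∈ U.map e := Submodule.mem_map_of_mem (hf hv)
    simpa using sub_mem hfv hmem

theorem finrank_inf_ker_add_le {U W : Submodule K V} [FiniteDimensional K U] (hW : W ≤ U.map e) :
    Module.finrank K ↥(U ⊓ LinearMap.ker e) + Module.finrank K W ≤ Module.finrank K U := by
  have hker : Module.finrank K (LinearMap.ker (e.domRestrict U)) =
      Module.finrank K ↥(U ⊓ LinearMap.ker e) := by
    rw [← Submodule.map_comap_subtype]
    exact (U.equivSubtypeMap _).finrank_eq
  rw [← (e.domRestrict U).finrank_range_add_finrank_ker, LinearMap.range_domRestrict, hker,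
    add_comm]
  exact Nat.add_le_add_right (Submodule.finrank_mono hW) _

end SpecialLinear

section HomogeneousDerivation

variable {R σ M : Type*} [CommRing R] [AddCommGroup M] {w : σ → M}
  {D : Derivation R (MvPolynomial σ R) (MvPolynomial σ R)} {p : MvPolynomial σ R} {m : M}

theorem isWeightedHomogeneous_derivation {t : M}
    (hD : ∀ i, IsWeightedHomogeneous w (D (X i)) (w i + t)) (hp : IsWeightedHomogeneous w p m) :
    IsWeightedHomogeneous w (D p) (m + t) := by
  have hmonomial (s : σ →₀ ℕ) :
      IsWeightedHomogeneous w (D (monomial s 1)) (Finsupp.weight w s + t) := by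
    have hhom (s : σ →₀ ℕ) := isWeightedHomogeneous_monomial w s (1 : R) rfl
    induction s using Finsupp.induction_linear with
    | zero => simpa using isWeightedHomogeneous_zero R w t
    | add s₁ s₂ h₁ h₂ =>
      have hleft := (hhom s₁).mul h₂
      have hright := (hhom s₂).mul h₁
      rw [← add_assoc] at hleft
      rw [← add_assoc, add_comm (Finsupp.weight w s₂)] at hright
      rw [← one_mul (1 : R), ← monomial_mul, D.leibniz, map_add]
      exact hleft.add hright
    | single i n =>
      cases n with
      | zero => simpa using isWeightedHomogeneous_zero R w t
      | succ n =>
        have h := (isWeightedHomogeneous_C w ((n + 1 : ℕ) : R)).mul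
          (((isWeightedHomogeneous_X R w i).pow n).mul (hD i))
        rw [zero_add, ← add_assoc, ← succ_nsmul] at h
        rw [← X_pow_eq_monomial, D.leibniz_pow, Finsupp.weight_single]
        simpa using h
  rw [p.as_sum, map_sum]
  refine IsWeightedHomogeneous.sum _ _ _ fun s hs => ?_
  rw [← mul_one (coeff s p), ← C_mul_monomial, ← smul_eq_C_mul, D.map_smul, smul_eq_C_mul,
    ← hp (mem_support_iff.mp hs), ← zero_add (_ + t)]
  exact (isWeightedHomogeneous_C _ _).mul (hmonomial s)

theorem derivation_eq_smul_of_isWeightedHomogeneous {c : M →+ R} (hD : ∀ i, D (X i) = c (w i) • X i)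
    (hp : IsWeightedHomogeneous w p m) : D p = c m • p := by
  have hmonomial (s : σ →₀ ℕ) : D (monomial s 1) = c (Finsupp.weight w s) • monomial s 1 := by
    induction s using Finsupp.induction_linear with
    | zero => simp
    | add s₁ s₂ h₁ h₂ =>
      rw [← one_mul (1 : R), ← monomial_mul, D.leibniz, h₁, h₂, map_add, map_add]
      simp only [smul_eq_mul, smul_eq_C_mul, map_add]
      ring
    | single i n =>
      rw [← X_pow_eq_monomial, D.leibniz_pow, hD, Finsupp.weight_single, map_nsmul]
      cases n with
      | zero => simp
      | succ n => simp only [smul_eq_mul, smul_eq_C_mul, nsmul_eq_mul, Nat.add_sub_cancel, pow_succ,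
          map_mul, map_natCast]; ring
  rw [p.as_sum, map_sum, Finset.smul_sum]
  refine Finset.sum_congr rfl fun s hs => ?_
  rw [← mul_one (coeff s p), ← C_mul_monomial, ← smul_eq_C_mul, D.map_smul, hmonomial,
    hp (mem_support_iff.mp hs), smul_comm]

end HomogeneousDerivation

section BoxPartitions

/-- The partitions of `w` into at most `n` parts, all less than `s`; `c i` counts the parts `i`, so
that `c 0` pads the number of parts to `n`. -/
def boxPartitions (s n w : ℕ) : Finset (Fin s → ℕ) :=
  {c ∈ Finset.Nat.antidiagonalTuple s n | ∑ i : Fin s, (i : ℕ) * c i = w}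

theorem mem_boxPartitions {s n w : ℕ} {c : Fin s → ℕ} :
    c ∈ boxPartitions s n w ↔ ∑ i, c i = n ∧ ∑ i : Fin s, (i : ℕ) * c i = w := by
  rw [boxPartitions, Finset.mem_filter, Finset.Nat.mem_antidiagonalTuple]

theorem card_boxPartitions_zero_left (n w : ℕ) :
    (boxPartitions 0 n w).card = if n = 0 ∧ w = 0 then 1 else 0 := by
  cases n with
  | zero => simp [boxPartitions, eq_comm, apply_ite]
  | succ n => simp [boxPartitions]

theorem card_filter_boxPartitions_zero_eq (s n w : ℕ) :
    {c ∈ boxPartitions (s + 1) n w | c 0 = 0}.card =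
      if n ≤ w then (boxPartitions s n (w - n)).card else 0 := by
  have hsum (c : Fin s → ℕ) :
      ∑ i : Fin s, ((i : ℕ) + 1) * c i = ∑ i : Fin s, i * c i + ∑ i, c i := by
    simp only [add_mul, one_mul, Finset.sum_add_distrib]
  split_ifs with hnw
  · refine Finset.card_nbij' Fin.tail (fun c => Fin.cons 0 c) ?_ ?_ ?_ ?_
    all_goals
      intro c
      simp only [SetLike.mem_coe, Finset.mem_filter, mem_boxPartitions, Fin.sum_univ_succ]
    · rintro ⟨⟨hn, hw⟩, h0⟩
      simp only [h0, zero_add, Fin.val_zero, mul_zero, Fin.val_succ, hsum, Fin.tail] at hn hw ⊢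
      omega
    · rintro ⟨hn, hw⟩
      simp only [Fin.cons_zero, Fin.cons_succ, zero_add, Fin.val_zero, mul_zero, Fin.val_succ, hsum,
        and_true]
      omega
    · rintro ⟨-, h0⟩
      rw [← h0, Fin.cons_self_tail]
    · rintro -
      exact Fin.tail_cons _ _
  · rw [Finset.card_eq_zero, Finset.filter_eq_empty_iff]
    intro c hc h0
    simp only [mem_boxPartitions, Fin.sum_univ_succ, h0, zero_add, mul_zero, Fin.val_succ,
      hsum] at hc
    omega

theorem card_filter_boxPartitions_zero_ne (s n w : ℕ) :
    {c ∈ boxPartitions (s + 1) (n + 1) w | ¬c 0 = 0}.card = (boxPartitions (s + 1) n w).card := by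
  refine Finset.card_nbij' (fun c => Fin.cons (c 0 - 1) (Fin.tail c))
    (fun c => Fin.cons (c 0 + 1) (Fin.tail c)) ?_ ?_ ?_ ?_
  all_goals
    intro c
    simp only [SetLike.mem_coe, Finset.mem_filter, mem_boxPartitions, Fin.sum_univ_succ,
      Fin.cons_zero, Fin.cons_succ, Fin.val_zero, zero_mul, zero_add, Fin.tail]
  · omega
  · omega
  · rintro ⟨-, h0⟩
    rw [Nat.sub_add_cancel (Nat.pos_of_ne_zero h0)]
    exact Fin.cons_self_tail c
  · exact fun _ => Fin.cons_self_tail c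

theorem card_boxPartitions_succ_succ (s n w : ℕ) :
    (boxPartitions (s + 1) (n + 1) w).card = (boxPartitions (s + 1) n w).card +
      if n + 1 ≤ w then (boxPartitions s (n + 1) (w - (n + 1))).card else 0 := by
  rw [← Finset.card_filter_add_card_filter_not fun c : Fin (s + 1) → ℕ => c 0 = 0,
    card_filter_boxPartitions_zero_eq, card_filter_boxPartitions_zero_ne, add_comm]

theorem card_boxPartitions_succ (s n w : ℕ) :
    (boxPartitions (s + 1) n w).card =
      ∑ i ∈ Finset.range (n + 1), if i ≤ w then (boxPartitions s i (w - i)).card else 0 := by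
  induction n with
  | zero => simp [boxPartitions, Finset.Nat.antidiagonalTuple_zero_right, Finset.filter_singleton,
      apply_ite]
  | succ n ih => rw [Finset.sum_range_succ, ← ih, card_boxPartitions_succ_succ]

/-- Coefficientwise sum of two coefficient lists. -/
def addCoeffs {α : Type*} [Add α] : List α → List α → List α
  | [], l => l
  | l, [] => l
  | x :: xs, y :: ys => (x + y) :: addCoeffs xs ys

theorem getD_addCoeffs {α : Type*} [AddZeroClass α] (l l' : List α) (i : ℕ) :
    (addCoeffs l l').getD i 0 = l.getD i 0 + l'.getD i 0 := by
  induction l, l' using addCoeffs.induct generalizing i with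
  | case1 l => simp [addCoeffs]
  | case2 l hl => cases l <;> simp [addCoeffs]
  | case3 x xs y ys ih =>
    cases i with
    | zero => rfl
    | succ i => exact ih i

/-- `shiftedPartialSums n acc rows` lists the partial sums `acc + qⁿ r₀ + ⋯ + qⁿ⁺ʲ rⱼ` of the
polynomials in `q` whose coefficient lists are `acc` and `rows = [r₀, r₁, …]`. -/
def shiftedPartialSums (n : ℕ) (acc : List ℕ) : List (List ℕ) → List (List ℕ)
  | [] => []
  | r :: rows =>
    let acc' := addCoeffs acc (List.replicate n 0 ++ r)
    acc' :: shiftedPartialSums (n + 1) acc' rows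

/-- The coefficient lists of the generating functions `∑ w, #(boxPartitions s n w) q ^ w`
(Gaussian binomial coefficients) for `n = 0, …, N`. -/
def boxPartitionTable (N : ℕ) : ℕ → List (List ℕ)
  | 0 => [1] :: List.replicate N []
  | s + 1 => shiftedPartialSums 0 [] (boxPartitionTable N s)

theorem length_shiftedPartialSums (rows : List (List ℕ)) (n : ℕ) (acc : List ℕ) :
    (shiftedPartialSums n acc rows).length = rows.length := by
  induction rows generalizing n acc with
  | nil => rfl
  | cons r rows ih => rw [shiftedPartialSums, List.length_cons, ih, List.length_cons]

theorem length_boxPartitionTable (N s : ℕ) : (boxPartitionTable N s).length = N + 1 := by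
  induction s with
  | zero => simp [boxPartitionTable]
  | succ s ih => rw [boxPartitionTable, length_shiftedPartialSums, ih]

theorem getD_replicate_append (n w : ℕ) (r : List ℕ) :
    (List.replicate n 0 ++ r).getD w 0 = if n ≤ w then r.getD (w - n) 0 else 0 := by
  split_ifs with h
  · rw [List.getD_append_right _ _ _ _ (by simpa), List.length_replicate]
  · rw [List.getD_append _ _ _ _ (by simpa using h), List.getD_replicate _ (by omega)]

theorem getD_shiftedPartialSums (rows : List (List ℕ)) (n : ℕ) (acc : List ℕ) (w : ℕ) {j : ℕ}
    (hj : j < rows.length) :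
    ((shiftedPartialSums n acc rows).getD j []).getD w 0 = acc.getD w 0 +
      ∑ i ∈ Finset.range (j + 1),
        if n + i ≤ w then (rows.getD i []).getD (w - (n + i)) 0 else 0 := by
  induction rows generalizing n acc j with
  | nil => simp at hj
  | cons r rows ih =>
    have hacc := (getD_addCoeffs acc (List.replicate n 0 ++ r) w).trans
      (congrArg _ (getD_replicate_append n w r))
    cases j with
    | zero => simpa [shiftedPartialSums] using hacc
    | succ j =>
      rw [shiftedPartialSums, List.getD_cons_succ, ih _ _ (Nat.lt_of_succ_lt_succ hj), hacc,
        Finset.sum_range_succ' _ (j + 1), add_comm (Finset.sum _ _), ← add_assoc]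
      simp only [List.getD_cons_succ, List.getD_cons_zero, add_assoc, add_comm 1, add_zero]

theorem getD_boxPartitionTable {N n : ℕ} (hn : n ≤ N) (s w : ℕ) :
    ((boxPartitionTable N s).getD n []).getD w 0 = (boxPartitions s n w).card := by
  induction s generalizing n w with
  | zero =>
    rw [card_boxPartitions_zero_left]
    cases n <;> cases w <;> simp [boxPartitionTable]
  | succ s ih =>
    rw [boxPartitionTable,
      getD_shiftedPartialSums _ _ _ _ (by rw [length_boxPartitionTable]; omega), List.getD_nil,
      zero_add, card_boxPartitions_succ]
    refine Finset.sum_congr rfl fun i hi => ?_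
    rw [zero_add, ih ((Finset.mem_range_succ_iff.mp hi).trans hn)]

end BoxPartitions

section CayleySylvester

variable (K : Type*) [Field K] (d : ℕ)

/-- The derivation `∑ (d - 2i) aᵢ ∂/∂aᵢ`, the infinitesimal action of the diagonal torus on the
coefficients of binary forms of degree `d`. -/
def weightDerivation : Derivation K (MvPolynomial (Fin (d + 1)) K) (MvPolynomial (Fin (d + 1)) K) :=
  mkDerivation K fun i => (d - 2 * (i : ℕ) : K) • X i

/-- The forms of degree `n` and weight `w` in the coefficients of the generic binary form of
degree `d`. -/
abbrev coeffForms (n w : ℤ) : Submodule K (MvPolynomial (Fin (d + 1)) K) :=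
  weightedHomogeneousSubmodule K (degreeWeight d) (n, w)

/-- The semi-invariants of degree `n` and weight `w`. -/
def semiInvariants (m : ℤ × ℤ) : Submodule K (MvPolynomial (Fin (d + 1)) K) :=
  weightedHomogeneousSubmodule K (degreeWeight d) m ⊓
    LinearMap.ker (raisingDerivation K d).toLinearMap

variable {K d}

theorem raisingDerivation_loweringDerivation_X (i : Fin (d + 1)) :
    raisingDerivation K d (loweringDerivation K d (X i)) = ((i + 1) * (d - i) : ℕ) • X i := by
  rw [loweringDerivation, mkDerivation_X]
  cases i using Fin.lastCases with
  | last => simp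
  | cast i =>
    simp only [Fin.lastCases_castSucc, map_nsmul, raisingDerivation, mkDerivation_X, Fin.cases_succ,
      smul_smul, Fin.val_castSucc]

theorem loweringDerivation_raisingDerivation_X (i : Fin (d + 1)) :
    loweringDerivation K d (raisingDerivation K d (X i)) = (i * (d + 1 - i) : ℕ) • X i := by
  rw [raisingDerivation, mkDerivation_X]
  cases i using Fin.cases with
  | zero => simp
  | succ i =>
    simp only [Fin.cases_succ, map_nsmul, loweringDerivation, mkDerivation_X,
      Fin.lastCases_castSucc, smul_smul, Fin.val_succ, Nat.add_sub_add_right, mul_comm]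

theorem lie_raisingDerivation_loweringDerivation :
    ⁅raisingDerivation K d, loweringDerivation K d⁆ = weightDerivation K d := by
  refine derivation_ext fun i => ?_
  obtain ⟨j, hj⟩ := Nat.exists_eq_add_of_le (Nat.lt_succ_iff.mp i.isLt)
  rw [Derivation.commutator_apply, raisingDerivation_loweringDerivation_X,
    loweringDerivation_raisingDerivation_X, weightDerivation, mkDerivation_X]
  have h₁ : d - i = j := by omega
  have h₂ : d + 1 - i = j + 1 := by omega
  have h₃ : (d : K) = (i : ℕ) + j := by exact_mod_cast congrArg (Nat.cast : ℕ → K) hj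
  rw [h₁, h₂, h₃]
  module

theorem lie_weightDerivation_raisingDerivation :
    ⁅weightDerivation K d, raisingDerivation K d⁆ = (2 : K) • raisingDerivation K d := by
  refine derivation_ext fun i => ?_
  rw [Derivation.commutator_apply, Derivation.smul_apply]
  simp only [raisingDerivation, weightDerivation, mkDerivation_X]
  cases i using Fin.cases with
  | zero => simp
  | succ i =>
    simp only [Fin.cases_succ, map_nsmul, mkDerivation_X, Fin.val_castSucc, Fin.val_succ]
    rw [Derivation.map_smul, mkDerivation_X, Fin.cases_succ]
    push_cast
    module

theorem isWeightedHomogeneous_raisingDerivation_X (i : Fin (d + 1)) :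
    IsWeightedHomogeneous (degreeWeight d) (raisingDerivation K d (X i))
      (degreeWeight d i + (0, -1)) := by
  rw [raisingDerivation, mkDerivation_X]
  cases i using Fin.cases with
  | zero => exact isWeightedHomogeneous_zero _ _ _
  | succ i =>
    rw [show degreeWeight d i.succ + (0, -1) = degreeWeight d i.castSucc by simp [degreeWeight]]
    exact (weightedHomogeneousSubmodule K (degreeWeight d) _).smul_of_tower_mem _
      (isWeightedHomogeneous_X K _ _)

theorem isWeightedHomogeneous_loweringDerivation_X (i : Fin (d + 1)) :
    IsWeightedHomogeneous (degreeWeight d) (loweringDerivation K d (X i))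
      (degreeWeight d i + (0, 1)) := by
  rw [loweringDerivation, mkDerivation_X]
  cases i using Fin.lastCases with
  | last => rw [Fin.lastCases_last]; exact isWeightedHomogeneous_zero _ _ _
  | cast i =>
    rw [show degreeWeight d i.castSucc + (0, 1) = degreeWeight d i.succ by simp [degreeWeight],
      Fin.lastCases_castSucc]
    exact (weightedHomogeneousSubmodule K (degreeWeight d) _).smul_of_tower_mem _
      (isWeightedHomogeneous_X K _ _)

theorem weight_degreeWeight (s : Fin (d + 1) →₀ ℕ) :
    Finsupp.weight (degreeWeight d) s =
      (((∑ i, s i : ℕ), (∑ i : Fin (d + 1), i * s i : ℕ)) : ℤ × ℤ) := by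
  simp [Finsupp.weight_apply, Finsupp.sum_fintype, degreeWeight, Prod.ext_iff, Prod.fst_sum,
    Prod.snd_sum, mul_comm]

theorem raisingDerivation_pow_mem {n w : ℤ} {p : MvPolynomial (Fin (d + 1)) K}
    (hp : p ∈ coeffForms K d n w) (N : ℕ) :
    ((raisingDerivation K d).toLinearMap ^ N) p ∈ coeffForms K d n (w - N) := by
  induction N with
  | zero => simpa using hp
  | succ N ih =>
    have h := isWeightedHomogeneous_derivation isWeightedHomogeneous_raisingDerivation_X ih
    rw [pow_succ']
    simpa [sub_eq_add_neg, add_assoc, add_comm] using h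

theorem raisingDerivation_pow_eq_zero {n : ℤ} {w : ℕ} {p : MvPolynomial (Fin (d + 1)) K}
    (hp : p ∈ coeffForms K d n w) : ((raisingDerivation K d).toLinearMap ^ (w + 1)) p = 0 := by
  by_contra h
  obtain ⟨s, hs⟩ := exists_coeff_ne_zero h
  have hweight := congrArg Prod.snd (raisingDerivation_pow_mem hp (w + 1) hs)
  rw [weight_degreeWeight] at hweight
  push_cast at hweight
  have hnonneg : 0 ≤ ∑ i : Fin (d + 1), ((i : ℕ) : ℤ) * s i := by positivity
  linarith

theorem weightDerivation_apply_of_mem {n w : ℤ} {p : MvPolynomial (Fin (d + 1)) K}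
    (hp : p ∈ coeffForms K d n w) : weightDerivation K d p = ((d * n - 2 * w : ℤ) : K) • p := by
  let c : ℤ × ℤ →+ K :=
    { toFun := fun m => ((d * m.1 - 2 * m.2 : ℤ) : K)
      map_zero' := by simp
      map_add' := fun m m' => by push_cast [Prod.fst_add, Prod.snd_add]; ring }
  refine derivation_eq_smul_of_isWeightedHomogeneous (c := c) (fun i => ?_) hp
  rw [weightDerivation, mkDerivation_X]
  simp [c, degreeWeight]

theorem coeffForms_le_map_raisingDerivation [CharZero K] {n w : ℕ} (hw : 2 * w < d * n) :
    coeffForms K d n w ≤ (coeffForms K d n (w + 1)).map (raisingDerivation K d).toLinearMap := by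
  refine le_map_of_weight_pos (f := (loweringDerivation K d).toLinearMap)
    (h := (weightDerivation K d).toLinearMap) (fun p => ?_) (fun p => ?_) (fun p hp => ?_)
    (fun p hp => ?_) (Nat.sub_pos_of_lt hw) (fun p hp => ?_)
    (fun p hp => ⟨w + 1, raisingDerivation_pow_eq_zero hp⟩)
  · exact sub_eq_iff_eq_add'.mp (DFunLike.congr_fun lie_raisingDerivation_loweringDerivation p)
  · exact sub_eq_iff_eq_add'.mp (DFunLike.congr_fun lie_weightDerivation_raisingDerivation p)
  · simpa using isWeightedHomogeneous_derivation isWeightedHomogeneous_raisingDerivation_X hp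
  · simpa using isWeightedHomogeneous_derivation isWeightedHomogeneous_loweringDerivation_X hp
  · rw [Nat.cast_sub hw.le]
    simpa using weightDerivation_apply_of_mem hp

/-- Monomials of degree `n` and weight `w` correspond to their exponent vectors. -/
def exponentsEquivBoxPartitions (d n w : ℕ) :
    {s : Fin (d + 1) →₀ ℕ | Finsupp.weight (degreeWeight d) s = ((n : ℤ), (w : ℤ))} ≃
      boxPartitions (d + 1) n w :=
  Finsupp.equivFunOnFinite.subtypeEquiv fun s => by
    rw [Set.mem_ofPred_eq, weight_degreeWeight, mem_boxPartitions, Prod.mk_inj, Nat.cast_inj,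
      Nat.cast_inj]
    rfl

variable (K d) in
/-- The basis of monomials. -/
def coeffFormsBasis (n w : ℕ) :
    Module.Basis (boxPartitions (d + 1) n w) K (coeffForms K d n w) :=
  ((basisRestrictSupport K _).map (LinearEquiv.ofEq _ _
    (weightedHomogeneousSubmodule_eq_finsupp_supported K _ _).symm)).reindex
    (exponentsEquivBoxPartitions d n w)

theorem finrank_semiInvariants_add_le [CharZero K] {n w : ℕ} (hw : 2 * w < d * n) :
    Module.finrank K (semiInvariants K d (n, (w + 1 : ℕ))) + (boxPartitions (d + 1) n w).card ≤
      (boxPartitions (d + 1) n (w + 1)).card := by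
  simp only [← Fintype.card_coe, ← Module.finrank_eq_card_basis (coeffFormsBasis K d n _)]
  have := (coeffFormsBasis K d n (w + 1)).finiteDimensional_of_finite
  exact finrank_inf_ker_add_le (coeffForms_le_map_raisingDerivation hw)

end CayleySylvester

section SparsePolynomial

/-- The value at the point `x` of the monomial with exponent list `e`. Powers are written as
iterated multiplications, which the kernel evaluates much faster. -/
def monomialEval {R : Type*} [CommSemiring R] : List R → List ℕ → R
  | a :: x, n :: e => (a * ·)^[n] (monomialEval x e)
  | _, _ => 1

/-- Sparse integer polynomials: lists of coefficients paired with exponent lists. -/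
abbrev SparsePoly := List (ℤ × List ℕ)

/-- The value of a sparse polynomial at the point `x`. -/
def SparsePoly.eval {R : Type*} [CommRing R] (x : List R) (l : SparsePoly) : R :=
  (l.map fun t => (t.1 : R) * monomialEval x t.2).sum

/-- The weight of the monomial with exponent list `e` when the variables have weights `w`. -/
def monomialWeight (w e : List ℕ) : ℕ := (List.zipWith (· * ·) w e).sum

section Semiring

variable {R S : Type*} [CommSemiring R] [CommSemiring S]

theorem nil_monomialEval (e : List ℕ) : monomialEval ([] : List R) e = 1 := rfl

theorem monomialEval_nil (x : List R) : monomialEval x [] = 1 := by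
  cases x <;> rfl

theorem monomialEval_cons (a : R) (x : List R) (n : ℕ) (e : List ℕ) :
    monomialEval (a :: x) (n :: e) = a ^ n * monomialEval x e := by
  rw [monomialEval, mul_left_iterate]

theorem map_monomialEval (φ : R →+* S) (x : List R) (e : List ℕ) :
    φ (monomialEval x e) = monomialEval (x.map φ) e := by
  induction x, e using monomialEval.induct with
  | case1 a x n e ih => simp only [monomialEval_cons, List.map_cons, map_mul, map_pow, ih]
  | case2 x e h =>
    cases x <;> cases e <;> first | exact (h _ _ _ _ rfl rfl).elim | exact map_one φ

theorem monomialEval_mem_graded {σ : Type*} [SetLike σ R] {𝒜 : ℕ → σ} [SetLike.GradedMonoid 𝒜]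
    {x : List R} {w : List ℕ} (hx : List.Forall₂ (fun a n => a ∈ 𝒜 n) x w) (e : List ℕ) :
    monomialEval x e ∈ 𝒜 (monomialWeight w e) := by
  induction hx generalizing e with
  | nil => exact SetLike.GradedOne.one_mem
  | cons ha _ ih =>
    cases e with
    | nil => exact SetLike.GradedOne.one_mem
    | cons n e =>
      rw [monomialEval_cons, monomialWeight, List.zipWith_cons_cons, List.sum_cons, mul_comm]
      exact SetLike.GradedMul.mul_mem (SetLike.pow_mem_graded n ha) (ih e)

end Semiring

variable {R S : Type*} [CommRing R] [CommRing S]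

namespace SparsePoly

theorem map_eval (φ : R →+* S) (x : List R) (l : SparsePoly) : φ (l.eval x) = l.eval (x.map φ) := by
  simp only [eval, map_list_sum, List.map_map, Function.comp_def, map_mul, map_intCast,
    map_monomialEval]

theorem eval_mem_graded {σ : Type*} [SetLike σ R] [AddSubgroupClass σ R] {𝒜 : ℕ → σ}
    [SetLike.GradedMonoid 𝒜] {x : List R} {w : List ℕ} {n : ℕ} {l : SparsePoly}
    (hx : List.Forall₂ (fun a n => a ∈ 𝒜 n) x w) (hl : ∀ t ∈ l, monomialWeight w t.2 = n) :
    l.eval x ∈ 𝒜 n := by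
  refine list_sum_mem (List.forall_mem_map.mpr fun t ht => ?_)
  rw [← zsmul_eq_mul, ← hl t ht]
  exact zsmul_mem (monomialEval_mem_graded hx t.2) t.1

end SparsePoly

end SparsePolynomial

section Horner

/-- Product of two polynomials given by their coefficient lists. -/
def mulCoeffs {α : Type*} [Zero α] [Add α] [Mul α] : List α → List α → List α
  | [], _ => []
  | a :: l, m => addCoeffs (m.map (a * ·)) (0 :: mulCoeffs l m)

/-- Horner evaluation at `x` of the polynomial whose coefficients are the images of a list. -/
def hornerEval {α R : Type*} [CommRing R] (f : α → R) (x : R) (l : List α) : R :=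
  l.foldr (fun a s => f a + x * s) 0

variable {α β R : Type*} [CommRing R] {f : α → R} (x : R)

theorem hornerEval_cons (a : α) (l : List α) :
    hornerEval f x (a :: l) = f a + x * hornerEval f x l := rfl

theorem hornerEval_map {f' : β → R} (g : α → β) {c : R} (hg : ∀ a, f' (g a) = c * f a)
    (l : List α) : hornerEval f' x (l.map g) = c * hornerEval f x l := by
  induction l with
  | nil => exact (mul_zero c).symm
  | cons a l ih =>
    rw [List.map_cons, hornerEval_cons, hornerEval_cons, hg, ih]
    ring

theorem hornerEval_addCoeffs [Add α] (hadd : ∀ a b, f (a + b) = f a + f b) (l m : List α) :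
    hornerEval f x (addCoeffs l m) = hornerEval f x l + hornerEval f x m := by
  induction l, m using addCoeffs.induct with
  | case1 m => rw [addCoeffs, hornerEval, hornerEval, List.foldr_nil, zero_add]
  | case2 l hl => cases l <;> simp [addCoeffs, hornerEval]
  | case3 a l b m ih =>
    rw [addCoeffs, hornerEval_cons, hornerEval_cons, hornerEval_cons, hadd, ih]
    ring

theorem hornerEval_mulCoeffs [Zero α] [Add α] [Mul α] (hzero : f 0 = 0)
    (hadd : ∀ a b, f (a + b) = f a + f b) (hmul : ∀ a b, f (a * b) = f a * f b) (l m : List α) :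
    hornerEval f x (mulCoeffs l m) = hornerEval f x l * hornerEval f x m := by
  induction l with
  | nil => exact (zero_mul _).symm
  | cons a l ih =>
    rw [mulCoeffs, hornerEval_addCoeffs x hadd, hornerEval_map x _ (hmul a), hornerEval_cons,
      hornerEval_cons, ih, hzero]
    ring

theorem hornerEval_eq_sum (b : α) (l : List α) :
    hornerEval f x l = ∑ j ∈ Finset.range l.length, f (l.getD j b) * x ^ j := by
  induction l with
  | nil => rfl
  | cons a l ih =>
    rw [hornerEval_cons, ih, List.length_cons, Finset.sum_range_succ', Finset.mul_sum, add_comm]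
    simp only [List.getD_cons_succ, List.getD_cons_zero, pow_zero, mul_one, pow_succ]
    exact congrArg (· + f a) (Finset.sum_congr rfl fun j _ => by ring)

end Horner

section SparsePolynomialOperations

/-- `X₀ ^ i * l`, where `X₀` is a new variable put in front. -/
def SparsePoly.consExponent (i : ℕ) (l : SparsePoly) : SparsePoly := l.map fun t => (t.1, i :: t.2)

/-- `∑ X₀ ^ (i + j) * l[j]`, where `X₀` is a new variable put in front. -/
def SparsePoly.ofCoeffs : ℕ → List SparsePoly → SparsePoly
  | _, [] => []
  | i, p :: l => p.consExponent i ++ ofCoeffs (i + 1) l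

namespace SparsePoly

variable {R : Type*} [CommRing R]

theorem eval_cons (x : List R) (t : ℤ × List ℕ) (l : SparsePoly) :
    eval x (t :: l) = t.1 * monomialEval x t.2 + l.eval x := by
  rw [eval, List.map_cons, List.sum_cons, eval]

theorem eval_append (x : List R) (l₁ l₂ : SparsePoly) :
    eval x (l₁ ++ l₂) = l₁.eval x + l₂.eval x := by
  rw [eval, List.map_append, List.sum_append, eval, eval]

theorem eval_consExponent (y : R) (x : List R) (i : ℕ) (l : SparsePoly) :
    (l.consExponent i).eval (y :: x) = y ^ i * l.eval x := by
  simp only [eval, consExponent, List.map_map, Function.comp_def, monomialEval_cons,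
    ← List.sum_map_mul_left]
  exact congrArg _ (List.map_congr_left fun t _ => by ring)

theorem eval_ofCoeffs (y : R) (x : List R) (i : ℕ) (l : List SparsePoly) :
    (ofCoeffs i l).eval (y :: x) = y ^ i * hornerEval (eval x) y l := by
  induction l generalizing i with
  | nil => exact (mul_zero _).symm
  | cons p l ih =>
    rw [ofCoeffs, eval_append, eval_consExponent, ih, hornerEval_cons]
    ring

theorem eval_map_ediv {c : ℤ} {l : SparsePoly}
    (hl : ∀ t ∈ l, c ∣ t.1) (x : List R) :
    (c : R) * eval x (l.map fun t => (t.1 / c, t.2)) = l.eval x := by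
  rw [eval, eval, List.map_map, ← List.sum_map_mul_left]
  refine congrArg _ (List.map_congr_left fun t ht => ?_)
  rw [Function.comp_apply, ← mul_assoc, ← Int.cast_mul, Int.mul_ediv_cancel' (hl t ht)]

end SparsePoly

end SparsePolynomialOperations

section NestedPolynomial

/-- Integer polynomials in `n` variables in recursive dense form, which allows fast arithmetic: a
polynomial in `n + 1` variables is the list of its coefficients with respect to the powers of the
first variable. -/
def NestedPoly : ℕ → Type
  | 0 => ℤ
  | n + 1 => List (NestedPoly n)

namespace NestedPoly

instance instZero : (n : ℕ) → Zero (NestedPoly n)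
  | 0 => inferInstanceAs (Zero ℤ)
  | n + 1 => ⟨([] : List (NestedPoly n))⟩

instance instIntCast : (n : ℕ) → IntCast (NestedPoly n)
  | 0 => inferInstanceAs (IntCast ℤ)
  | n + 1 => have := instIntCast n; ⟨fun c => ([(c : NestedPoly n)] : List (NestedPoly n))⟩

instance instNeg : (n : ℕ) → Neg (NestedPoly n)
  | 0 => inferInstanceAs (Neg ℤ)
  | n + 1 => have := instNeg n; ⟨List.map (fun a : NestedPoly n => -a)⟩

instance instAdd : (n : ℕ) → Add (NestedPoly n)
  | 0 => inferInstanceAs (Add ℤ)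
  | n + 1 => have := instAdd n; ⟨addCoeffs (α := NestedPoly n)⟩

instance instMul : (n : ℕ) → Mul (NestedPoly n)
  | 0 => inferInstanceAs (Mul ℤ)
  | n + 1 => have := instMul n; ⟨mulCoeffs (α := NestedPoly n)⟩

/-- The monomial with coefficient `c` and exponent list `e`, padded by zeros. -/
def monomial (c : ℤ) : (n : ℕ) → List ℕ → NestedPoly n
  | 0, _ => c
  | n + 1, e => (List.replicate (e.headD 0) 0 ++ [monomial c n e.tail] : List (NestedPoly n))

/-- Conversion from sparse form. -/
def ofTerms (n : ℕ) (l : SparsePoly) : NestedPoly n :=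
  l.foldr (fun t p => monomial t.1 n t.2 + p) 0

/-- Conversion to sparse form. -/
def toTerms : {n : ℕ} → NestedPoly n → SparsePoly
  | 0 => fun c : ℤ => if c = 0 then [] else [(c, [])]
  | n + 1 => fun l : List (NestedPoly n) => SparsePoly.ofCoeffs 0 (l.map toTerms)

variable {R : Type*} [CommRing R]

/-- The value at the point `x`. -/
def eval : {n : ℕ} → (Fin n → R) → NestedPoly n → R
  | 0, _ => fun c : ℤ => (c : R)
  | n + 1, x => hornerEval (α := NestedPoly n) (eval (Fin.tail x)) (x 0)

theorem eval_zero {n : ℕ} (x : Fin n → R) : eval x 0 = 0 := by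
  cases n with
  | zero => exact Int.cast_zero
  | succ n => rfl

theorem eval_intCast {n : ℕ} (x : Fin n → R) (c : ℤ) : eval x c = c := by
  induction n with
  | zero => rfl
  | succ n ih =>
    change eval (Fin.tail x) c + x 0 * 0 = c
    rw [ih, mul_zero, add_zero]

theorem eval_neg {n : ℕ} (x : Fin n → R) (p : NestedPoly n) : eval x (-p) = -eval x p := by
  induction n with
  | zero => exact Int.cast_neg p
  | succ n ih =>
    rw [neg_eq_neg_one_mul]
    exact hornerEval_map _ _ (fun a => by rw [ih, neg_eq_neg_one_mul]) p

theorem eval_add {n : ℕ} (x : Fin n → R) (p q : NestedPoly n) :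
    eval x (p + q) = eval x p + eval x q := by
  induction n with
  | zero => exact Int.cast_add p q
  | succ n ih => exact hornerEval_addCoeffs _ (ih _) p q

theorem eval_mul {n : ℕ} (x : Fin n → R) (p q : NestedPoly n) :
    eval x (p * q) = eval x p * eval x q := by
  induction n with
  | zero => exact Int.cast_mul p q
  | succ n ih => exact hornerEval_mulCoeffs _ (eval_zero _) (eval_add _) (ih _) p q

theorem eval_monomial {n : ℕ} (x : Fin n → R) (c : ℤ) (e : List ℕ) :
    eval x (monomial c n e) = c * monomialEval (List.ofFn x) e := by
  induction n generalizing e with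
  | zero =>
    rw [List.ofFn_zero, nil_monomialEval, mul_one]
    rfl
  | succ n ih =>
    have hshift (i : ℕ) (e : List ℕ) : hornerEval (eval (Fin.tail x)) (x 0)
        (List.replicate i 0 ++ [monomial c n e]) =
          c * (x 0 ^ i * monomialEval (List.ofFn (Fin.tail x)) e) := by
      induction i with
      | zero =>
        rw [List.replicate_zero, List.nil_append, hornerEval_cons, ih, pow_zero, one_mul]
        exact add_eq_left.mpr (mul_zero _)
      | succ i hi =>
        rw [List.replicate_succ, List.cons_append, hornerEval_cons, hi, eval_zero]
        ring
    rw [List.ofFn_succ]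
    refine (hshift _ _).trans (congrArg _ ?_)
    cases e with
    | nil =>
      rw [List.headD_nil, pow_zero, one_mul, List.tail_nil, monomialEval_nil, monomialEval_nil]
    | cons i e => exact (monomialEval_cons _ _ i e).symm

theorem eval_ofTerms {n : ℕ} (x : Fin n → R) (l : SparsePoly) :
    eval x (ofTerms n l) = l.eval (List.ofFn x) := by
  induction l with
  | nil => exact eval_zero x
  | cons t l ih => rw [ofTerms, List.foldr_cons, ← ofTerms, eval_add, eval_monomial, ih,
      SparsePoly.eval_cons]

theorem eval_toTerms {n : ℕ} (x : Fin n → R) (p : NestedPoly n) :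
    p.toTerms.eval (List.ofFn x) = eval x p := by
  induction n with
  | zero =>
    have hconst (c : ℤ) : SparsePoly.eval (List.ofFn x) (if c = 0 then [] else [(c, [])]) = c := by
      split_ifs with hc
      · rw [hc, Int.cast_zero]
        rfl
      · rw [SparsePoly.eval_cons, monomialEval_nil, mul_one]
        exact add_zero _
    exact hconst p
  | succ n ih =>
    rw [List.ofFn_succ, toTerms, SparsePoly.eval_ofCoeffs, pow_zero, one_mul]
    exact (hornerEval_map _ _ (fun a => (ih _ a).trans (one_mul _).symm) p).trans (one_mul _)

/-- The coefficient of the `j`-th power of the first variable. -/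
def coeff {n : ℕ} (p : NestedPoly (n + 1)) (j : ℕ) : NestedPoly n :=
  List.getD (α := NestedPoly n) p j 0

theorem eval_eq_sum_coeff {n : ℕ} (x : Fin (n + 1) → R) (p : NestedPoly (n + 1)) :
    eval x p = ∑ j ∈ Finset.range (List.length (α := NestedPoly n) p),
      eval (Fin.tail x) (p.coeff j) * x 0 ^ j :=
  hornerEval_eq_sum (α := NestedPoly n) (x 0) 0 p

end NestedPoly

end NestedPolynomial

section Interpolation

/-- Chio condensation modulo `p` of the matrix with the given rows; true if all pivots are nonzero
modulo `p`, which is sufficient for the matrix to be nonsingular. -/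
def chioNonsingular (p : ℕ) : ℕ → List (List ℕ) → Bool
  | 0, _ => true
  | n + 1, (a :: r) :: rows => a % p != 0 && chioNonsingular p n (rows.map fun s =>
      List.zipWith (fun x y => (a * y + (p - s.headD 0 % p) * x) % p) r s.tail)
  | _ + 1, _ => false

/-- The value at `x` of the linear form with coefficient list `r`. -/
def linearFormEval {R : Type*} [Semiring R] : List ℕ → List R → R
  | m :: r, z :: x => m * z + linearFormEval r x
  | _, _ => 0

theorem linearFormEval_eq_zero {R : Type*} [Semiring R] (r : List ℕ) {x : List R}
    (hx : ∀ z ∈ x, z = 0) : linearFormEval r x = 0 := by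
  induction r generalizing x with
  | nil => rfl
  | cons m r ih =>
    match x with
    | [] => rfl
    | z :: x =>
      obtain ⟨hz, hx⟩ := List.forall_mem_cons.mp hx
      rw [linearFormEval, hz, mul_zero, ih hx, add_zero]

theorem linearFormEval_ofFn {R : Type*} [Semiring R] {r : List ℕ} {n : ℕ} (hr : r.length = n)
    (x : Fin n → R) : linearFormEval r (List.ofFn x) = ∑ j : Fin n, (r.getD j 0 : R) * x j := by
  induction r generalizing n with
  | nil => subst hr; rfl
  | cons m r ih =>
    match n, hr with
    | n + 1, hr =>
      rw [Fin.sum_univ_succ, List.ofFn_succ, linearFormEval, ih (Nat.succ.inj hr)]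
      rfl

variable {p : ℕ}

theorem linearFormEval_chio_row {a b : ℕ} (hp : 0 < p) {r s : List ℕ} (h : r.length = s.length)
    (x : List (ZMod p)) :
    linearFormEval (List.zipWith (fun x y => (a * y + (p - b % p) * x) % p) r s) x =
      a * linearFormEval s x - b * linearFormEval r x := by
  have hb : ((p - b % p : ℕ) : ZMod p) = -b := by
    rw [Nat.cast_sub (Nat.mod_lt b hp).le, ZMod.natCast_self, ZMod.natCast_mod, zero_sub]
  induction x generalizing r s with
  | nil => cases r <;> cases s <;> simp [linearFormEval]
  | cons z x ih =>
    match r, s, h with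
    | [], [], _ => simp [linearFormEval]
    | m :: r, m' :: s, h =>
      simp only [List.zipWith_cons_cons, linearFormEval, ih (Nat.succ.inj h), ZMod.natCast_mod,
        Nat.cast_add, Nat.cast_mul, hb]
      ring

theorem eq_zero_of_chioNonsingular [Fact p.Prime] {n : ℕ} {rows : List (List ℕ)}
    (hlen : ∀ r ∈ rows, r.length = n) (hrows : chioNonsingular p n rows) {x : List (ZMod p)}
    (hx : x.length = n) (h : ∀ r ∈ rows, linearFormEval r x = 0) : ∀ z ∈ x, z = 0 := by
  induction n generalizing rows x with
  | zero => simp [List.length_eq_zero_iff.mp hx]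
  | succ n ih =>
    match rows, x, hx, hrows with
    | (a :: r) :: rows, z :: x, hx, hrows =>
      obtain ⟨ha, hrows⟩ : a % p ≠ 0 ∧ _ := by
        simpa only [chioNonsingular, Bool.and_eq_true, bne_iff_ne] using hrows
      have hr : (a :: r).length = n + 1 := hlen _ List.mem_cons_self
      have ha' : (a : ZMod p) ≠ 0 := fun h =>
        ha (Nat.mod_eq_zero_of_dvd ((ZMod.natCast_eq_zero_iff a p).mp h))
      have hfirst : a * z + linearFormEval r x = 0 := h _ List.mem_cons_self
      have hx' : ∀ z ∈ x, z = 0 := by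
        refine ih (fun s hs => ?_) hrows (Nat.succ.inj hx) fun s hs => ?_
        all_goals
          obtain ⟨s, hsmem, rfl⟩ := List.mem_map.mp hs
          have hslen := hlen s (List.mem_cons_of_mem _ hsmem)
          obtain ⟨b, s, rfl⟩ := List.exists_cons_of_length_eq_add_one hslen
          have hrs : r.length = s.length := Nat.succ.inj (hr.trans hslen.symm)
        · simpa [List.length_zipWith, hrs] using hslen
        · have hs : b * z + linearFormEval s x = 0 := h _ (List.mem_cons_of_mem _ hsmem)
          rw [List.headD_cons, List.tail_cons,
            linearFormEval_chio_row (Fact.out : p.Prime).pos hrs]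
          linear_combination (a : ZMod p) * hs - b * hfirst
      rw [linearFormEval_eq_zero r hx', add_zero] at hfirst
      exact List.forall_mem_cons.mpr ⟨(mul_eq_zero.mp hfirst).resolve_left ha', hx'⟩

theorem det_ne_zero_of_chioNonsingular [Fact p.Prime] {n : ℕ} {M : Matrix (Fin n) (Fin n) ℤ}
    {rows : List (List ℕ)} (hlen : ∀ r ∈ rows, r.length = n) (hrows : chioNonsingular p n rows)
    (hM : ∀ r ∈ rows, ∃ i, ∀ j : Fin n, (r.getD j 0 : ZMod p) = M i j) : M.det ≠ 0 := by
  intro hdet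
  have hmap : (M.map (Int.castRingHom (ZMod p))).det = 0 := by
    rw [← RingHom.mapMatrix_apply, ← RingHom.map_det, hdet, map_zero]
  obtain ⟨x, hx, hMx⟩ := Matrix.exists_mulVec_eq_zero_iff.mpr hmap
  refine hx (funext fun j => eq_zero_of_chioNonsingular hlen hrows (List.length_ofFn (f := x))
    (fun r hr => ?_) _ (List.mem_ofFn.mpr ⟨j, rfl⟩))
  obtain ⟨i, hi⟩ := hM r hr
  rw [linearFormEval_ofFn (hlen r hr)]
  simp only [hi]
  exact congrFun hMx i

theorem injective_of_det_ne_zero {K V ι : Type*} [Field K] [AddCommGroup V] [Module K V]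
    [FiniteDimensional K V] [Fintype ι] [DecidableEq ι] (hV : Module.finrank K V ≤ Fintype.card ι)
    (ev : V →ₗ[K] ι → K) (v : ι → V) (hdet : (Matrix.of fun i => ev (v i)).det ≠ 0) :
    Function.Injective ev := by
  have hli : LinearIndependent K (ev ∘ v) := Matrix.linearIndependent_rows_of_det_ne_zero hdet
  have hsurj : Function.Surjective ev := by
    rw [← LinearMap.range_eq_top, ← top_le_iff,
      ← hli.span_eq_top_of_card_eq_finrank' (Module.finrank_fintype_fun_eq_card K).symm]
    exact Submodule.span_le.mpr (Set.range_comp_subset_range v ev)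
  refine (LinearMap.injective_iff_surjective_of_finrank_eq_finrank (le_antisymm ?_ ?_)).mpr hsurj
  · rwa [Module.finrank_fintype_fun_eq_card]
  · exact LinearMap.finrank_le_finrank_of_surjective hsurj

end Interpolation

section OctavicInvariants

namespace BinaryCovariant

/-- The numerator of the ratio between a covariant built from normalized transvectants and the one
built from Ω-processes. -/
def scaleNum (d : ℕ) : BinaryCovariant → ℕ
  | form => 1
  | trans r S T =>
    ((T.order d - r).factorial * (S.order d - r).factorial) * (S.scaleNum d * T.scaleNum d)

/-- The denominator of the ratio between a covariant built from normalized transvectants and the one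
built from Ω-processes. -/
def scaleDen (d : ℕ) : BinaryCovariant → ℕ
  | form => 1
  | trans _ S T =>
    ((S.order d).factorial * (T.order d).factorial) * (S.scaleDen d * T.scaleDen d)

/-- The value of a covariant at a form of degree `d`, built from normalized transvectants. -/
def normalizedEval {k : Type*} [Field k] (d : ℕ) (f : MvPolynomial (Fin 2) k) :
    BinaryCovariant → MvPolynomial (Fin 2) k
  | form => f
  | trans r S T =>
    transvectant (S.order d) (T.order d) r (S.normalizedEval d f) (T.normalizedEval d f)

theorem normalizedEval_eq {k : Type*} [Field k] (d : ℕ) (f : MvPolynomial (Fin 2) k)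
    (T : BinaryCovariant) :
    T.normalizedEval d f = C ((T.scaleNum d : k) / T.scaleDen d) * T.eval f := by
  induction T with
  | form => simp [normalizedEval, scaleNum, scaleDen, eval]
  | trans r S T ihS ihT =>
    rw [normalizedEval, ihS, ihT, transvectant_eq_C_mul_omegaProcess, omegaProcess_C_mul, eval,
      ← mul_assoc, ← C_mul, div_mul_div_comm, div_mul_div_comm, scaleNum, scaleDen]
    push_cast
    rfl

end BinaryCovariant

open BinaryCovariant in
/-- The invariants `J₁₀, …, J₂` of the binary octavic: `(T, A, B)` stands for `A / B` times the
constant covariant `T`. -/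
def shiodaInvariants : List (BinaryCovariant × ℕ × ℕ) :=
  let g := trans 4 form form
  let κ := trans 6 form form
  let h := trans 2 κ κ
  let m := trans 4 form κ
  let n := trans 4 form h
  let p := trans 4 g κ
  let q := trans 4 g h
  [(trans 4 q h, 2 ^ 22 * 3 ^ 2 * 5 ^ 2 * 7 ^ 11, 1),
    (trans 4 n h, 2 ^ 19 * 3 ^ 2 * 5 * 7 ^ 9, 1),
    (trans 4 p h, 2 ^ 17 * 3 * 5 ^ 2 * 7 ^ 9, 1),
    (trans 4 m h, 2 ^ 14 * 3 * 5 * 7 ^ 7, 1),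
    (trans 4 κ h, 2 ^ 14 * 3 ^ 2 * 7 ^ 6, 1),
    (trans 4 m κ, 2 ^ 9 * 5 * 7 ^ 5, 1),
    (trans 4 κ κ, 2 ^ 9 * 3 * 7 ^ 4, 1),
    (trans 8 form g, 2 ^ 4 * 5 ^ 2 * 7 ^ 3, 3),
    (trans 8 form form, 2 ^ 2 * 5 * 7, 1)]

/-- Multiplying the octavic by this integer clears the denominators of the `Jᵢ` with respect to
Ω-processes. -/
def octavicScale : ℕ := 60480

/-- The integer by which `T.eval` has to be multiplied to obtain the invariant `(T, A, B)` of the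
octavic rescaled by `octavicScale`. -/
def scaledFactor (J : BinaryCovariant × ℕ × ℕ) : ℕ :=
  J.2.1 * J.1.scaleNum 8 * octavicScale ^ J.1.degree / (J.2.2 * J.1.scaleDen 8)

/-- The values `J₁₀, …, J₂` at the octavic with coefficients `octavicScale * x i`. -/
def octavicInvariants {R : Type*} [CommRing R] (x : Fin 9 → R) : List R :=
  shiodaInvariants.map fun J =>
    (scaledFactor J : R) * constantCoeff (J.1.eval (binaryForm (d := 8) x))

/-- An evaluation of `octavicInvariants` by integer arithmetic on lists. -/
def octavicInvariantValues (x : List ℤ) : List ℤ :=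
  shiodaInvariants.map fun J => (scaledFactor J : ℤ) * (J.1.coeffs 8 x).getD 0 0

theorem map_octavicInvariants {R S : Type*} [CommRing R] [CommRing S] (φ : R →+* S)
    (x : Fin 9 → R) : (octavicInvariants x).map φ = octavicInvariants (φ ∘ x) := by
  simp only [octavicInvariants, List.map_map, Function.comp_def, map_mul, map_natCast,
    ← constantCoeff_map, BinaryCovariant.map_eval, map_binaryForm]

theorem order_shiodaInvariants : ∀ J ∈ shiodaInvariants, J.1.order 8 = 0 := by decide

theorem octavicInvariants_getD (x : List ℤ) :
    octavicInvariants (fun i => x.getD i 0) = octavicInvariantValues x :=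
  List.map_congr_left fun J hJ => by
    rw [BinaryCovariant.constantCoeff_eval_binaryForm (order_shiodaInvariants J hJ)]

theorem scaledFactor_mul : ∀ J ∈ shiodaInvariants, scaledFactor J * (J.2.2 * J.1.scaleDen 8) =
    J.2.1 * J.1.scaleNum 8 * octavicScale ^ J.1.degree := by
  decide +kernel

theorem scaleDen_dvd :
    ∀ J ∈ shiodaInvariants, J.2.2 * J.1.scaleDen 8 ∣ 210 ^ 100 := by
  decide +kernel

section Field

theorem CharOK.natCast_ne_zero (hk : CharOK k) {n e : ℕ} (hn : n ∣ 210 ^ e) : (n : k) ≠ 0 := by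
  intro h
  have hdvd : ringChar k ∣ 210 ^ e := ((ringChar.spec k n).mp h).trans hn
  obtain hp | hp := CharP.char_is_prime_or_zero k (ringChar k)
  · have hmem : ringChar k ∈ Nat.primeFactors 210 :=
      Nat.mem_primeFactors.mpr ⟨hp, hp.dvd_of_dvd_pow hdvd, by decide⟩
    have h210 : Nat.primeFactors 210 = {2, 3, 5, 7} := by decide +kernel
    obtain ⟨h2, h3, h5, h7⟩ := hk
    simp [h210, h2, h3, h5, h7] at hmem
  · exact pow_ne_zero e (by decide) (zero_dvd_iff.mp (hp ▸ hdvd))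

theorem octavicInvariants_div_octavicScale (hk : CharOK k) (a : Fin 9 → k) :
    octavicInvariants (fun i => a i / octavicScale) =
      [J10 a, J9 a, J8 a, J7 a, J6 a, J5 a, J4 a, J3 a, J2 a] := by
  have hc : (octavicScale : k) ≠ 0 := hk.natCast_ne_zero (e := 10) (by decide +kernel)
  have hform : octForm a =
      C (octavicScale : k) * binaryForm (d := 8) fun i => a i / octavicScale := by
    rw [← binaryForm_mul]
    simp only [mul_div_cancel₀ _ hc]
    rfl
  have hJ : [J10 a, J9 a, J8 a, J7 a, J6 a, J5 a, J4 a, J3 a, J2 a] = shiodaInvariants.map fun J =>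
      (J.2.1 / J.2.2 : k) * constantCoeff (J.1.normalizedEval 8 (octForm a)) := by
    simp only [shiodaInvariants, List.map_cons, List.map_nil, Nat.cast_mul, Nat.cast_pow,
      Nat.cast_ofNat, Nat.cast_one, div_one]
    rfl
  rw [hJ]
  refine List.map_congr_left fun J hJ => ?_
  have hden : ((J.2.2 * J.1.scaleDen 8 : ℕ) : k) ≠ 0 := hk.natCast_ne_zero (scaleDen_dvd J hJ)
  have hfactor : (scaledFactor J : k) = _ :=
    eq_div_of_mul_eq hden (by rw [← Nat.cast_mul, scaledFactor_mul J hJ])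
  rw [BinaryCovariant.normalizedEval_eq, hform, BinaryCovariant.eval_C_mul, map_mul, map_mul,
    constantCoeff_C, constantCoeff_C, ← mul_assoc, ← mul_assoc]
  congr 1
  rw [hfactor, div_mul_div_comm, div_mul_eq_mul_div]
  push_cast
  rfl

end Field

end OctavicInvariants

section InvariantForms

section SemiInvariants

variable {K : Type*} [Field K] {d : ℕ}

instance : SetLike.GradedMonoid (semiInvariants K d) where
  one_mem := ⟨isWeightedHomogeneous_one K _, Derivation.map_one_eq_zero _⟩
  mul_mem _ _ f g hf hg := by
    refine ⟨hf.1.mul hg.1, ?_⟩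
    have hf0 : raisingDerivation K d f = 0 := hf.2
    have hg0 : raisingDerivation K d g = 0 := hg.2
    change raisingDerivation K d (f * g) = 0
    rw [Derivation.leibniz, hf0, hg0, smul_zero, smul_zero, add_zero]

theorem constantCoeff_eval_mem_semiInvariants (T : BinaryCovariant) :
    constantCoeff (T.eval (binaryForm X)) ∈ semiInvariants K d (T.degree, T.weight) := by
  refine ⟨?_, raisingDerivation_constantCoeff_eval T⟩
  simpa [constantCoeff_eq] using T.isIsobaric_eval (R := K) (d := d) 0

theorem finiteDimensional_semiInvariants (n w : ℕ) :
    FiniteDimensional K (semiInvariants K d (n, w)) :=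
  have := (coeffFormsBasis K d n w).finiteDimensional_of_finite
  Submodule.finiteDimensional_of_le (S₂ := coeffForms K d n w) inf_le_left

end SemiInvariants

variable (K : Type*) [Field K]

/-- The invariants of degree `n` of the binary octavic, i.e. the semi-invariants of weight `4n`. -/
def octavicInvariantForms (n : ℕ) : Submodule K (MvPolynomial (Fin 9) K) :=
  semiInvariants K 8 (n, (4 * n : ℕ))

instance : SetLike.GradedMonoid (octavicInvariantForms K) where
  one_mem := SetLike.GradedOne.one_mem (A := semiInvariants K 8)
  mul_mem i j f g hf hg := by
    rw [octavicInvariantForms, mul_add]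
    exact SetLike.GradedMul.mul_mem (A := semiInvariants K 8) hf hg

theorem octavicInvariants_X_mem : List.Forall₂ (fun f n => f ∈ octavicInvariantForms K n)
    (octavicInvariants X) [10, 9, 8, 7, 6, 5, 4, 3, 2] := by
  have hdeg : [10, 9, 8, 7, 6, 5, 4, 3, 2] = shiodaInvariants.map fun J => J.1.degree := by decide
  have hweight : ∀ J ∈ shiodaInvariants, J.1.weight = 4 * J.1.degree := by decide
  rw [hdeg, octavicInvariants, List.forall₂_map_left_iff, List.forall₂_map_right_iff,
    List.forall₂_same]
  intro J hJ
  rw [octavicInvariantForms, ← hweight J hJ, ← nsmul_eq_mul]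
  exact nsmul_mem (constantCoeff_eval_mem_semiInvariants J.1) _

variable {K}

theorem map_eval₂Hom_octavicInvariants_X {R S : Type*} [CommRing R] [CommRing S] (φ : R →+* S)
    (x : Fin 9 → S) :
    (octavicInvariants (X : Fin 9 → MvPolynomial (Fin 9) R)).map (eval₂Hom φ x) =
      octavicInvariants x := by
  rw [map_octavicInvariants]
  exact congrArg _ (funext fun i => eval₂Hom_X' φ x i)

theorem map_aeval_octavicInvariants_X (x : List ℤ) :
    (octavicInvariants (X : Fin 9 → MvPolynomial (Fin 9) K)).map
        (aeval (R := K) fun i : Fin 9 => ((x.getD i 0 : ℤ) : K)).toRingHom =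
      (octavicInvariantValues x).map (Int.castRingHom K) := by
  rw [← octavicInvariants_getD, map_octavicInvariants, map_octavicInvariants]
  exact congrArg _ (funext fun i => aeval_X _ i)

theorem finrank_octavicInvariantForms_add_le [CharZero K] {n : ℕ} (hn : 0 < n) :
    Module.finrank K (octavicInvariantForms K n) + (boxPartitions 9 n (4 * n - 1)).card ≤
      (boxPartitions 9 n (4 * n)).card := by
  have h := finrank_semiInvariants_add_le (K := K) (d := 8) (n := n) (w := 4 * n - 1) (by omega)
  rwa [Nat.sub_add_cancel (by omega)] at h

theorem eq_zero_of_mem_octavicInvariantForms [CharZero K] {n D : ℕ} (hn : 0 < n)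
    (hD : (boxPartitions 9 n (4 * n)).card ≤ (boxPartitions 9 n (4 * n - 1)).card + D)
    {b : Fin D → List ℕ} (hb : ∀ i, monomialWeight [10, 9, 8, 7, 6, 5, 4, 3, 2] (b i) = n)
    (x : Fin D → List ℤ)
    (hdet : (Matrix.of fun i j => monomialEval (octavicInvariantValues (x j)) (b i)).det ≠ 0)
    {f : MvPolynomial (Fin 9) K} (hf : f ∈ octavicInvariantForms K n)
    (hzero : ∀ j, aeval (fun i : Fin 9 => (((x j).getD i 0 : ℤ) : K)) f = 0) : f = 0 := by
  let pt (j : Fin D) (i : Fin 9) : K := ((x j).getD i 0 : ℤ)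
  let ev : octavicInvariantForms K n →ₗ[K] Fin D → K :=
    LinearMap.pi fun j => (aeval (pt j)).toLinearMap ∘ₗ (octavicInvariantForms K n).subtype
  have : FiniteDimensional K (octavicInvariantForms K n) := finiteDimensional_semiInvariants _ _
  have hfin : Module.finrank K (octavicInvariantForms K n) ≤ Fintype.card (Fin D) := by
    have h := finrank_octavicInvariantForms_add_le (K := K) hn
    rw [Fintype.card_fin]
    omega
  let v (i : Fin D) : octavicInvariantForms K n :=
    ⟨monomialEval (octavicInvariants X) (b i),
      hb i ▸ monomialEval_mem_graded (octavicInvariants_X_mem K) (b i)⟩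
  have hev : Matrix.of (fun i => ev (v i)) = (Int.castRingHom K).mapMatrix
      (Matrix.of fun i j => monomialEval (octavicInvariantValues (x j)) (b i)) := by
    ext i j
    change (aeval (pt j)).toRingHom (monomialEval (octavicInvariants X) (b i)) =
      Int.castRingHom K (monomialEval _ _)
    rw [map_monomialEval, map_aeval_octavicInvariants_X, map_monomialEval]
  have hinj : Function.Injective ev := by
    refine injective_of_det_ne_zero hfin ev v ?_
    rw [hev, ← RingHom.map_det]
    exact Int.cast_ne_zero.mpr hdet
  exact congrArg Subtype.val (hinj (a₁ := ⟨f, hf⟩) (a₂ := 0) (funext fun j => by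
    rw [map_zero]
    exact hzero j))

end InvariantForms

section Sampling

/-- The matrix of values of monomials, given by their exponents, at the invariants of sample
octavics, lifted from `ℤ/p` to natural numbers. -/
def sampleMatrix (p : ℕ) (basis : List (List ℕ)) (samples : List (List ℤ)) : List (List ℕ) :=
  basis.map fun e => samples.map fun x =>
    monomialEval ((octavicInvariantValues x).map fun z : ℤ => (z % p).toNat) e

theorem natCast_monomialEval_toNat_emod (p : ℕ) [NeZero p] (x : List ℤ) (e : List ℕ) :
    ((monomialEval (x.map fun z : ℤ => (z % p).toNat) e : ℕ) : ZMod p) =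
      (monomialEval x e : ℤ) := by
  have hcast (z : ℤ) : ((z % p).toNat : ZMod p) = z := by
    rw [← Int.cast_natCast, Int.toNat_of_nonneg (Int.emod_nonneg z (mod_cast NeZero.ne p)),
      ZMod.intCast_mod]
  refine (map_monomialEval (Nat.castRingHom (ZMod p)) _ e).trans
    (.trans ?_ (map_monomialEval (Int.castRingHom (ZMod p)) x e).symm)
  rw [List.map_map]
  exact congrArg (monomialEval · e) (List.map_congr_left fun z _ => hcast z)

theorem det_monomialEval_ne_zero {p D : ℕ} [Fact p.Prime] {basis : List (List ℕ)}
    {samples : List (List ℤ)} (hbasis : basis.length = D) (hsamples : samples.length = D)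
    (hrows : chioNonsingular p D (sampleMatrix p basis samples)) :
    (Matrix.of fun i j : Fin D => monomialEval (octavicInvariantValues (samples[j]))
      (basis[i])).det ≠ 0 := by
  have : NeZero p := ⟨(Fact.out : p.Prime).ne_zero⟩
  refine det_ne_zero_of_chioNonsingular (fun r hr => ?_) hrows fun r hr => ?_
  all_goals obtain ⟨e, he, rfl⟩ := List.mem_map.mp hr
  · rw [List.length_map, hsamples]
  · obtain ⟨i, hi, rfl⟩ := List.getElem_of_mem he
    refine ⟨⟨i, hbasis ▸ hi⟩, fun j => ?_⟩
    rw [List.getD_eq_getElem _ _ (by simp [hsamples]), List.getElem_map]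
    exact natCast_monomialEval_toNat_emod p _ _

theorem SparsePoly.eval_octavicInvariants_eq_zero {p n : ℕ} [Fact p.Prime] (hn : 0 < n)
    {basis : List (List ℕ)} {samples : List (List ℤ)} (hlen : samples.length = basis.length)
    (hdim : (boxPartitions 9 n (4 * n)).card ≤
      (boxPartitions 9 n (4 * n - 1)).card + basis.length)
    (hbasis : ∀ e ∈ basis, monomialWeight [10, 9, 8, 7, 6, 5, 4, 3, 2] e = n)
    (hrows : chioNonsingular p basis.length (sampleMatrix p basis samples)) {l : SparsePoly}
    (hl : ∀ t ∈ l, monomialWeight [10, 9, 8, 7, 6, 5, 4, 3, 2] t.2 = n)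
    (hzero : ∀ x ∈ samples, l.eval (octavicInvariantValues x) = 0)
    {R : Type*} [CommRing R] (x : Fin 9 → R) : l.eval (octavicInvariants x) = 0 := by
  have hrat : l.eval (octavicInvariants (X : Fin 9 → MvPolynomial (Fin 9) ℚ)) = 0 := by
    refine eq_zero_of_mem_octavicInvariantForms hn hdim (fun i => hbasis _ (basis.getElem_mem i.2))
      (fun j => samples[j]) (det_monomialEval_ne_zero rfl hlen hrows)
      (eval_mem_graded (octavicInvariants_X_mem ℚ) hl) fun j => ?_
    change (aeval _).toRingHom _ = 0
    rw [map_eval, map_aeval_octavicInvariants_X, ← map_eval, hzero, map_zero]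
    exact List.getElem_mem _
  have hzint : l.eval (octavicInvariants (X : Fin 9 → MvPolynomial (Fin 9) ℤ)) = 0 := by
    refine map_injective (Int.castRingHom ℚ) Int.cast_injective ?_
    rw [map_eval, map_octavicInvariants, map_zero, ← hrat]
    exact congrArg (fun x => l.eval (octavicInvariants x)) (funext fun i => map_X _ i)
  rw [← map_eval₂Hom_octavicInvariants_X (Int.castRingHom R) x, ← map_eval, hzint, map_zero]

/-- The exponent lists of the monomials of weight `n` in variables of weights `w`. -/
def exponentsOfWeight : List ℕ → ℕ → List (List ℕ)
  | [], n => if n = 0 then [[]] else []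
  | w :: ws, n => (List.range (n / w + 1)).flatMap fun e =>
      (exponentsOfWeight ws (n - e * w)).map (e :: ·)

/-- Exponents of monomials in `J₁₀, …, J₂` which, for `16 ≤ n ≤ 19`, turn out to form a basis of
the invariants of degree `n`: those whose part in `J₁₀, J₉, J₈` is `1, J₈, J₉, J₁₀` or `J₉²`. -/
def invariantBasisExponents (n : ℕ) : List (List ℕ) :=
  (exponentsOfWeight [10, 9, 8, 7, 6, 5, 4, 3, 2] n).filter fun e =>
    e.take 3 ∈ [[0, 0, 0], [0, 0, 1], [0, 1, 0], [1, 0, 0], [0, 2, 0]]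

/-- Octavics with small pseudorandom coefficients, which turn out to be in general position with
respect to `invariantBasisExponents`. -/
def sampleOctavics (D : ℕ) : List (List ℤ) :=
  (List.range D).map fun s => (List.range 9).map fun i =>
    (((s + 3) ^ (i + 1) % 97 % 5 : ℕ) : ℤ) - 2

theorem card_boxPartitions_le_add_length_invariantBasisExponents {n : ℕ}
    (hn : n ∈ Finset.Icc 16 19) : (boxPartitions 9 n (4 * n)).card ≤
      (boxPartitions 9 n (4 * n - 1)).card + (invariantBasisExponents n).length := by
  rw [← getD_boxPartitionTable le_rfl, ← getD_boxPartitionTable le_rfl]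
  revert n
  decide +kernel

theorem monomialWeight_invariantBasisExponents {n : ℕ} (hn : n ∈ Finset.Icc 16 19) :
    ∀ e ∈ invariantBasisExponents n,
      monomialWeight [10, 9, 8, 7, 6, 5, 4, 3, 2] e = n := by
  revert n
  decide +kernel

/-- `10007` is an arbitrary prime not dividing the relevant determinants. -/
theorem chioNonsingular_sampleMatrix {n : ℕ} (hn : n ∈ Finset.Icc 16 19) :
    chioNonsingular 10007 (invariantBasisExponents n).length (sampleMatrix 10007
      (invariantBasisExponents n) (sampleOctavics (invariantBasisExponents n).length)) := by
  revert n
  decide +kernel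

end Sampling

section Syzygies

/-- An affine form `coeff₀ + coeff₉ y + coeff₁₀ z`, to be evaluated at `y = J₉`, `z = J₁₀`. -/
structure AffineForm (R : Type*) where
  coeff₀ : R
  coeff₉ : R
  coeff₁₀ : R

/-- A relation `lead + coeff₀ + J₉ coeff₉ + J₁₀ coeff₁₀ = 0` between the invariants of an octavic.
Here `lead` is a polynomial in `J₁₀, J₉`, and the coefficients are polynomials in `J₈, …, J₂`. -/
structure OctavicSyzygy extends AffineForm SparsePoly where
  lead : SparsePoly

/-- The left-hand side of the relation as a polynomial in `J₁₀, …, J₂`. -/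
def OctavicSyzygy.toSparsePoly (s : OctavicSyzygy) : SparsePoly :=
  s.lead ++ (s.coeff₀.consExponent 0).consExponent 0 ++
    (s.coeff₉.consExponent 1).consExponent 0 ++ (s.coeff₁₀.consExponent 0).consExponent 1

theorem OctavicSyzygy.eval_toSparsePoly {R : Type*} [CommRing R] (s : OctavicSyzygy)
    (y z : R) (x : List R) :
    s.toSparsePoly.eval (y :: z :: x) = s.lead.eval (y :: z :: x) + s.coeff₀.eval x +
      z * s.coeff₉.eval x + y * s.coeff₁₀.eval x := by
  simp only [OctavicSyzygy.toSparsePoly, SparsePoly.eval_append, SparsePoly.eval_consExponent,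
    pow_zero, pow_one, one_mul]

/-- The syzygy of degree 16. -/
def syzygy16 : OctavicSyzygy where
  lead := []
  coeff₀ :=
    [(15059072, [0, 0, 0, 0, 2, 0, 4]), (-592704, [0, 0, 0, 0, 2, 2, 1]),
      (-3601500, [0, 0, 0, 0, 3, 0, 2]), (-151875, [0, 0, 0, 0, 4, 0, 0]),
      (1190700, [0, 0, 0, 1, 2, 1, 0]), (-9988160, [0, 0, 1, 0, 1, 0, 3]),
      (393120, [0, 0, 1, 0, 1, 2, 0]), (2327500, [0, 0, 1, 0, 2, 0, 1]),
      (-11907000, [0, 0, 1, 2, 0, 0, 0]), (192500, [0, 0, 2, 0, 1, 0, 0]),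
      (17860500, [0, 1, 0, 1, 1, 0, 0]), (-2381400, [0, 1, 1, 0, 0, 1, 0]),
      (-16669800, [0, 2, 0, 0, 0, 0, 1]), (-263250, [1, 0, 0, 0, 2, 0, 0]),
      (396900, [1, 0, 1, 0, 0, 0, 1]), (18225, [2, 0, 0, 0, 0, 0, 0])]
  coeff₉ :=
    [(1190700, [0, 0, 0, 0, 1, 1, 0]), (16669800, [0, 0, 0, 1, 0, 0, 1]),
      (-5953500, [0, 1, 0, 0, 0, 0, 0])]
  coeff₁₀ :=
    [(1382976, [0, 0, 0, 0, 0, 0, 3]), (-54432, [0, 0, 0, 0, 0, 2, 0]),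
      (-529200, [0, 0, 0, 0, 1, 0, 1]), (126000, [0, 0, 1, 0, 0, 0, 0])]

/-- The syzygy of degree 17. -/
def syzygy17 : OctavicSyzygy where
  lead := []
  coeff₀ :=
    [(-153664, [0, 0, 0, 0, 2, 1, 3]), (6048, [0, 0, 0, 0, 2, 3, 0]),
      (36750, [0, 0, 0, 0, 3, 1, 1]), (-308700, [0, 0, 0, 1, 2, 0, 2]),
      (625, [0, 0, 1, 0, 2, 1, 0]), (-1536640, [0, 0, 1, 1, 0, 0, 3]),
      (60480, [0, 0, 1, 1, 0, 2, 0]), (162750, [0, 0, 1, 1, 1, 0, 1]),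
      (17500, [0, 0, 2, 1, 0, 0, 0]), (2304960, [0, 1, 0, 0, 1, 0, 3]),
      (-90720, [0, 1, 0, 0, 1, 2, 0]), (-141750, [0, 1, 0, 0, 2, 0, 1]),
      (617400, [0, 1, 1, 0, 0, 0, 2]), (-31875, [0, 1, 1, 0, 1, 0, 0]),
      (340200, [0, 2, 0, 0, 0, 1, 0]), (-4050, [1, 0, 1, 0, 0, 1, 0]),
      (-56700, [1, 1, 0, 0, 0, 0, 1])]
  coeff₉ :=
    [(-2151296, [0, 0, 0, 0, 0, 0, 4]), (84672, [0, 0, 0, 0, 0, 2, 1]),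
      (205800, [0, 0, 0, 0, 1, 0, 2]), (11250, [0, 0, 0, 0, 2, 0, 0]),
      (-340200, [0, 0, 0, 1, 0, 1, 0]), (-196000, [0, 0, 1, 0, 0, 0, 1]),
      (20250, [1, 0, 0, 0, 0, 0, 0])]
  coeff₁₀ :=
    [(2025, [0, 0, 0, 0, 1, 1, 0]), (28350, [0, 0, 0, 1, 0, 0, 1]),
      (-10125, [0, 1, 0, 0, 0, 0, 0])]

/-- The syzygy of degree 18. -/
def syzygy18 : OctavicSyzygy where
  lead := [(-2679075000, [0, 2])]
  coeff₀ :=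
    [(-9487215360, [0, 0, 0, 0, 2, 0, 5]), (373403520, [0, 0, 0, 0, 2, 2, 2]),
      (6644767500, [0, 0, 0, 0, 3, 0, 3]), (-172226250, [0, 0, 0, 0, 3, 2, 0]),
      (-1004653125, [0, 0, 0, 0, 4, 0, 1]), (-750141000, [0, 0, 0, 1, 2, 1, 1]),
      (47225249792, [0, 0, 1, 0, 0, 0, 6]), (-3717439488, [0, 0, 1, 0, 0, 2, 3]),
      (73156608, [0, 0, 1, 0, 0, 4, 0]), (-29365190400, [0, 0, 1, 0, 1, 0, 4]),
      (1155772800, [0, 0, 1, 0, 1, 2, 1]), (4360387500, [0, 0, 1, 0, 2, 0, 2]),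
      (-113906250, [0, 0, 1, 0, 3, 0, 0]), (-1033357500, [0, 0, 1, 1, 1, 1, 0]),
      (-92438500, [0, 0, 2, 0, 0, 0, 3]), (3638250, [0, 0, 2, 0, 0, 2, 0]),
      (7809375, [0, 0, 2, 0, 1, 0, 1]), (95703125, [0, 0, 3, 0, 0, 0, 0]),
      (2066715000, [0, 1, 0, 0, 2, 1, 0]), (1500282000, [0, 1, 1, 0, 0, 1, 1]),
      (-5358150000, [0, 1, 1, 1, 0, 0, 0]), (21003948000, [0, 2, 0, 0, 0, 0, 2]),
      (933508800, [1, 0, 0, 0, 1, 0, 3]), (-36741600, [1, 0, 0, 0, 1, 2, 0]),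
      (-401861250, [1, 0, 0, 0, 2, 0, 1]), (-250047000, [1, 0, 1, 0, 0, 0, 2]),
      (119221875, [1, 0, 1, 0, 1, 0, 0]), (-137781000, [1, 1, 0, 0, 0, 1, 0])]
  coeff₉ :=
    [(-5227649280, [0, 0, 0, 0, 0, 1, 3]), (205752960, [0, 0, 0, 0, 0, 3, 0]),
      (500094000, [0, 0, 0, 0, 1, 1, 1]), (-21003948000, [0, 0, 0, 1, 0, 0, 2]),
      (8037225000, [0, 0, 0, 1, 1, 0, 0]), (-1012095000, [0, 0, 1, 0, 0, 1, 0])]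
  coeff₁₀ :=
    [(125023500, [0, 0, 0, 0, 1, 0, 2]), (-61509375, [0, 0, 0, 0, 2, 0, 0]),
      (68890500, [0, 0, 0, 1, 0, 1, 0]), (89302500, [0, 0, 1, 0, 0, 0, 1]),
      (4100625, [1, 0, 0, 0, 0, 0, 0])]

/-- The syzygy of degree 19. -/
def syzygy19 : OctavicSyzygy where
  lead := [(1620000, [1, 1])]
  coeff₀ :=
    [(17210368, [0, 0, 0, 0, 2, 1, 4]), (-677376, [0, 0, 0, 0, 2, 3, 1]),
      (-4116000, [0, 0, 0, 0, 3, 1, 2]), (-151875, [0, 0, 0, 0, 4, 1, 0]),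
      (-34574400, [0, 0, 0, 1, 2, 0, 3]), (2721600, [0, 0, 0, 1, 2, 2, 0]),
      (31893750, [0, 0, 0, 1, 3, 0, 1]), (24586240, [0, 0, 1, 0, 1, 1, 3]),
      (-967680, [0, 0, 1, 0, 1, 3, 0]), (-5950000, [0, 0, 1, 0, 2, 1, 1]),
      (516311040, [0, 0, 1, 1, 0, 0, 4]), (-20321280, [0, 0, 1, 1, 0, 2, 1]),
      (-51156000, [0, 0, 1, 1, 1, 0, 2]), (3037500, [0, 0, 1, 1, 2, 0, 0]),
      (27216000, [0, 0, 1, 2, 0, 1, 0]), (51875, [0, 0, 2, 0, 1, 1, 0]),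
      (1286250, [0, 0, 2, 1, 0, 0, 1]), (-258155520, [0, 1, 0, 0, 1, 0, 4]),
      (10160640, [0, 1, 0, 0, 1, 2, 1]), (-82908000, [0, 1, 0, 0, 2, 0, 2]),
      (-2278125, [0, 1, 0, 0, 3, 0, 0]), (-40824000, [0, 1, 0, 1, 1, 1, 0]),
      (-192080000, [0, 1, 1, 0, 0, 0, 3]), (4838400, [0, 1, 1, 0, 0, 2, 0]),
      (-7035000, [0, 1, 1, 0, 1, 0, 1]), (-2734375, [0, 1, 2, 0, 0, 0, 0]),
      (-38102400, [0, 2, 0, 0, 0, 1, 1]), (153090000, [0, 2, 0, 1, 0, 0, 0]),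
      (648000, [1, 0, 0, 0, 2, 1, 0]), (6804000, [1, 0, 0, 1, 1, 0, 1]),
      (453600, [1, 0, 1, 0, 0, 1, 1]), (-202500, [1, 0, 1, 1, 0, 0, 0]),
      (6350400, [1, 1, 0, 0, 0, 0, 2]), (-3037500, [1, 1, 0, 0, 1, 0, 0])]
  coeff₉ :=
    [(240945152, [0, 0, 0, 0, 0, 0, 5]), (-9483264, [0, 0, 0, 0, 0, 2, 2]),
      (46099200, [0, 0, 0, 0, 1, 0, 3]), (-2721600, [0, 0, 0, 0, 1, 2, 0]),
      (2205000, [0, 0, 0, 0, 2, 0, 1]), (38102400, [0, 0, 0, 1, 0, 1, 1]),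
      (-153090000, [0, 0, 0, 2, 0, 0, 0]), (71344000, [0, 0, 1, 0, 0, 0, 2]),
      (2475000, [0, 0, 1, 0, 1, 0, 0]), (13608000, [0, 1, 0, 0, 0, 1, 0])]
  coeff₁₀ :=
    [(-226800, [0, 0, 0, 0, 1, 1, 1]), (-3175200, [0, 0, 0, 1, 0, 0, 2]),
      (-324000, [0, 0, 1, 0, 0, 1, 0]), (-3402000, [0, 1, 0, 0, 0, 0, 1])]

/-- Relations between the invariants of an octavic together with their degrees. -/
def octavicSyzygies : List (ℕ × OctavicSyzygy) :=
  [(16, syzygy16), (17, syzygy17), (18, syzygy18), (19, syzygy19)]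

theorem octavicSyzygies_holds_on_sampleOctavics : ∀ s ∈ octavicSyzygies,
    s.1 ∈ Finset.Icc 16 19 ∧
    (∀ t ∈ s.2.toSparsePoly, monomialWeight [10, 9, 8, 7, 6, 5, 4, 3, 2] t.2 = s.1) ∧
    ∀ x ∈ sampleOctavics (invariantBasisExponents s.1).length,
      (NestedPoly.ofTerms 9 s.2.toSparsePoly).eval
        (fun i => (octavicInvariantValues x).getD i 0) = 0 := by
  decide +kernel

theorem eval_toSparsePoly_octavicInvariants {s : ℕ × OctavicSyzygy} (hs : s ∈ octavicSyzygies)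
    {R : Type*} [CommRing R] (x : Fin 9 → R) :
    s.2.toSparsePoly.eval (octavicInvariants x) = 0 := by
  obtain ⟨hn, hweight, hzero⟩ := octavicSyzygies_holds_on_sampleOctavics s hs
  have : Fact (Nat.Prime 10007) := ⟨by norm_num⟩
  have hpos : 0 < s.1 := (Finset.mem_Icc.mp hn).1.trans_lt' (by norm_num)
  have hofFn (x : List ℤ) : List.ofFn (fun i : Fin 9 => (octavicInvariantValues x).getD i 0) =
      octavicInvariantValues x := rfl
  exact SparsePoly.eval_octavicInvariants_eq_zero hpos (by simp [sampleOctavics])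
    (card_boxPartitions_le_add_length_invariantBasisExponents hn)
    (monomialWeight_invariantBasisExponents hn) (chioNonsingular_sampleMatrix hn) hweight
    (fun x hx => by rw [← hofFn, ← NestedPoly.eval_ofTerms, hzero x hx]) x

end Syzygies

section Elimination

variable {R S : Type*}

namespace AffineForm

/-- The form whose coefficients are the images under `f`. -/
def map (f : R → S) (a : AffineForm R) : AffineForm S :=
  ⟨f a.coeff₀, f a.coeff₉, f a.coeff₁₀⟩

variable [Add R] [Mul R] [Neg R]

/-- Determinant of the coefficients of three affine forms. -/
def det (a b c : AffineForm R) : R :=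
  a.coeff₀ * (b.coeff₉ * c.coeff₁₀ + -(b.coeff₁₀ * c.coeff₉)) +
    a.coeff₉ * (b.coeff₁₀ * c.coeff₀ + -(b.coeff₀ * c.coeff₁₀)) +
    a.coeff₁₀ * (b.coeff₀ * c.coeff₉ + -(b.coeff₉ * c.coeff₀))

/-- The combination of `b`, `-v y² + c` and `u y z + d` in which the quadratic terms cancel. -/
def cancelLead (u v : R) (b c d : AffineForm R) : AffineForm R where
  coeff₀ := v * (b.coeff₁₀ * d.coeff₀) + -(u * (b.coeff₉ * c.coeff₀))
  coeff₉ := v * (b.coeff₁₀ * d.coeff₉) + -(u * (b.coeff₉ * c.coeff₉ + v * b.coeff₀))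
  coeff₁₀ := v * (b.coeff₁₀ * d.coeff₁₀) + -(u * (b.coeff₉ * c.coeff₁₀))

theorem map_det_cancelLead [Add S] [Mul S] [Neg S] {f : R → S}
    (hadd : ∀ r s, f (r + s) = f r + f s) (hmul : ∀ r s, f (r * s) = f r * f s)
    (hneg : ∀ r, f (-r) = -f r) (u v : R) (a b c d : AffineForm R) :
    f (det a b (cancelLead u v b c d)) =
      det (a.map f) (b.map f) (cancelLead (f u) (f v) (b.map f) (c.map f) (d.map f)) := by
  simp only [det, cancelLead, map, hadd, hmul, hneg]

end AffineForm

/-- The value of an affine form. -/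
def AffineForm.eval [CommRing R] (y z : R) (a : AffineForm R) : R :=
  a.coeff₀ + y * a.coeff₉ + z * a.coeff₁₀

theorem AffineForm.det_cancelLead_eq_zero [CommRing R] {u v y z : R} {a b c d : AffineForm R}
    (ha : a.eval y z = 0) (hb : b.eval y z = 0) (hc : -v * y ^ 2 + c.eval y z = 0)
    (hd : u * (y * z) + d.eval y z = 0) : det a b (cancelLead u v b c d) = 0 := by
  have he : (cancelLead u v b c d).eval y z = 0 := by
    simp only [eval, cancelLead] at *
    linear_combination -u * v * y * hb - u * b.coeff₉ * hc + v * b.coeff₁₀ * hd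
  generalize cancelLead u v b c d = e at *
  simp only [eval, det] at *
  linear_combination (b.coeff₉ * e.coeff₁₀ - b.coeff₁₀ * e.coeff₉) * ha -
    (a.coeff₉ * e.coeff₁₀ - a.coeff₁₀ * e.coeff₉) * hb +
    (a.coeff₉ * b.coeff₁₀ - a.coeff₁₀ * b.coeff₉) * he

end Elimination

section Quintic

/-- The affine part of a syzygy with coefficients in nested form. -/
def OctavicSyzygy.nestedForm (s : OctavicSyzygy) : AffineForm (NestedPoly 7) :=
  s.toAffineForm.map (NestedPoly.ofTerms 7)

/-- The result of eliminating `J₉` and `J₁₀` from the four syzygies, a polynomial in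
`J₈, …, J₂`. -/
def octavicEliminant : NestedPoly 7 :=
  syzygy16.nestedForm.det syzygy17.nestedForm <|
    .cancelLead (1620000 : ℤ) (2679075000 : ℤ) syzygy17.nestedForm syzygy18.nestedForm
      syzygy19.nestedForm

/-- The content of the coefficient of `J₈ ^ j` in `octavicEliminant`, up to the common factor
`-14580000`. -/
def quinticContent (j : ℕ) : ℤ :=
  [1, 2 ^ 2 * 3 ^ 4 * 5 ^ 2, 2 * 3 ^ 8 * 5 ^ 6, 2 ^ 3 * 3 ^ 12 * 5 ^ 6, 2 ^ 2 * 3 ^ 16 * 5 ^ 9,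
    2 ^ 2 * 3 ^ 20 * 5 ^ 12].getD j 1

/-- The coefficient of `quinticContent j * J₈ ^ j` in the quintic relation, as a polynomial in
`J₇, …, J₂`. -/
def quinticTerms (j : ℕ) : SparsePoly :=
  (octavicEliminant.coeff j).toTerms.map fun t => (t.1 / (-14580000 * quinticContent j), t.2)

theorem octavicEliminant_spec :
    List.length (α := NestedPoly 6) octavicEliminant = 6 ∧
    (∀ j < 6, ∀ t ∈ (octavicEliminant.coeff j).toTerms, -14580000 * quinticContent j ∣ t.1 ∧
      monomialWeight [7, 6, 5, 4, 3, 2] t.2 = 40 - 8 * j) ∧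
    quinticTerms 4 = [(-2151296, [0, 0, 0, 0, 0, 4]), (84672, [0, 0, 0, 0, 2, 1]),
      (514500, [0, 0, 0, 1, 0, 2]), (-286875, [0, 0, 0, 2, 0, 0]),
      (-170100, [0, 0, 1, 0, 1, 0]), (245000, [0, 1, 0, 0, 0, 1])] ∧
    quinticTerms 5 = [(1, [0, 0, 0, 0, 0, 0])] := by
  decide +kernel

/-- The coefficient of `quinticContent j * J₈ ^ j` in the quintic relation. -/
def quinticPoly (j : ℕ) : MvPolynomial (Fin 6) ℤ :=
  (quinticTerms j).eval (List.ofFn fun i : Fin 6 => X i.rev)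

theorem quinticPoly_four : quinticPoly 4 =
    -(2 ^ 7 * 7 ^ 5) * X 0 ^ 4 + 2 ^ 2 * 3 * 5 ^ 3 * 7 ^ 3 * X 0 ^ 2 * X 2 +
      2 ^ 6 * 3 ^ 3 * 7 ^ 2 * X 0 * X 1 ^ 2 + 2 ^ 3 * 5 ^ 4 * 7 ^ 2 * X 0 * X 4 -
      2 ^ 2 * 3 ^ 5 * 5 ^ 2 * 7 * X 1 * X 3 - 3 ^ 3 * 5 ^ 4 * 17 * X 2 ^ 2 := by
  rw [quinticPoly, octavicEliminant_spec.2.2.1]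
  simp only [SparsePoly.eval, List.map_cons, List.map_nil, List.sum_cons, List.sum_nil,
    List.ofFn_succ, List.ofFn_zero, monomialEval_cons, nil_monomialEval, pow_zero, one_mul, mul_one]
  push_cast
  ring

theorem quinticPoly_five : quinticPoly 5 = 1 := by
  rw [quinticPoly, octavicEliminant_spec.2.2.2]
  simp [SparsePoly.eval, monomialEval_cons, nil_monomialEval, List.ofFn_succ]

theorem isWeightedHomogeneous_quinticPoly {j : ℕ} (hj : j < 6) :
    (quinticPoly j).IsWeightedHomogeneous (fun i : Fin 6 => (i : ℕ) + 2) (40 - 8 * j) := by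
  rw [← mem_weightedHomogeneousSubmodule]
  have := weightedGradedAlgebra ℤ fun i : Fin 6 => (i : ℕ) + 2
  refine SparsePoly.eval_mem_graded (w := [7, 6, 5, 4, 3, 2]) ?_ ?_
  · simp only [List.ofFn_succ, List.ofFn_zero]
    repeat' constructor
    all_goals exact isWeightedHomogeneous_X _ _ _
  · exact List.forall_mem_map.mpr fun t ht => (octavicEliminant_spec.2.1 j hj t ht).2

theorem eval_coeff_octavicEliminant {R : Type*} [CommRing R] (x : Fin 6 → R) {j : ℕ} (hj : j < 6) :
    (octavicEliminant.coeff j).eval x =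
      ((-14580000 * quinticContent j : ℤ) : R) * (quinticTerms j).eval (List.ofFn x) := by
  rw [← NestedPoly.eval_toTerms, quinticTerms, SparsePoly.eval_map_ediv]
  exact fun t ht => (octavicEliminant_spec.2.1 j hj t ht).1

theorem eval_octavicEliminant (hk : CharOK k) (a : Fin 9 → k) :
    octavicEliminant.eval (fun i : Fin 7 => Jinv (i.rev + 2) a) = 0 := by
  set x : Fin 7 → k := fun i => Jinv (i.rev + 2) a
  have hsyz {n : ℕ} {s : OctavicSyzygy} (hs : (n, s) ∈ octavicSyzygies) :
      s.lead.eval (J10 a :: J9 a :: List.ofFn x) +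
        (s.nestedForm.map (NestedPoly.eval x)).eval (J9 a) (J10 a) = 0 := by
    have h := eval_toSparsePoly_octavicInvariants hs fun i => a i / octavicScale
    rw [octavicInvariants_div_octavicScale hk, OctavicSyzygy.eval_toSparsePoly] at h
    simp only [OctavicSyzygy.nestedForm, AffineForm.map, AffineForm.eval, NestedPoly.eval_ofTerms]
    exact .trans (by rw [add_assoc, add_assoc, add_assoc]; rfl) h
  have hlead (c : ℤ) (m n : ℕ) : SparsePoly.eval (J10 a :: J9 a :: List.ofFn x) [(c, [m, n])] =
      c * (J10 a ^ m * J9 a ^ n) := by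
    simp only [SparsePoly.eval, monomialEval_cons, monomialEval_nil, List.map_cons, List.map_nil,
      List.sum_cons, List.sum_nil, add_zero, mul_one]
  rw [octavicEliminant, AffineForm.map_det_cancelLead (NestedPoly.eval_add x)
    (NestedPoly.eval_mul x) (NestedPoly.eval_neg x), NestedPoly.eval_intCast,
    NestedPoly.eval_intCast]
  refine AffineForm.det_cancelLead_eq_zero (y := J9 a) (z := J10 a) ?_ ?_ ?_ ?_
  · exact (zero_add _).symm.trans (hsyz (n := 16) (s := syzygy16) (by simp [octavicSyzygies]))
  · exact (zero_add _).symm.trans (hsyz (n := 17) (s := syzygy17) (by simp [octavicSyzygies]))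
  · convert hsyz (n := 18) (s := syzygy18) (by simp [octavicSyzygies]) using 2
    exact .trans (by simp) (hlead _ 0 2).symm
  · convert hsyz (n := 19) (s := syzygy19) (by simp [octavicSyzygies]) using 2
    exact .trans (by simp [mul_comm]) (hlead _ 1 1).symm

theorem eval₂_quinticPoly (a : Fin 9 → k) (j : ℕ) :
    eval₂ (Int.castRingHom k) (fun i : Fin 6 => Jinv ((i : ℕ) + 2) a) (quinticPoly j) =
      (quinticTerms j).eval (List.ofFn fun i : Fin 6 => Jinv (i.rev + 2) a) := by
  rw [← coe_eval₂Hom, quinticPoly, SparsePoly.map_eval, List.map_ofFn]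
  simp only [Function.comp_def, eval₂Hom_X']

theorem sum_quinticPoly (hk : CharOK k) (a : Fin 9 → k) :
    ∑ j ∈ Finset.range 6, (quinticContent j : k) *
      eval₂ (Int.castRingHom k) (fun i : Fin 6 => Jinv ((i : ℕ) + 2) a) (quinticPoly j) *
        J8 a ^ j = 0 := by
  have hc : ((14580000 : ℕ) : k) ≠ 0 := hk.natCast_ne_zero (e := 6) (by decide)
  refine (mul_eq_zero.mp ?_).resolve_left (neg_ne_zero.mpr hc)
  have h := eval_octavicEliminant hk a
  rw [NestedPoly.eval_eq_sum_coeff, octavicEliminant_spec.1] at h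
  rw [Finset.mul_sum, ← h]
  refine Finset.sum_congr rfl fun j hj => ?_
  rw [eval_coeff_octavicEliminant _ (Finset.mem_range.mp hj), eval₂_quinticPoly, Int.cast_mul]
  have htail : (Fin.tail fun i : Fin 7 => Jinv (i.rev + 2) a) =
      fun i : Fin 6 => Jinv (i.rev + 2) a :=
    _root_.funext fun i => by rw [Fin.tail, Fin.rev_succ, Fin.val_castSucc]
  change -_ * (_ * _ * Jinv 8 a ^ j) = _ * Jinv 8 a ^ j
  rw [htail]
  push_cast
  ring

end Quintic

/-- **The degree-5 relation for `J_8`.** There are integer polynomials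
`I_8, I_16, I_24, I_32, I_40` in `J_2, ..., J_7` (variables `X 0, ..., X 5` of weights
`2, ..., 7`), weighted-homogeneous of degrees `8, 16, 24, 32, 40` respectively, such that
for every field `k` of characteristic ∉ {2,3,5,7} and every binary octavic over `k` the
stated quintic relation for `J_8` holds; moreover `I_8` is the explicitly given polynomial. -/
theorem J8_quintic_relation :
    ∃ P8 P16 P24 P32 P40 : MvPolynomial (Fin 6) ℤ,
      P8.IsWeightedHomogeneous (fun j : Fin 6 => (j : ℕ) + 2) 8 ∧
      P16.IsWeightedHomogeneous (fun j : Fin 6 => (j : ℕ) + 2) 16 ∧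
      P24.IsWeightedHomogeneous (fun j : Fin 6 => (j : ℕ) + 2) 24 ∧
      P32.IsWeightedHomogeneous (fun j : Fin 6 => (j : ℕ) + 2) 32 ∧
      P40.IsWeightedHomogeneous (fun j : Fin 6 => (j : ℕ) + 2) 40 ∧
      P8 = -(2 ^ 7 * 7 ^ 5 : MvPolynomial (Fin 6) ℤ) * X 0 ^ 4
            + 2 ^ 2 * 3 * 5 ^ 3 * 7 ^ 3 * X 0 ^ 2 * X 2
            + 2 ^ 6 * 3 ^ 3 * 7 ^ 2 * X 0 * X 1 ^ 2
            + 2 ^ 3 * 5 ^ 4 * 7 ^ 2 * X 0 * X 4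
            - 2 ^ 2 * 3 ^ 5 * 5 ^ 2 * 7 * X 1 * X 3
            - 3 ^ 3 * 5 ^ 4 * 17 * X 2 ^ 2 ∧
      ∀ (k : Type u) (_ : Field k), CharOK k → ∀ a : Fin 9 → k,
        (2 ^ 2 * 3 ^ 20 * 5 ^ 12 : k) * J8 a ^ 5
          + (2 ^ 2 * 3 ^ 16 * 5 ^ 9 : k) *
              eval₂ (Int.castRingHom k) (fun j : Fin 6 => Jinv ((j : ℕ) + 2) a) P8 * J8 a ^ 4
          + (2 ^ 3 * 3 ^ 12 * 5 ^ 6 : k) *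
              eval₂ (Int.castRingHom k) (fun j : Fin 6 => Jinv ((j : ℕ) + 2) a) P16 * J8 a ^ 3
          + (2 * 3 ^ 8 * 5 ^ 6 : k) *
              eval₂ (Int.castRingHom k) (fun j : Fin 6 => Jinv ((j : ℕ) + 2) a) P24 * J8 a ^ 2
          + (2 ^ 2 * 3 ^ 4 * 5 ^ 2 : k) *
              eval₂ (Int.castRingHom k) (fun j : Fin 6 => Jinv ((j : ℕ) + 2) a) P32 * J8 a
          + eval₂ (Int.castRingHom k) (fun j : Fin 6 => Jinv ((j : ℕ) + 2) a) P40 = 0 := by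
  refine ⟨quinticPoly 4, quinticPoly 3, quinticPoly 2, quinticPoly 1, quinticPoly 0,
    isWeightedHomogeneous_quinticPoly (by decide), isWeightedHomogeneous_quinticPoly (by decide),
    isWeightedHomogeneous_quinticPoly (by decide), isWeightedHomogeneous_quinticPoly (by decide),
    isWeightedHomogeneous_quinticPoly (by decide), quinticPoly_four, fun k _ hk a => ?_⟩
  have h := sum_quinticPoly hk a
  simp only [Finset.sum_range_succ, Finset.sum_range_zero, quinticPoly_five, eval₂_one,
    quinticContent, List.getD_cons_zero, List.getD_cons_succ] at h
  push_cast at h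
  linear_combination h

end
end

section
/- Let f be a binary octavic over a field k with char k ∉ {2,3,5,7}. If J_4(f) = J_5(f) = J_6(f) = J_7(f) = 0, then J_8(f) · ( −10125·J_8(f) + 1075648·J_2(f)^4 − 42336·J_3(f)^2·J_2(f) ) = 0. -/
noncomputable section

open MvPolynomial


variable {k : Type*} [Field k]

/-! `J_4` and `J_6` are multiples of the two invariants of the quartic `κ`, so their vanishing
means that `κ = ℓ³m` for linear forms `ℓ`, `m`. If `ℓ` and `m` are proportional, the Hessian `h` of
`κ` is zero and hence `J_8 = 0`. Otherwise a substitution of determinant one makes `κ` a nonzero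
multiple of `X³Y`, so that `h` is a multiple of `X⁴`. In binomial coordinates `α` of the octavic,
`J_5 = J_7 = 0` then says `α₁ = α₂ = 0`, and comparing coefficients of `κ` expresses `J_2`,
`α₄J_3` and `α₄²J_8` through `P = α₃α₅` and `Q = α₄²` (unless `α₀α₅ = 0`, where `J_8 = 0`).
With `U = 2Q - 3P` these are multiples of `U`, `U(4Q - 3P)` and `P²U³`, and the relation
becomes `8QU - (4Q - 3P)² = -9P²`. -/

section BinaryForms

variable {R : Type*} [CommRing R]

lemma pderiv_aeval {σ τ : Type*} [Fintype σ] (φ : σ → MvPolynomial τ R) (j : τ)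
    (p : MvPolynomial σ R) :
    pderiv j (aeval φ p) = ∑ i, pderiv j (φ i) * aeval φ (pderiv i p) := by
  classical
  induction p using MvPolynomial.induction_on with
  | C a => simp [algebraMap_eq]
  | add p q hp hq => simp only [map_add, hp, hq, mul_add, Finset.sum_add_distrib]
  | mul_X p i hp =>
    simp only [map_mul, aeval_X, pderiv_mul, hp, pderiv_X, map_add, mul_add,
      Finset.sum_add_distrib, Finset.sum_mul, ← mul_assoc, Pi.single_apply, apply_ite (aeval φ),
      map_zero, mul_ite, mul_one, mul_zero, Finset.sum_ite_eq, Finset.mem_univ, if_true]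
    rw [mul_comm (aeval φ p)]

lemma pderiv_comm {σ : Type*} (i j : σ) (p : MvPolynomial σ R) :
    pderiv i (pderiv j p) = pderiv j (pderiv i p) := by
  classical
  induction p using MvPolynomial.induction_on with
  | C a => simp
  | add p q hp hq => simp only [map_add, hp, hq]
  | mul_X p l hp =>
    simp only [pderiv_mul, map_add, hp, pderiv_X, Pi.single_apply]
    split_ifs <;> simp [add_right_comm]

/-- The `r`-th power of Cayley's Ω-process `∂/∂X ⊗ ∂/∂Y - ∂/∂Y ⊗ ∂/∂X` applied to a pair of forms,
followed by multiplication. It is the transvectant without its numerical factor, written so that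
`r` can be handled by induction. -/
def cayleyOmega :
    ℕ → MvPolynomial (Fin 2) R →ₗ[R] MvPolynomial (Fin 2) R →ₗ[R] MvPolynomial (Fin 2) R
  | 0 => LinearMap.mul R _
  | r + 1 => (cayleyOmega r).compl₁₂ (pderiv 0).toLinearMap (pderiv 1).toLinearMap -
      (cayleyOmega r).compl₁₂ (pderiv 1).toLinearMap (pderiv 0).toLinearMap

lemma cayleyOmega_zero (f g : MvPolynomial (Fin 2) R) : cayleyOmega 0 f g = f * g := rfl

lemma cayleyOmega_succ (r : ℕ) (f g : MvPolynomial (Fin 2) R) :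
    cayleyOmega (r + 1) f g =
      cayleyOmega r (pderiv 0 f) (pderiv 1 g) - cayleyOmega r (pderiv 1 f) (pderiv 0 g) := rfl

lemma cayleyOmega_eq_sum (r : ℕ) (f g : MvPolynomial (Fin 2) R) :
    cayleyOmega r f g = ∑ j ∈ Finset.range (r + 1), (r.choose j : MvPolynomial (Fin 2) R) *
      ((-1) ^ j * (pderiv 0)^[r - j] ((pderiv 1)^[j] f) *
        (pderiv 0)^[j] ((pderiv 1)^[r - j] g)) := by
  induction r generalizing f g with
  | zero => simp [cayleyOmega_zero]
  | succ r ih =>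
    have comm : Function.Commute (pderiv (R := R) (0 : Fin 2)) (pderiv 1) := pderiv_comm 0 1
    rw [cayleyOmega_succ, ih, ih, sub_eq_add_neg, ← Finset.sum_neg_distrib,
      Finset.sum_choose_succ_mul fun j i ↦ (-1) ^ j * (pderiv 0)^[i] ((pderiv 1)^[j] f) *
        (pderiv 0)^[j] ((pderiv 1)^[i] g)]
    refine congrArg₂ (· + ·) (Finset.sum_congr rfl fun j hj ↦ ?_)
      (Finset.sum_congr rfl fun j _ ↦ ?_)
    · have hjr : r + 1 - j = r - j + 1 := Nat.sub_add_comm (Finset.mem_range_succ_iff.1 hj)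
      simp only [hjr, Function.iterate_succ_apply, (comm.iterate_right j) f]
    · simp only [Function.iterate_succ_apply, (comm.iterate_right (r - j)) g, pow_succ]
      ring

lemma isHomogeneous_C_mul_X_pow_mul_X_pow (b : R) {i n : ℕ} (hi : i ≤ n) :
    (C b * X (0 : Fin 2) ^ i * X 1 ^ (n - i)).IsHomogeneous n := by
  simpa only [Nat.add_sub_cancel' hi] using
    (isHomogeneous_C_mul_X_pow b (0 : Fin 2) i).mul (isHomogeneous_X_pow 1 (n - i))

lemma coeff_sum_C_mul_X_pow_mul_X_pow (b : ℕ → R) {i n : ℕ} (hi : i ≤ n) :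
    coeff (Finsupp.single 0 i + Finsupp.single 1 (n - i))
      (∑ j ∈ Finset.range (n + 1), C (b j) * X (0 : Fin 2) ^ j * X 1 ^ (n - j)) = b i := by
  have coeff_term (j : ℕ) : coeff (Finsupp.single 0 i + Finsupp.single 1 (n - i))
      (C (b j) * X (0 : Fin 2) ^ j * X 1 ^ (n - j)) = if j = i then b j else 0 := by
    rw [mul_assoc, coeff_C_mul, X_pow_eq_monomial, X_pow_eq_monomial, monomial_mul, coeff_monomial,
      mul_one, mul_ite, mul_one, mul_zero]
    refine if_congr ⟨fun h ↦ ?_, fun h ↦ by rw [h]⟩ rfl rfl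
    simpa using DFunLike.congr_fun h 0
  simp only [coeff_sum, coeff_term, Finset.sum_ite_eq', Finset.mem_range, Nat.lt_succ_iff, hi,
    if_true]

lemma sum_coeff_mul_X_pow_mul_X_pow {p : MvPolynomial (Fin 2) R} {n : ℕ}
    (hp : p.IsHomogeneous n) :
    ∑ i ∈ Finset.range (n + 1), C (coeff (Finsupp.single 0 i + Finsupp.single 1 (n - i)) p) *
      X 0 ^ i * X 1 ^ (n - i) = p := by
  ext d
  by_cases hd : d.degree = n
  · rw [Finsupp.degree_eq_sum, Fin.sum_univ_two] at hd
    have d_eq : d = Finsupp.single 0 (d 0) + Finsupp.single 1 (n - d 0) := by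
      ext i
      fin_cases i <;> simp [← hd]
    rw [d_eq, coeff_sum_C_mul_X_pow_mul_X_pow _ (by omega)]
  · rw [hp.coeff_eq_zero hd, IsHomogeneous.coeff_eq_zero (.sum _ _ _ fun i hi ↦
      isHomogeneous_C_mul_X_pow_mul_X_pow _ (Finset.mem_range_succ_iff.1 hi)) hd]

end BinaryForms

lemma transvectant_eq_cayleyOmega (n m r : ℕ) (f g : MvPolynomial (Fin 2) k) :
    transvectant n m r f g =
      C ((((m - r).factorial * (n - r).factorial : ℕ) : k) /
        ((n.factorial * m.factorial : ℕ) : k)) * cayleyOmega r f g := by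
  rw [transvectant, cayleyOmega_eq_sum]
  congr 1
  refine Finset.sum_congr rfl fun j _ ↦ ?_
  simp only [map_mul, map_pow, map_neg, map_one, map_natCast]
  ring

/-- `substForm g` as an algebra homomorphism. -/
def substAlgHom (g : Matrix (Fin 2) (Fin 2) k) :
    MvPolynomial (Fin 2) k →ₐ[k] MvPolynomial (Fin 2) k :=
  aeval fun i ↦ C (g i 0) * X 0 + C (g i 1) * X 1

lemma pderiv_substAlgHom (g : Matrix (Fin 2) (Fin 2) k) (j : Fin 2) (p : MvPolynomial (Fin 2) k) :
    pderiv j (substAlgHom g p) =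
      g 0 j • substAlgHom g (pderiv 0 p) + g 1 j • substAlgHom g (pderiv 1 p) := by
  rw [substAlgHom, pderiv_aeval, Fin.sum_univ_two]
  fin_cases j <;> simp [pderiv_X, smul_eq_C_mul]

lemma cayleyOmega_substAlgHom (g : Matrix (Fin 2) (Fin 2) k) (r : ℕ)
    (p q : MvPolynomial (Fin 2) k) :
    cayleyOmega r (substAlgHom g p) (substAlgHom g q) =
      g.det ^ r • substAlgHom g (cayleyOmega r p q) := by
  induction r generalizing p q with
  | zero => simp [cayleyOmega_zero]
  | succ r ih =>
    simp only [cayleyOmega_succ, pderiv_substAlgHom, map_add, map_smul, LinearMap.add_apply,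
      LinearMap.smul_apply, ih, map_sub, Matrix.det_fin_two]
    module

lemma transvectant_substAlgHom (g : Matrix (Fin 2) (Fin 2) k) (n m r : ℕ)
    (p q : MvPolynomial (Fin 2) k) :
    transvectant n m r (substAlgHom g p) (substAlgHom g q) =
      g.det ^ r • substAlgHom g (transvectant n m r p q) := by
  rw [transvectant_eq_cayleyOmega, transvectant_eq_cayleyOmega, cayleyOmega_substAlgHom, map_mul,
    ← algebraMap_eq, AlgHom.commutes, mul_smul_comm]

lemma constantCoeff_substAlgHom (g : Matrix (Fin 2) (Fin 2) k) (p : MvPolynomial (Fin 2) k) :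
    constantCoeff (substAlgHom g p) = constantCoeff p := by
  induction p using MvPolynomial.induction_on with
  | C a => simp [substAlgHom]
  | add p q hp hq => simp only [map_add, hp, hq]
  | mul_X p i _ => simp [substAlgHom]

lemma isHomogeneous_substAlgHom (g : Matrix (Fin 2) (Fin 2) k) {p : MvPolynomial (Fin 2) k} {n : ℕ}
    (hp : p.IsHomogeneous n) : (substAlgHom g p).IsHomogeneous n := by
  have hlin (i : Fin 2) :
      (C (g i 0) * X 0 + C (g i 1) * X 1 : MvPolynomial (Fin 2) k).IsHomogeneous 1 :=
    ((isHomogeneous_X k 0).C_mul _).add ((isHomogeneous_X k 1).C_mul _)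
  simpa [substAlgHom] using hp.aeval _ hlin

lemma isHomogeneous_octForm (a : Fin 9 → k) : (octForm a).IsHomogeneous 8 :=
  .sum _ _ _ fun i _ ↦ isHomogeneous_C_mul_X_pow_mul_X_pow _ (Nat.lt_succ_iff.1 i.isLt)

lemma octForm_coeff {p : MvPolynomial (Fin 2) k} (hp : p.IsHomogeneous 8) :
    octForm (fun i : Fin 9 ↦ coeff (Finsupp.single 0 (i : ℕ) + Finsupp.single 1 (8 - (i : ℕ))) p) =
      p := by
  rw [octForm, Fin.sum_univ_eq_sum_range (fun i ↦ C (coeff (Finsupp.single 0 i +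
    Finsupp.single 1 (8 - i)) p) * X 0 ^ i * X 1 ^ (8 - i)) 9]
  exact sum_coeff_mul_X_pow_mul_X_pow hp

lemma octForm_octAct (g : Matrix (Fin 2) (Fin 2) k) (a : Fin 9 → k) :
    octForm (octAct g a) = substAlgHom g (octForm a) :=
  octForm_coeff (isHomogeneous_substAlgHom g (isHomogeneous_octForm a))

section Equivariance

variable {g : Matrix (Fin 2) (Fin 2) k}

lemma covg_octAct (hg : g.det = 1) (a : Fin 9 → k) :
    covg (octAct g a) = substAlgHom g (covg a) := by
  simp [covg, octForm_octAct, transvectant_substAlgHom, hg]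

lemma covk_octAct (hg : g.det = 1) (a : Fin 9 → k) :
    covk (octAct g a) = substAlgHom g (covk a) := by
  simp [covk, octForm_octAct, transvectant_substAlgHom, hg]

lemma covh_octAct (hg : g.det = 1) (a : Fin 9 → k) :
    covh (octAct g a) = substAlgHom g (covh a) := by
  simp [covh, covk_octAct hg, transvectant_substAlgHom, hg]

lemma covm_octAct (hg : g.det = 1) (a : Fin 9 → k) :
    covm (octAct g a) = substAlgHom g (covm a) := by
  simp [covm, octForm_octAct, covk_octAct hg, transvectant_substAlgHom, hg]

lemma covp_octAct (hg : g.det = 1) (a : Fin 9 → k) :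
    covp (octAct g a) = substAlgHom g (covp a) := by
  simp [covp, covg_octAct hg, covk_octAct hg, transvectant_substAlgHom, hg]

lemma J2_octAct (hg : g.det = 1) (a : Fin 9 → k) : J2 (octAct g a) = J2 a := by
  simp [J2, octForm_octAct, transvectant_substAlgHom, constantCoeff_substAlgHom, hg]

lemma J3_octAct (hg : g.det = 1) (a : Fin 9 → k) : J3 (octAct g a) = J3 a := by
  simp [J3, octForm_octAct, covg_octAct hg, transvectant_substAlgHom, constantCoeff_substAlgHom, hg]

lemma J5_octAct (hg : g.det = 1) (a : Fin 9 → k) : J5 (octAct g a) = J5 a := by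
  simp [J5, covm_octAct hg, covk_octAct hg, transvectant_substAlgHom, constantCoeff_substAlgHom, hg]

lemma J7_octAct (hg : g.det = 1) (a : Fin 9 → k) : J7 (octAct g a) = J7 a := by
  simp [J7, covm_octAct hg, covh_octAct hg, transvectant_substAlgHom, constantCoeff_substAlgHom, hg]

lemma J8_octAct (hg : g.det = 1) (a : Fin 9 → k) : J8 (octAct g a) = J8 a := by
  simp [J8, covp_octAct hg, covh_octAct hg, transvectant_substAlgHom, constantCoeff_substAlgHom, hg]

end Equivariance

section BinomialCoordinates

/-- The binary form `∑ i, (n.choose i) c_i X^i Y^(n-i)` of degree `n`. Normalising the coefficients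
by binomials makes derivatives, hence transvectants, act by shifting `c`; only `c 0, …, c n`
matter. -/
def binForm (n : ℕ) (c : ℕ → k) : MvPolynomial (Fin 2) k :=
  ∑ i ∈ Finset.range (n + 1), C (n.choose i * c i) * X 0 ^ i * X 1 ^ (n - i)

lemma pderiv_zero_binForm (n : ℕ) (c : ℕ → k) :
    pderiv 0 (binForm n c) = (n : k) • binForm (n - 1) fun i ↦ c (i + 1) := by
  cases n with
  | zero => simp [binForm]
  | succ n =>
    rw [Nat.add_sub_cancel, binForm, Finset.sum_range_succ', map_add, map_sum, binForm,
      Finset.smul_sum]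
    have h0 : pderiv (0 : Fin 2)
        (C (((n + 1).choose 0 : k) * c 0) * X 0 ^ 0 * X 1 ^ (n + 1 - 0)) = 0 := by simp
    rw [h0, add_zero]
    refine Finset.sum_congr rfl fun i _ ↦ ?_
    have hchoose : ((n + 1 : ℕ) : k) * n.choose i = (n + 1).choose (i + 1) * ((i + 1 : ℕ) : k) :=
      mod_cast congrArg (Nat.cast (R := k)) (Nat.add_one_mul_choose_eq n i)
    rw [smul_eq_C_mul, ← mul_assoc, ← mul_assoc, ← map_mul, ← mul_assoc, hchoose]
    simp only [pderiv_mul, pderiv_C, pderiv_X_self, pderiv_X_of_ne, Derivation.leibniz_pow,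
      add_tsub_cancel_right, ne_eq, one_ne_zero, not_false_eq_true, smul_eq_mul, nsmul_eq_mul,
      mul_zero, mul_one, add_zero, map_mul, map_natCast, Derivation.map_natCast,
      Nat.add_sub_add_right]
    ring

lemma pderiv_one_binForm (n : ℕ) (c : ℕ → k) :
    pderiv 1 (binForm n c) = (n : k) • binForm (n - 1) c := by
  cases n with
  | zero => simp [binForm]
  | succ n =>
    rw [Nat.add_sub_cancel, binForm, Finset.sum_range_succ, map_add, map_sum, binForm,
      Finset.smul_sum]
    have hn : pderiv (1 : Fin 2) (C (((n + 1).choose (n + 1) : k) * c (n + 1)) * X 0 ^ (n + 1) *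
        X 1 ^ (n + 1 - (n + 1))) = 0 := by simp
    rw [hn, add_zero]
    refine Finset.sum_congr rfl fun i hi ↦ ?_
    have hsub : n + 1 - i = n - i + 1 := Nat.sub_add_comm (Finset.mem_range_succ_iff.1 hi)
    have hchoose : ((n + 1 : ℕ) : k) * n.choose i =
        (n + 1).choose i * ((n - i + 1 : ℕ) : k) := by
      rw [← hsub, mul_comm]
      exact mod_cast congrArg (Nat.cast (R := k)) (Nat.choose_mul_succ_eq n i)
    rw [smul_eq_C_mul, ← mul_assoc, ← mul_assoc, ← map_mul, ← mul_assoc, hchoose, hsub]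
    simp only [pderiv_mul, pderiv_C, pderiv_X_self, pderiv_X_of_ne, Derivation.leibniz_pow,
      add_tsub_cancel_right, ne_eq, zero_ne_one, not_false_eq_true, smul_eq_mul, nsmul_eq_mul,
      mul_zero, mul_one, add_zero, map_mul, map_natCast, Derivation.map_natCast]
    ring

lemma iterate_pderiv_zero_binForm (n r : ℕ) (c : ℕ → k) :
    (pderiv 0)^[r] (binForm n c) =
      (n.descFactorial r : k) • binForm (n - r) fun i ↦ c (i + r) := by
  induction r with
  | zero => simp
  | succ r ih =>
    rw [Function.iterate_succ_apply', ih, Derivation.map_smul, pderiv_zero_binForm, smul_smul,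
      Nat.descFactorial_succ, Nat.cast_mul, mul_comm, Nat.sub_sub]
    simp only [add_right_comm, add_assoc]

lemma iterate_pderiv_one_binForm (n r : ℕ) (c : ℕ → k) :
    (pderiv 1)^[r] (binForm n c) = (n.descFactorial r : k) • binForm (n - r) c := by
  induction r with
  | zero => simp
  | succ r ih =>
    rw [Function.iterate_succ_apply', ih, Derivation.map_smul, pderiv_one_binForm, smul_smul,
      Nat.descFactorial_succ, Nat.cast_mul, mul_comm, Nat.sub_sub]

lemma iterate_pderiv_binForm {j r : ℕ} (hj : j ≤ r) (n : ℕ) (c : ℕ → k) :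
    (pderiv 0)^[r - j] ((pderiv 1)^[j] (binForm n c)) =
      (n.descFactorial r : k) • binForm (n - r) fun i ↦ c (i + (r - j)) := by
  have commute_smul : Function.Commute (pderiv (R := k) (0 : Fin 2))
      ((n.descFactorial j : k) • ·) := fun p ↦ Derivation.map_smul _ _ p
  rw [iterate_pderiv_one_binForm, (commute_smul.iterate_left (r - j)) _,
    iterate_pderiv_zero_binForm, Nat.sub_sub, Nat.add_sub_cancel' hj]
  dsimp only
  rw [smul_smul, ← Nat.cast_mul, mul_comm, Nat.descFactorial_mul_descFactorial hj]

lemma transvectant_binForm {n m r : ℕ} (hn : (n.factorial : k) ≠ 0) (hm : (m.factorial : k) ≠ 0)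
    (hrn : r ≤ n) (hrm : r ≤ m) (c d : ℕ → k) :
    transvectant n m r (binForm n c) (binForm m d) =
      ∑ j ∈ Finset.range (r + 1), C ((-1) ^ j * (r.choose j : k)) *
        (binForm (n - r) (fun i ↦ c (i + (r - j))) * binForm (m - r) fun i ↦ d (i + j)) := by
  have hn' : ((n - r).factorial : k) * n.descFactorial r = n.factorial :=
    mod_cast congrArg (Nat.cast (R := k)) (Nat.factorial_mul_descFactorial hrn)
  have hm' : ((m - r).factorial : k) * m.descFactorial r = m.factorial :=
    mod_cast congrArg (Nat.cast (R := k)) (Nat.factorial_mul_descFactorial hrm)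
  rw [transvectant, Finset.mul_sum]
  refine Finset.sum_congr rfl fun j hj ↦ ?_
  have hj : j ≤ r := Finset.mem_range_succ_iff.1 hj
  have hd := iterate_pderiv_binForm (Nat.sub_le r j) m d
  simp only [Nat.sub_sub_self hj] at hd
  have hcoeff : (((m - r).factorial * (n - r).factorial : ℕ) : k) /
      ((n.factorial * m.factorial : ℕ) : k) * (n.descFactorial r * m.descFactorial r) = 1 := by
    push_cast
    rw [← mul_div_right_comm, div_eq_one_iff_eq (mul_ne_zero hn hm), ← hn', ← hm']
    ring
  rw [iterate_pderiv_binForm hj, hd, smul_eq_C_mul, smul_eq_C_mul]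
  have hcoeff := congrArg (C (σ := Fin 2)) hcoeff
  simp only [map_mul, map_one] at hcoeff ⊢
  generalize (binForm (n - r) fun i ↦ c (i + (r - j))) = p
  generalize (binForm (m - r) fun i ↦ d (i + j)) = q
  linear_combination C ((-1) ^ j) * C (r.choose j : k) * p * q * hcoeff

lemma cast_choose_ne_zero {n i : ℕ} (hn : (n.factorial : k) ≠ 0) (hi : i ≤ n) :
    (n.choose i : k) ≠ 0 :=
  ne_zero_of_dvd_ne_zero hn <| Nat.cast_dvd_cast <| by
    rw [← Nat.choose_mul_factorial_mul_factorial hi, mul_assoc]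
    exact Dvd.intro _ rfl

/-- The binomial coordinates of `binForm p c * binForm q d`. -/
def mulCoord (p q : ℕ) (c d : ℕ → k) (s : ℕ) : k :=
  (∑ i ∈ Finset.range (s + 1), p.choose i * c i * (q.choose (s - i) * d (s - i))) /
    (p + q).choose s

lemma binForm_mul_binForm {p q : ℕ} (hpq : ((p + q).factorial : k) ≠ 0) (c d : ℕ → k) :
    binForm p c * binForm q d = binForm (p + q) (mulCoord p q c d) := by
  rw [binForm, binForm, Finset.sum_mul_sum, ← Finset.sum_product', binForm,
    ← Finset.sum_fiberwise_of_maps_to (g := fun x ↦ x.1 + x.2) (t := Finset.range (p + q + 1))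
      fun x hx ↦ by simp only [Finset.mem_product, Finset.mem_range] at hx ⊢; omega]
  refine Finset.sum_congr rfl fun s hs ↦ ?_
  have hchoose := cast_choose_ne_zero hpq (Finset.mem_range_succ_iff.1 hs)
  rw [mulCoord, mul_div_cancel₀ _ hchoose, map_sum, Finset.sum_mul, Finset.sum_mul,
    ← Finset.Nat.sum_antidiagonal_eq_sum_range_succ
      (fun i j ↦ C (p.choose i * c i * (q.choose j * d j)) * X 0 ^ s * X 1 ^ (p + q - s))]
  refine Finset.sum_subset_zero_on_sdiff (fun x hx ↦ ?_) (fun x hx ↦ ?_) fun x hx ↦ ?_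
  · simp_all
  · have hx : p < x.1 ∨ q < x.2 := by
      simp only [Finset.mem_sdiff, Finset.HasAntidiagonal.mem_antidiagonal, Finset.mem_filter,
        Finset.mem_product, Finset.mem_range] at hx
      omega
    rcases hx with h | h <;> simp [Nat.choose_eq_zero_of_lt h]
  · simp only [Finset.mem_filter, Finset.mem_product, Finset.mem_range] at hx
    obtain ⟨⟨h1, h2⟩, rfl⟩ := hx
    rw [map_mul _ (_ * _) (_ * _), pow_add,
      show p + q - (x.1 + x.2) = (p - x.1) + (q - x.2) by omega, pow_add]
    ring

lemma sum_C_mul_binForm {ι : Type*} (t : Finset ι) (z : ι → k) (n : ℕ) (c : ι → ℕ → k) :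
    ∑ j ∈ t, C (z j) * binForm n (c j) = binForm n fun i ↦ ∑ j ∈ t, z j * c j i := by
  simp only [binForm, Finset.mul_sum, map_sum, Finset.sum_mul]
  rw [Finset.sum_comm]
  simp only [map_mul]
  exact Finset.sum_congr rfl fun i _ ↦ Finset.sum_congr rfl fun j _ ↦ by ring

/-- The binomial coordinates of the `r`-th transvectant of `binForm n c` and `binForm m d`. -/
def transvectantCoord (n m r : ℕ) (c d : ℕ → k) (s : ℕ) : k :=
  ∑ j ∈ Finset.range (r + 1), (-1) ^ j * r.choose j *
    mulCoord (n - r) (m - r) (fun i ↦ c (i + (r - j))) (fun i ↦ d (i + j)) s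

lemma transvectant_binForm_eq_binForm {n m r : ℕ} (hn : (n.factorial : k) ≠ 0)
    (hm : (m.factorial : k) ≠ 0) (hnm : ((n - r + (m - r)).factorial : k) ≠ 0)
    (hrn : r ≤ n) (hrm : r ≤ m) (c d : ℕ → k) :
    transvectant n m r (binForm n c) (binForm m d) =
      binForm (n - r + (m - r)) (transvectantCoord n m r c d) := by
  rw [transvectant_binForm hn hm hrn hrm]
  simp only [binForm_mul_binForm hnm]
  exact sum_C_mul_binForm _ _ _ _

/-- The apolar pairing of two binary forms of degree `n` in binomial coordinates. -/
def apolar (n : ℕ) (c d : ℕ → k) : k :=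
  ∑ j ∈ Finset.range (n + 1), (-1) ^ j * n.choose j * (c (n - j) * d j)

lemma binForm_zero (c : ℕ → k) : binForm 0 c = C (c 0) := by simp [binForm]

lemma binForm_mul_C (n : ℕ) (c : ℕ → k) (z : k) :
    (binForm n fun i ↦ c i * z) = binForm n c * C z := by
  simp only [binForm, Finset.sum_mul, map_mul]
  exact Finset.sum_congr rfl fun i _ ↦ by ring

lemma transvectant_binForm_right {n r : ℕ} (hn : (n.factorial : k) ≠ 0) (hrn : r ≤ n)
    (c d : ℕ → k) :
    transvectant n r r (binForm n c) (binForm r d) =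
      binForm (n - r) fun i ↦ apolar r (fun j ↦ c (i + j)) d := by
  have hr : (r.factorial : k) ≠ 0 :=
    ne_zero_of_dvd_ne_zero hn (Nat.cast_dvd_cast (Nat.factorial_dvd_factorial hrn))
  rw [transvectant_binForm hn hr hrn le_rfl]
  simp only [Nat.sub_self, binForm_zero, zero_add, ← binForm_mul_C]
  exact sum_C_mul_binForm _ _ _ _

lemma constantCoeff_transvectant_binForm {n : ℕ} (hn : (n.factorial : k) ≠ 0) (c d : ℕ → k) :
    constantCoeff (transvectant n n n (binForm n c) (binForm n d)) = apolar n c d := by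
  rw [transvectant_binForm_right hn le_rfl, Nat.sub_self, binForm_zero, constantCoeff_C]
  simp only [zero_add]

lemma apolar_single {n i : ℕ} (hi : i ≤ n) (c : ℕ → k) (e : k) :
    apolar n c (Pi.single i e) = (-1) ^ i * n.choose i * (c (n - i) * e) := by
  rw [apolar, Finset.sum_eq_single_of_mem i (Finset.mem_range_succ_iff.2 hi) fun j _ hj ↦ by
    simp [Pi.single_eq_of_ne hj], Pi.single_eq_same]

lemma binForm_single {n i : ℕ} (hi : i ≤ n) (e : k) :
    binForm n (Pi.single i e) = C (n.choose i * e) * X 0 ^ i * X 1 ^ (n - i) := by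
  rw [binForm, Finset.sum_eq_single_of_mem i (Finset.mem_range_succ_iff.2 hi) fun j _ hj ↦ by
    simp [Pi.single_eq_of_ne hj], Pi.single_eq_same]

lemma binForm_eq_binForm_iff {n : ℕ} (hn : (n.factorial : k) ≠ 0) {c d : ℕ → k} :
    binForm n c = binForm n d ↔ ∀ i ≤ n, c i = d i := by
  refine ⟨fun h i hi ↦ ?_, fun h ↦ Finset.sum_congr rfl fun i hi ↦ by
    rw [h i (Finset.mem_range_succ_iff.1 hi)]⟩
  have hcoeff := congrArg (coeff (Finsupp.single 0 i + Finsupp.single 1 (n - i))) h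
  rw [binForm, binForm, coeff_sum_C_mul_X_pow_mul_X_pow _ hi,
    coeff_sum_C_mul_X_pow_mul_X_pow _ hi] at hcoeff
  exact mul_left_cancel₀ (cast_choose_ne_zero hn hi) hcoeff

lemma exists_octForm_eq_binForm (h8 : (Nat.factorial 8 : k) ≠ 0) (a : Fin 9 → k) :
    ∃ α, octForm a = binForm 8 α := by
  refine ⟨fun i ↦ a (Fin.ofNat 9 i) / (Nat.choose 8 i), ?_⟩
  rw [binForm, octForm, Finset.sum_range]
  refine Finset.sum_congr rfl fun i _ ↦ ?_
  rw [mul_div_cancel₀ _ (cast_choose_ne_zero h8 (Nat.lt_succ_iff.1 i.isLt)), Fin.ofNat_eq_cast,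
    Fin.cast_val_eq_self]

end BinomialCoordinates

namespace CharOK

lemma two_ne_zero (hk : CharOK k) : (2 : k) ≠ 0 :=
  CharP.cast_ne_zero_of_ne_of_prime k Nat.prime_two hk.1

lemma three_ne_zero (hk : CharOK k) : (3 : k) ≠ 0 :=
  CharP.cast_ne_zero_of_ne_of_prime k Nat.prime_three hk.2.1

lemma five_ne_zero (hk : CharOK k) : (5 : k) ≠ 0 :=
  CharP.cast_ne_zero_of_ne_of_prime k Nat.prime_five hk.2.2.1

lemma seven_ne_zero (hk : CharOK k) : (7 : k) ≠ 0 :=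
  CharP.cast_ne_zero_of_ne_of_prime k Nat.prime_seven hk.2.2.2

lemma cast_ne_zero_of_dvd_factorial (hk : CharOK k) {n : ℕ} (hn : n ∣ Nat.factorial 8) :
    (n : k) ≠ 0 := by
  have h8 : ((Nat.factorial 8 : ℕ) : k) = 2 ^ 7 * 3 ^ 2 * 5 * 7 := by norm_num [Nat.factorial]
  refine ne_zero_of_dvd_ne_zero ?_ (Nat.cast_dvd_cast hn)
  simp [h8, hk.two_ne_zero, hk.three_ne_zero, hk.five_ne_zero, hk.seven_ne_zero]

lemma cast_factorial_ne_zero (hk : CharOK k) {n : ℕ} (hn : n ≤ 8) : (n.factorial : k) ≠ 0 :=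
  hk.cast_ne_zero_of_dvd_factorial (Nat.factorial_dvd_factorial hn)

lemma ofNat_ne_zero (hk : CharOK k) {n : ℕ} [n.AtLeastTwo] (hn : n ∣ Nat.factorial 8) :
    (ofNat(n) : k) ≠ 0 :=
  mod_cast hk.cast_ne_zero_of_dvd_factorial hn

end CharOK

section NullQuartic

/-- The invariant of degree two of the quartic `binForm 4 x`. -/
def quarticI (x : ℕ → k) : k := x 0 * x 4 - 4 * x 1 * x 3 + 3 * x 2 ^ 2

/-- The invariant of degree three (catalecticant) of the quartic `binForm 4 x`. -/
def quarticJ (x : ℕ → k) : k :=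
  x 0 * x 2 * x 4 - x 0 * x 3 ^ 2 - x 1 ^ 2 * x 4 + 2 * x 1 * x 2 * x 3 - x 2 ^ 3

lemma apolar_four_self (x : ℕ → k) : apolar 4 x x = 2 * quarticI x := by
  simp only [apolar, quarticI, Finset.sum_range_succ, Finset.sum_range_zero]
  norm_num [Nat.choose]
  ring

lemma transvectantCoord_hessian (hk : CharOK k) (x : ℕ → k) :
    transvectantCoord 4 4 2 x x 0 = 2 * (x 0 * x 2 - x 1 ^ 2) ∧
    transvectantCoord 4 4 2 x x 1 = x 0 * x 3 - x 1 * x 2 ∧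
    3 * transvectantCoord 4 4 2 x x 2 = x 0 * x 4 + 2 * x 1 * x 3 - 3 * x 2 ^ 2 ∧
    transvectantCoord 4 4 2 x x 3 = x 1 * x 4 - x 2 * x 3 ∧
    transvectantCoord 4 4 2 x x 4 = 2 * (x 2 * x 4 - x 3 ^ 2) := by
  have h4 : (4 : k) ≠ 0 := hk.ofNat_ne_zero (by decide)
  have h6 : (6 : k) ≠ 0 := hk.ofNat_ne_zero (by decide)
  refine ⟨?_, ?_, ?_, ?_, ?_⟩ <;>
  · simp only [transvectantCoord, mulCoord, Finset.sum_range_succ, Finset.sum_range_zero, zero_add]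
    norm_num [Nat.choose]
    field_simp
    ring

lemma apolar_four_hessian (hk : CharOK k) (x : ℕ → k) :
    apolar 4 x (transvectantCoord 4 4 2 x x) = 6 * quarticJ x := by
  obtain ⟨h0, h1, h2, h3, h4⟩ := transvectantCoord_hessian hk x
  simp only [apolar, quarticJ, Finset.sum_range_succ, Finset.sum_range_zero, h0, h1, h3, h4]
  norm_num [Nat.choose]
  linear_combination 2 * x 2 * h2

lemma substAlgHom_mul (g g' : Matrix (Fin 2) (Fin 2) k) (p : MvPolynomial (Fin 2) k) :
    substAlgHom (g * g') p = substAlgHom g' (substAlgHom g p) := by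
  suffices h : substAlgHom (g * g') = (substAlgHom g').comp (substAlgHom g) from
    DFunLike.congr_fun h p
  refine algHom_ext fun i ↦ ?_
  simp only [substAlgHom, AlgHom.comp_apply, aeval_X, map_add, map_mul, ← algebraMap_eq,
    AlgHom.commutes, Matrix.mul_apply, Fin.sum_univ_two]
  ring

lemma exists_eq_sq_and_eq_pow_three {p r : k} (h : p ^ 3 = r ^ 2) : ∃ s, p = s ^ 2 ∧ r = s ^ 3 := by
  rcases eq_or_ne p 0 with rfl | hp
  · exact ⟨0, by simp, by simpa using h.symm⟩
  · refine ⟨r / p, ?_, ?_⟩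
    · field_simp
      exact h
    · field_simp
      linear_combination r * h

lemma binForm_four_eq_pow_three_mul {x : ℕ → k} {u v s t : k} (h0 : x 0 = v ^ 3 * t)
    (h1 : 4 * x 1 = 3 * u * v ^ 2 * t + v ^ 3 * s)
    (h2 : 2 * x 2 = u ^ 2 * v * t + u * v ^ 2 * s)
    (h3 : 4 * x 3 = u ^ 3 * t + 3 * u ^ 2 * v * s) (h4 : x 4 = u ^ 3 * s) :
    binForm 4 x = substAlgHom !![u, v; s, t] (X 0 ^ 3 * X 1) := by
  have h1 := congrArg (C (σ := Fin 2)) h1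
  have h2 := congrArg (C (σ := Fin 2)) h2
  have h3 := congrArg (C (σ := Fin 2)) h3
  simp only [map_add, map_mul, map_pow, map_ofNat] at h1 h2 h3
  simp only [binForm, substAlgHom, Finset.sum_range_succ, Finset.sum_range_zero, h0, h4, map_mul,
    map_pow, map_natCast, aeval_X, Matrix.of_apply, Matrix.cons_val_zero, Matrix.cons_val_one,
    Matrix.cons_val_fin_one, Matrix.cons_val']
  norm_num [Nat.choose]
  linear_combination X 0 * X 1 ^ 3 * h1 + 3 * X 0 ^ 2 * X 1 ^ 2 * h2 + X 0 ^ 3 * X 1 * h3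

lemma exists_binForm_four_eq_substAlgHom_of_eq_zero (h2 : (2 : k) ≠ 0) {x : ℕ → k}
    (hx4 : x 4 = 0) (hI : quarticI x = 0) (hJ : quarticJ x = 0) :
    ∃ g, binForm 4 x = substAlgHom g (X 0 ^ 3 * X 1) := by
  rw [quarticI] at hI
  rw [quarticJ] at hJ
  by_cases hx3 : x 3 = 0
  · have hx2 : x 2 = 0 := by simpa [hx4, hx3] using hJ
    exact ⟨_, binForm_four_eq_pow_three_mul (u := 0) (v := 1) (s := 4 * x 1) (t := x 0)
      (by ring) (by ring) (by rw [hx2]; ring) (by rw [hx3]; ring) (by rw [hx4]; ring)⟩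
  · have hx1 : 4 * x 1 * x 3 = 3 * x 2 ^ 2 := by linear_combination -hI + x 0 * hx4
    have hx0 : 2 * x 0 * x 3 ^ 2 = x 2 ^ 3 := by
      linear_combination -2 * hJ + x 2 * hx1 + (2 * x 0 * x 2 - 2 * x 1 ^ 2) * hx4
    refine ⟨_, binForm_four_eq_pow_three_mul (u := 2 * x 3) (v := x 2) (s := 0)
      (t := 1 / (2 * x 3 ^ 2)) ?_ ?_ ?_ ?_ ?_⟩
    · field_simp
      linear_combination hx0
    · field_simp
      linear_combination hx1
    · field_simp
      ring
    · field_simp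
      ring
    · simp [hx4]

lemma exists_binForm_four_eq_substAlgHom_of_ne_zero (h2 : (2 : k) ≠ 0) {x : ℕ → k}
    (hx4 : x 4 ≠ 0) (hI : quarticI x = 0) (hJ : quarticJ x = 0) :
    ∃ g, binForm 4 x = substAlgHom g (X 0 ^ 3 * X 1) := by
  rw [quarticI] at hI
  rw [quarticJ] at hJ
  -- The leading coefficients of the Hessian and of the sextic covariant, up to constants.
  have syzygy : (x 3 ^ 2 - x 2 * x 4) ^ 3 =
      ((3 * x 2 * x 3 * x 4 - x 1 * x 4 ^ 2 - 2 * x 3 ^ 3) / 2) ^ 2 := by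
    field_simp
    linear_combination x 4 ^ 3 * hJ - x 4 ^ 2 * (x 2 * x 4 - x 3 ^ 2) * hI
  obtain ⟨s, hx2, hx1⟩ := exists_eq_sq_and_eq_pow_three syzygy
  field_simp at hx1
  -- `-(x 3 + s) / x 4` is the triple root and `(3 * s - x 3) / x 4` the simple one.
  refine ⟨_, binForm_four_eq_pow_three_mul (u := x 4) (v := x 3 + s) (s := 1 / x 4 ^ 2)
      (t := (x 3 - 3 * s) / x 4 ^ 3) ?_ ?_ ?_ ?_ ?_⟩
  · field_simp
    linear_combination x 4 ^ 2 * hI - 4 * x 3 * hx1 -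
      (3 * (x 3 ^ 2 - x 2 * x 4 + s ^ 2) + 6 * x 3 ^ 2) * hx2
  · field_simp
    linear_combination -4 * hx1 - 12 * x 3 * hx2
  · field_simp
    linear_combination -2 * hx2
  · field_simp
    ring
  · field_simp

lemma exists_binForm_four_eq_substAlgHom (h2 : (2 : k) ≠ 0) {x : ℕ → k}
    (hI : quarticI x = 0) (hJ : quarticJ x = 0) :
    ∃ g, binForm 4 x = substAlgHom g (X 0 ^ 3 * X 1) := by
  by_cases hx4 : x 4 = 0
  · exact exists_binForm_four_eq_substAlgHom_of_eq_zero h2 hx4 hI hJ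
  · exact exists_binForm_four_eq_substAlgHom_of_ne_zero h2 hx4 hI hJ

end NullQuartic

section Coordinates

variable {a : Fin 9 → k} {α x : ℕ → k}

lemma covk_eq_binForm (hk : CharOK k) (hα : octForm a = binForm 8 α) :
    covk a = binForm 4 (transvectantCoord 8 8 6 α α) := by
  rw [covk, hα]
  exact transvectant_binForm_eq_binForm (hk.cast_factorial_ne_zero le_rfl)
    (hk.cast_factorial_ne_zero le_rfl) (hk.cast_factorial_ne_zero (by norm_num)) (by norm_num)
    (by norm_num) α α

lemma covg_eq_binForm (hk : CharOK k) (hα : octForm a = binForm 8 α) :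
    covg a = binForm 8 (transvectantCoord 8 8 4 α α) := by
  rw [covg, hα]
  exact transvectant_binForm_eq_binForm (hk.cast_factorial_ne_zero le_rfl)
    (hk.cast_factorial_ne_zero le_rfl) (hk.cast_factorial_ne_zero (by norm_num)) (by norm_num)
    (by norm_num) α α

lemma covh_eq_binForm (hk : CharOK k) (hx : covk a = binForm 4 x) :
    covh a = binForm 4 (transvectantCoord 4 4 2 x x) := by
  rw [covh, hx]
  exact transvectant_binForm_eq_binForm (hk.cast_factorial_ne_zero (by norm_num))
    (hk.cast_factorial_ne_zero (by norm_num)) (hk.cast_factorial_ne_zero (by norm_num))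
    (by norm_num) (by norm_num) x x

lemma J2_eq_apolar (hk : CharOK k) (hα : octForm a = binForm 8 α) :
    J2 a = 140 * apolar 8 α α := by
  rw [J2, hα, constantCoeff_transvectant_binForm (hk.cast_factorial_ne_zero le_rfl)]
  norm_num

lemma J3_eq_apolar (hk : CharOK k) (hα : octForm a = binForm 8 α) :
    J3 a = 2 ^ 4 * 5 ^ 2 * 7 ^ 3 / 3 * apolar 8 α (transvectantCoord 8 8 4 α α) := by
  rw [J3, covg_eq_binForm hk hα, hα,
    constantCoeff_transvectant_binForm (hk.cast_factorial_ne_zero le_rfl)]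

lemma J4_eq_quarticI (hk : CharOK k) (hx : covk a = binForm 4 x) :
    J4 a = 2 ^ 10 * 3 * 7 ^ 4 * quarticI x := by
  rw [J4, hx, constantCoeff_transvectant_binForm (hk.cast_factorial_ne_zero (by norm_num)),
    apolar_four_self]
  ring

lemma J6_eq_quarticJ (hk : CharOK k) (hx : covk a = binForm 4 x) :
    J6 a = 2 ^ 15 * 3 ^ 3 * 7 ^ 6 * quarticJ x := by
  rw [J6, covh_eq_binForm hk hx, hx,
    constantCoeff_transvectant_binForm (hk.cast_factorial_ne_zero (by norm_num)),
    apolar_four_hessian hk]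
  ring

lemma exists_covk_eq_substAlgHom (hk : CharOK k) (h4 : J4 a = 0) (h6 : J6 a = 0) :
    ∃ g, covk a = substAlgHom g (X 0 ^ 3 * X 1) := by
  obtain ⟨α, hα⟩ := exists_octForm_eq_binForm (hk.cast_factorial_ne_zero le_rfl) a
  have hκ := covk_eq_binForm hk hα
  have two := hk.two_ne_zero
  have three := hk.three_ne_zero
  have seven := hk.seven_ne_zero
  rw [hκ]
  refine exists_binForm_four_eq_substAlgHom two ?_ ?_
  · simpa [J4_eq_quarticI hk hκ, two, three, seven] using h4
  · simpa [J6_eq_quarticJ hk hκ, two, three, seven] using h6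

end Coordinates

section NormalForm

variable {a : Fin 9 → k} {e : k}

lemma J8_eq_zero_of_det_eq_zero {g : Matrix (Fin 2) (Fin 2) k} (hg : g.det = 0)
    {q : MvPolynomial (Fin 2) k} (hκ : covk a = substAlgHom g q) : J8 a = 0 := by
  have hh : covh a = 0 := by simp [covh, hκ, transvectant_substAlgHom, hg]
  simp [J8, hh, transvectant_eq_cayleyOmega]

lemma exists_covk_octAct_eq_single (hk : CharOK k) {g : Matrix (Fin 2) (Fin 2) k}
    (hg : g.det ≠ 0) (hκ : covk a = substAlgHom g (X 0 ^ 3 * X 1)) :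
    ∃ g' : Matrix (Fin 2) (Fin 2) k, g'.det = 1 ∧
      ∃ e ≠ 0, covk (octAct g' a) = binForm 4 (Pi.single 3 e) := by
  have four : (4 : k) ≠ 0 := hk.ofNat_ne_zero (by decide)
  have hdet : (g⁻¹ * Matrix.diagonal ![1, g.det]).det = 1 := by
    simp [Matrix.det_nonsing_inv, hg]
  refine ⟨_, hdet, g.det / 4, div_ne_zero hg four, ?_⟩
  rw [covk_octAct hdet, hκ, ← substAlgHom_mul, ← mul_assoc,
    Matrix.mul_nonsing_inv _ (isUnit_iff_ne_zero.2 hg), one_mul, binForm_single (by norm_num)]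
  have hchoose : ((Nat.choose 4 3 : ℕ) : k) * (g.det / 4) = g.det := by
    simp [Nat.choose, mul_div_cancel₀ _ four]
  rw [hchoose]
  simp only [substAlgHom, map_mul, map_pow, aeval_X, Matrix.diagonal_apply_eq, Matrix.cons_val_zero,
    Matrix.cons_val_one, Matrix.cons_val_fin_one, Matrix.diagonal_apply_ne, ne_eq, zero_ne_one,
    one_ne_zero, not_false_eq_true, map_one, map_zero, one_mul, zero_mul, add_zero, zero_add]
  ring

lemma covh_eq_single (hk : CharOK k) (hκ : covk a = binForm 4 (Pi.single 3 e)) :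
    covh a = binForm 4 (Pi.single 4 (-2 * e ^ 2)) := by
  rw [covh_eq_binForm hk hκ, binForm_eq_binForm_iff (hk.cast_factorial_ne_zero (by norm_num))]
  obtain ⟨h0, h1, h2, h3, h4⟩ := transvectantCoord_hessian hk (Pi.single 3 e)
  intro i hi
  interval_cases i <;> simp_all [hk.three_ne_zero]

lemma transvectant_single_three (hk : CharOK k) (α : ℕ → k) :
    transvectant 8 4 4 (binForm 8 α) (binForm 4 (Pi.single 3 e)) =
      binForm 4 fun i ↦ -4 * (α (i + 1) * e) := by
  rw [transvectant_binForm_right (hk.cast_factorial_ne_zero le_rfl) (by norm_num)]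
  simp only [apolar_single (show 3 ≤ 4 by norm_num)]
  norm_num [Nat.choose]

variable {α : ℕ → k}

lemma J5_eq_of_covk_eq_single (hk : CharOK k) (hα : octForm a = binForm 8 α)
    (hκ : covk a = binForm 4 (Pi.single 3 e)) :
    J5 a = 2 ^ 13 * 5 * 7 ^ 5 * e ^ 2 * α 2 := by
  rw [J5, covm, hα, hκ, transvectant_single_three hk,
    constantCoeff_transvectant_binForm (hk.cast_factorial_ne_zero (by norm_num)),
    apolar_single (by norm_num)]
  norm_num [Nat.choose]
  ring

lemma J7_eq_of_covk_eq_single (hk : CharOK k) (hα : octForm a = binForm 8 α)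
    (hκ : covk a = binForm 4 (Pi.single 3 e)) :
    J7 a = 2 ^ 17 * 3 * 5 * 7 ^ 7 * e ^ 3 * α 1 := by
  rw [J7, covh_eq_single hk hκ, covm, hα, hκ, transvectant_single_three hk,
    constantCoeff_transvectant_binForm (hk.cast_factorial_ne_zero (by norm_num)),
    apolar_single le_rfl]
  norm_num [Nat.choose]
  ring

lemma J8_eq_of_covk_eq_single (hk : CharOK k) (hα : octForm a = binForm 8 α)
    (hκ : covk a = binForm 4 (Pi.single 3 e)) :
    J8 a = 2 ^ 20 * 3 * 5 ^ 2 * 7 ^ 9 * e ^ 3 * transvectantCoord 8 8 4 α α 1 := by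
  rw [J8, covh_eq_single hk hκ, covp, covg_eq_binForm hk hα, hκ, transvectant_single_three hk,
    constantCoeff_transvectant_binForm (hk.cast_factorial_ne_zero (by norm_num)),
    apolar_single le_rfl]
  norm_num [Nat.choose]
  ring

end NormalForm

section Elimination

variable {a : Fin 9 → k} {α : ℕ → k} {e : k}

/-- The binomial coordinates `α` of an octavic with `κ = 4eX³Y`, `J_5 = J_7 = 0` and `e ≠ 0`:
`J_7` and `J_5` are multiples of `α 1` and `α 2`, and each remaining equation compares one
coefficient of `κ`. -/
structure IsNormalized (α : ℕ → k) (e : k) : Prop where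
  one_eq : α 1 = 0
  two_eq : α 2 = 0
  kappa_zero : α 0 * α 6 = 10 * α 3 ^ 2
  kappa_one : α 0 * α 7 = 5 * α 3 * α 4
  kappa_two : α 0 * α 8 + 34 * α 3 * α 5 = 25 * α 4 ^ 2
  kappa_three : 9 * α 3 * α 6 - 5 * α 4 * α 5 = e
  kappa_four : 12 * α 3 * α 7 + 20 * α 5 ^ 2 = 30 * α 4 * α 6

lemma transvectantCoord_six (hk : CharOK k) (hα1 : α 1 = 0) (hα2 : α 2 = 0) :
    transvectantCoord 8 8 6 α α 0 = 2 * (α 0 * α 6 - 10 * α 3 ^ 2) ∧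
    transvectantCoord 8 8 6 α α 1 = α 0 * α 7 - 5 * α 3 * α 4 ∧
    transvectantCoord 8 8 6 α α 2 = (α 0 * α 8 + 34 * α 3 * α 5 - 25 * α 4 ^ 2) / 3 ∧
    transvectantCoord 8 8 6 α α 3 = 9 * α 3 * α 6 - 5 * α 4 * α 5 ∧
    transvectantCoord 8 8 6 α α 4 = 30 * α 4 * α 6 - 12 * α 3 * α 7 - 20 * α 5 ^ 2 := by
  have h3 := hk.three_ne_zero
  have h4 : (4 : k) ≠ 0 := hk.ofNat_ne_zero (by decide)
  have h6 : (6 : k) ≠ 0 := hk.ofNat_ne_zero (by decide)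
  refine ⟨?_, ?_, ?_, ?_, ?_⟩ <;>
  · simp only [transvectantCoord, mulCoord, Finset.sum_range_succ, Finset.sum_range_zero, zero_add]
    norm_num [Nat.choose, hα1, hα2]
    field_simp
    ring

lemma transvectantCoord_four (hk : CharOK k) (hα1 : α 1 = 0) (hα2 : α 2 = 0) :
    transvectantCoord 8 8 4 α α 0 = 2 * α 0 * α 4 ∧
    transvectantCoord 8 8 4 α α 1 = α 0 * α 5 ∧
    transvectantCoord 8 8 4 α α 2 = (3 * α 0 * α 6 + 12 * α 3 ^ 2) / 7 ∧
    transvectantCoord 8 8 4 α α 3 = (9 * α 3 * α 4 + α 0 * α 7) / 7 ∧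
    transvectantCoord 8 8 4 α α 4 = (45 * α 4 ^ 2 - 36 * α 3 * α 5 + α 0 * α 8) / 35 ∧
    transvectantCoord 8 8 4 α α 5 = (9 * α 4 * α 5 - 12 * α 3 * α 6) / 7 ∧
    transvectantCoord 8 8 4 α α 6 = (12 * α 5 ^ 2 - 11 * α 4 * α 6 - 4 * α 3 * α 7) / 7 ∧
    transvectantCoord 8 8 4 α α 7 = α 3 * α 8 + 2 * α 5 * α 6 - 3 * α 4 * α 7 ∧
    transvectantCoord 8 8 4 α α 8 = 2 * α 4 * α 8 - 8 * α 5 * α 7 + 6 * α 6 ^ 2 := by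
  have h7 := hk.seven_ne_zero
  have h8 : (8 : k) ≠ 0 := hk.ofNat_ne_zero (by decide)
  have h28 : (28 : k) ≠ 0 := hk.ofNat_ne_zero (by decide)
  have h35 : (35 : k) ≠ 0 := hk.ofNat_ne_zero (by decide)
  have h56 : (56 : k) ≠ 0 := hk.ofNat_ne_zero (by decide)
  have h70 : (70 : k) ≠ 0 := hk.ofNat_ne_zero (by decide)
  refine ⟨?_, ?_, ?_, ?_, ?_, ?_, ?_, ?_, ?_⟩ <;>
  · simp only [transvectantCoord, mulCoord, Finset.sum_range_succ, Finset.sum_range_zero, zero_add]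
    norm_num [Nat.choose, hα1, hα2]
    field_simp
    ring

lemma isNormalized_of_covk_eq_single (hk : CharOK k) (hα : octForm a = binForm 8 α)
    (hκ : covk a = binForm 4 (Pi.single 3 e)) (he : e ≠ 0) (h5 : J5 a = 0) (h7 : J7 a = 0) :
    IsNormalized α e := by
  have two := hk.two_ne_zero
  have three := hk.three_ne_zero
  have five := hk.five_ne_zero
  have seven := hk.seven_ne_zero
  have hα2 : α 2 = 0 := by simpa [J5_eq_of_covk_eq_single hk hα hκ, he, two, five, seven] using h5
  have hα1 : α 1 = 0 := by
    simpa [J7_eq_of_covk_eq_single hk hα hκ, he, two, three, five, seven] using h7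
  rw [covk_eq_binForm hk hα,
    binForm_eq_binForm_iff (hk.cast_factorial_ne_zero (by norm_num))] at hκ
  obtain ⟨κ0, κ1, κ2, κ3, κ4⟩ := transvectantCoord_six hk hα1 hα2
  have e0 := κ0.symm.trans (hκ 0 (by norm_num))
  have e1 := κ1.symm.trans (hκ 1 (by norm_num))
  have e2 := κ2.symm.trans (hκ 2 (by norm_num))
  have e3 := κ3.symm.trans (hκ 3 (by norm_num))
  have e4 := κ4.symm.trans (hκ 4 (by norm_num))
  simp only [Pi.single_apply] at e0 e1 e2 e3 e4
  norm_num [two, three] at e0 e1 e2 e3 e4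
  exact ⟨hα1, hα2, sub_eq_zero.1 e0, sub_eq_zero.1 e1, sub_eq_zero.1 e2, e3, by
    linear_combination -e4⟩

namespace IsNormalized

lemma J2_eq (hN : IsNormalized α e) (hk : CharOK k) (hα : octForm a = binForm 8 α) :
    J2 a = 8400 * (2 * α 4 ^ 2 - 3 * (α 3 * α 5)) := by
  rw [J2_eq_apolar hk hα, apolar]
  simp only [Finset.sum_range_succ, Finset.sum_range_zero]
  norm_num [Nat.choose, hN.one_eq, hN.two_eq]
  linear_combination 280 * hN.kappa_two

lemma J3_eq (hN : IsNormalized α e) (hk : CharOK k) (hα : octForm a = binForm 8 α) :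
    J3 a = 10976000 * α 4 ^ 3 - 24696000 * α 3 * α 4 * α 5 + 14817600 * α 3 ^ 2 * α 6 := by
  obtain ⟨γ0, γ1, γ2, γ3, γ4, γ5, γ6, γ7, γ8⟩ := transvectantCoord_four hk hN.one_eq hN.two_eq
  have three := hk.three_ne_zero
  have seven := hk.seven_ne_zero
  have h35 : (35 : k) ≠ 0 := hk.ofNat_ne_zero (by decide)
  have hJ3 : J3 a = 274400 * α 0 * α 4 * α 8 - 1097600 * α 0 * α 5 * α 7 +
      823200 * α 0 * α 6 ^ 2 + 6585600 * α 3 ^ 2 * α 6 - 9878400 * α 3 * α 4 * α 5 +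
      4116000 * α 4 ^ 3 := by
    rw [J3_eq_apolar hk hα, apolar]
    simp only [Finset.sum_range_succ, Finset.sum_range_zero, γ0, γ1, γ2, γ3, γ4, γ5, γ6, γ7, γ8]
    norm_num [Nat.choose, hN.one_eq, hN.two_eq]
    field_simp
    ring
  linear_combination hJ3 + 274400 * α 4 * hN.kappa_two - 1097600 * α 5 * hN.kappa_one +
    823200 * α 6 * hN.kappa_zero

lemma J8_eq (hN : IsNormalized α e) (hk : CharOK k) (hα : octForm a = binForm 8 α)
    (hκ : covk a = binForm 4 (Pi.single 3 e)) :
    J8 a = 2 ^ 20 * 3 * 5 ^ 2 * 7 ^ 9 * e ^ 3 * (α 0 * α 5) := by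
  rw [J8_eq_of_covk_eq_single hk hα hκ, (transvectantCoord_four hk hN.one_eq hN.two_eq).2.1]

lemma twelve_mul_sq_mul_eq (hN : IsNormalized α e) (hk : CharOK k) :
    12 * α 3 ^ 2 * α 4 = α 0 * α 5 ^ 2 := by
  have h20 : (20 : k) ≠ 0 := hk.ofNat_ne_zero (by decide)
  refine mul_left_cancel₀ h20 ?_
  linear_combination 12 * α 3 * hN.kappa_one - 30 * α 4 * hN.kappa_zero - α 0 * hN.kappa_four

lemma six_mul_mul_eq (hN : IsNormalized α e) (hk : CharOK k)
    (hα0 : α 0 ≠ 0) : 6 * α 4 * α 6 = 5 * α 5 ^ 2 := by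
  refine mul_left_cancel₀ hα0 ?_
  linear_combination 6 * α 4 * hN.kappa_zero + 5 * hN.twelve_mul_sq_mul_eq hk

lemma two_mul_mul_eq (hN : IsNormalized α e) (h46 : 6 * α 4 * α 6 = 5 * α 5 ^ 2) :
    2 * α 4 * e = -5 * α 5 * (2 * α 4 ^ 2 - 3 * (α 3 * α 5)) := by
  linear_combination -2 * α 4 * hN.kappa_three + 3 * α 3 * h46

lemma mul_J3_eq (hN : IsNormalized α e) (h46 : 6 * α 4 * α 6 = 5 * α 5 ^ 2)
    (hk : CharOK k) (hα : octForm a = binForm 8 α) :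
    α 4 * J3 a = 1372000 * (2 * α 4 ^ 2 - 3 * (α 3 * α 5)) * (4 * α 4 ^ 2 - 3 * (α 3 * α 5)) := by
  linear_combination α 4 * hN.J3_eq hk hα + 2469600 * α 3 ^ 2 * h46

lemma sq_mul_J8_eq (hN : IsNormalized α e) (h46 : 6 * α 4 * α 6 = 5 * α 5 ^ 2)
    (hk : CharOK k) (hα : octForm a = binForm 8 α)
    (hκ : covk a = binForm 4 (Pi.single 3 e)) (hα4 : α 4 ≠ 0) :
    α 4 ^ 2 * J8 a = -(2 ^ 19 * 3 ^ 2 * 5 ^ 5 * 7 ^ 9) * (α 3 * α 5) ^ 2 *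
      (2 * α 4 ^ 2 - 3 * (α 3 * α 5)) ^ 3 := by
  set U := 2 * α 4 ^ 2 - 3 * (α 3 * α 5)
  have hcube : (2 * α 4 * e) ^ 3 = (-5 * α 5 * U) ^ 3 := by rw [hN.two_mul_mul_eq h46]
  have h12 := hN.twelve_mul_sq_mul_eq hk
  refine mul_left_cancel₀ hα4 ?_
  rw [hN.J8_eq hk hα hκ]
  linear_combination 2 ^ 17 * 3 * 5 ^ 2 * 7 ^ 9 * α 0 * α 5 * hcube +
    2 ^ 17 * 3 * 5 ^ 5 * 7 ^ 9 * α 5 ^ 2 * U ^ 3 * h12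

end IsNormalized

lemma J8_relation_of_covk_eq_single (hk : CharOK k) (hκ : covk a = binForm 4 (Pi.single 3 e))
    (he : e ≠ 0) (h5 : J5 a = 0) (h7 : J7 a = 0) :
    J8 a * (-10125 * J8 a + 1075648 * J2 a ^ 4 - 42336 * J3 a ^ 2 * J2 a) = 0 := by
  obtain ⟨α, hα⟩ := exists_octForm_eq_binForm (hk.cast_factorial_ne_zero le_rfl) a
  have hN := isNormalized_of_covk_eq_single hk hα hκ he h5 h7
  by_cases h05 : α 0 * α 5 = 0
  · rw [hN.J8_eq hk hα hκ, h05, mul_zero, zero_mul]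
  obtain ⟨hα0, hα5⟩ := mul_ne_zero_iff.1 h05
  have h12 := hN.twelve_mul_sq_mul_eq hk
  have h46 := hN.six_mul_mul_eq hk hα0
  have hα4 : α 4 ≠ 0 := right_ne_zero_of_mul (h12 ▸ mul_ne_zero hα0 (pow_ne_zero 2 hα5))
  refine mul_eq_zero_of_right _ ((mul_eq_zero_iff_left (pow_ne_zero 2 hα4)).1 ?_)
  set U := 2 * α 4 ^ 2 - 3 * (α 3 * α 5)
  calc α 4 ^ 2 * (-10125 * J8 a + 1075648 * J2 a ^ 4 - 42336 * J3 a ^ 2 * J2 a)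
      = -10125 * (α 4 ^ 2 * J8 a) + 1075648 * α 4 ^ 2 * J2 a ^ 4 -
          42336 * (α 4 * J3 a) ^ 2 * J2 a := by ring
    _ = 0 := by
      rw [hN.sq_mul_J8_eq h46 hk hα hκ hα4, hN.mul_J3_eq h46 hk hα, hN.J2_eq hk hα]
      ring

end Elimination

/-- If `J_4 = J_5 = J_6 = J_7 = 0` for a binary octavic, then
`J_8·(−10125·J_8 + 1075648·J_2⁴ − 42336·J_3²·J_2) = 0`. -/
theorem J8_relation_of_J4567_eq_zero (k : Type*) [Field k] (hk : CharOK k) (a : Fin 9 → k)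
    (h4 : J4 a = 0) (h5 : J5 a = 0) (h6 : J6 a = 0) (h7 : J7 a = 0) :
    J8 a * (-(10125 : k) * J8 a + 1075648 * J2 a ^ 4 - 42336 * J3 a ^ 2 * J2 a) = 0 := by
  obtain ⟨g, hκ⟩ := exists_covk_eq_substAlgHom hk h4 h6
  by_cases hg : g.det = 0
  · rw [J8_eq_zero_of_det_eq_zero hg hκ, zero_mul]
  obtain ⟨g', hg', e, he, hκ'⟩ := exists_covk_octAct_eq_single hk hg hκ
  rw [← J5_octAct hg'] at h5
  rw [← J7_octAct hg'] at h7
  rw [← J2_octAct hg', ← J3_octAct hg', ← J8_octAct hg']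
  exact J8_relation_of_covk_eq_single hk hκ' he h5 h7

end
end
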